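/- For every finite set J with |J| ≥ 2 and every δ > 0, there exist c > 0 and η > 0 such that the following holds. Let Z, Z' be finite additive abelian groups and let φ_j : Z → Z' (j ∈ J) be group homomorphisms such that the set {φ_i(d) − φ_j(d) : i, j ∈ J, d ∈ Z} generates Z' as an abelian group. Let ν : Z' → ℝ_{≥0} be such that the induced weighted hypergraph (ν_e)_{e∈H} satisfies the H-linear forms condition within η. Then for every f : Z' → ℝ_{≥0} with 0 ≤ f(x) ≤ ν(x) for all x ∈ Z' and E[f(x) | x ∈ Z'] ≥ δ, one has E[∏_{j∈J} f(a + φ_j(d)) | a ∈ Z', d ∈ Z] ≥ c. -/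

import Mathlib

/-!
A point `x ∈ Z ^ J` encodes the configuration with points `∑ i, φ i (x i) - φ j (∑ i, x i)`; its
`j`-th point does not depend on `x j`, and on the diagonal `∑ i, x i = 0` all its points coincide.
So `f` becomes a hypergraph below the pseudorandom weights induced by `ν`, and the diagonal,
weighted by `f`, becomes a measure `lam` on its simplices which projects to every face with the
density of `f`. A removal lemma then provides many simplices.

For bounded face functions removal is proved by compactness. Recording which random points lie in
the level sets of the face functions gives an exchangeable array, with one law when the points are
uniform and another when one of them is drawn from `lam`. In a limit of counterexamples the face
events have null intersection for the first law, while on every face the second law is, up to a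
small multiple of the first, dominated by the first law restricted to the face event.
Exchangeability makes the coordinates on different faces conditionally independent given those on
smaller faces, which excludes this.

The weighted case reduces to the bounded one. By Gowers–Cauchy–Schwarz and the linear forms
condition, the weights are indistinguishable from `1` by products of bounded functions of fewer
coordinates. By the minimax theorem `f` then has bounded models, which satisfy the removal lemma,
and by a relative counting lemma they have the same number of simplices as `f`, up to a small error.
-/

open Finset

/-- The average (expectation with respect to the uniform measure) of `f` over `α`. -/
noncomputable def avg {α : Type*} [Fintype α] (f : α → ℝ) : ℝ :=
  (∑ x, f x) / (Fintype.card α)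

variable {J : Type} [Fintype J] [DecidableEq J] {V : J → Type}

/-- Restriction (projection) of a full tuple `x ∈ V_J` to the coordinates in `e`. -/
def restr (e : Finset J) (x : (j : J) → V j) : (i : ↥e) → V i := fun i => x i.1

/-- Projection of a tuple indexed by `e` to the coordinates in the face `e.erase j`. -/
def faceProj {e : Finset J} (j : J) (x : (i : ↥e) → V i) :
    (i : ↥(e.erase j)) → V i :=
  fun i => x ⟨i.1, Finset.mem_of_mem_erase i.2⟩

/-- The product `∏_{f ∈ ∂e} 1_{B_f}(x_f)` of the indicators of the sets `B_f ⊆ V_f`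
over the faces `f = e.erase j`, `j ∈ e`, of `e`. -/
noncomputable def faceInd (e : Finset J)
    (B : (j : J) → Set ((i : ↥(e.erase j)) → V i)) (x : (i : ↥e) → V i) : ℝ :=
  ∏ j ∈ e, Set.indicator (B j) (fun _ => (1 : ℝ)) (faceProj j x)

/-- `(g, g')` is an `ε`-discrepancy pair on the edge `e`: for all choices of
`B_f ⊆ V_f` (`f ∈ ∂e`), `|E[(g(x_e) - g'(x_e)) ∏_{f ∈ ∂e} 1_{B_f}(x_f)]| ≤ ε`. -/
noncomputable def EdgeDiscrepancy [∀ j, Fintype (V j)] (e : Finset J)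
    (g g' : ((i : ↥e) → V i) → ℝ) (ε : ℝ) : Prop :=
  ∀ B : (j : J) → Set ((i : ↥(e.erase j)) → V i),
    |avg (fun x : (i : ↥e) → V i => (g x - g' x) * faceInd e B x)| ≤ ε

/-- `g` is upper `η`-regular on the edge `e`: for all choices of `B_f ⊆ V_f`
(`f ∈ ∂e`), `E[(g(x_e) - 1) ∏_{f ∈ ∂e} 1_{B_f}(x_f)] ≤ η`. -/
noncomputable def EdgeUpperRegular [∀ j, Fintype (V j)] (e : Finset J)
    (g : ((i : ↥e) → V i) → ℝ) (η : ℝ) : Prop :=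
  ∀ B : (j : J) → Set ((i : ↥(e.erase j)) → V i),
    avg (fun x : (i : ↥e) → V i => (g x - 1) * faceInd e B x) ≤ η

/-- `E ⊆ V_e` is the set of `r`-cliques of some `(r-1)`-uniform hypergraph: there are
sets `B_f ⊆ V_f` for the faces `f ∈ ∂e` with `1_E(x_e) = ∏_{f ∈ ∂e} 1_{B_f}(x_f)`. -/
def IsCliqueSet (e : Finset J) (E : Set ((i : ↥e) → V i)) : Prop :=
  ∃ B : (j : J) → Set ((i : ↥(e.erase j)) → V i),
    ∀ x, x ∈ E ↔ ∀ j ∈ e, faceProj j x ∈ B j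

/-- `E ⊆ V_e` has complexity at most `T`: it can be partitioned into `T` (possibly
empty) clique sets. -/
def ComplexityLE (e : Finset J) (E : Set ((i : ↥e) → V i)) (T : ℕ) : Prop :=
  ∃ P : Fin T → Set ((i : ↥e) → V i),
    (∀ i, IsCliqueSet e (P i)) ∧
    (∀ i₁ i₂, i₁ ≠ i₂ → P i₁ ∩ P i₂ = ∅) ∧
    (⋃ i, P i) = E

/-- The weighted hypergraph `ν` satisfies the `H`-linear forms condition within `η`:
for every choice of exponents `n (e, ω) ∈ {0,1}` (`e ∈ H`, `ω ∈ {0,1}^e`),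
`|E[∏_{e ∈ H} ∏_{ω ∈ {0,1}^e} ν_e(x_e^{(ω)})^{n_{e,ω}} | x⁰, x¹ ∈ V_J] - 1| ≤ η`. -/
noncomputable def HLinearForms [∀ j, Fintype (V j)] (H : Finset (Finset J))
    (ν : (e : Finset J) → ((i : ↥e) → V i) → ℝ) (η : ℝ) : Prop :=
  ∀ n : (e : Finset J) → (↥e → Bool) → Bool,
    |avg (fun x : ((j : J) → V j) × ((j : J) → V j) =>
      ∏ e ∈ H, ∏ ω : ↥e → Bool,
        if n e ω then ν e (fun i => if ω i then x.2 i.1 else x.1 i.1) else 1) - 1| ≤ η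

/-- The weighted hypergraph on the hypergraph system `(J, (Z)_{j ∈ J}, |J| - 1, H)`
induced by `ν : Z' → ℝ` and homomorphisms `φ_j : Z →+ Z'`: on an edge
`e = J ∖ {j}` it is given by
`ν_e(x) = ν(∑_{i ∈ e} (φ_i(x_i) - φ_j(x_i)))`. (For an arbitrary `e ⊆ J` the formula
below subtracts `φ_j(∑_{i ∈ e} x_i)` for every `j ∉ e`; when `e` has exactly one
missing element this agrees with the displayed formula.) -/
noncomputable def inducedNu {J : Type} [Fintype J] [DecidableEq J] {Z Z' : Type}
    [AddCommGroup Z] [AddCommGroup Z'] (φ : J → Z →+ Z') (ν : Z' → ℝ) :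
    (e : Finset J) → ((i : ↥e) → Z) → ℝ :=
  fun e x =>
    ν ((∑ i : ↥e, φ i.1 (x i)) - ∑ j ∈ Finset.univ \ e, φ j (∑ i : ↥e, x i))

open MeasureTheory
open scoped ProbabilityTheory BigOperators

section CylinderEvents

variable {ι : Type*}

theorem mem_iff_mem_of_measurableSet_cylinderEvents {X : ι → Type*}
    [∀ i, MeasurableSpace (X i)] {S : Set ι} {A : Set (∀ i, X i)}
    (hA : MeasurableSet[cylinderEvents S] A) {x y : ∀ i, X i} (h : ∀ i ∈ S, x i = y i) :
    x ∈ A ↔ y ∈ A := by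
  let m : MeasurableSpace (∀ i, X i) :=
    { MeasurableSet' := fun A => ∀ x y : ∀ i, X i, (∀ i ∈ S, x i = y i) → (x ∈ A ↔ y ∈ A)
      measurableSet_empty := by simp
      measurableSet_compl := fun A hA x y h => not_congr (hA x y h)
      measurableSet_iUnion := fun A hA x y h => by simp [fun n => hA n x y h] }
  have hle : cylinderEvents S ≤ m := by
    refine iSup₂_le fun i hi => ?_
    rintro _ ⟨t, -, rfl⟩ x y h
    simp [h i hi]
  exact hle _ hA x y h

/-- The events depending on finitely many of the coordinates in `Δ`. -/
def finiteCylinderEvents (Δ : Set ι) : Set (Set (ι → Bool)) :=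
  {A | ∃ S : Finset ι, (S : Set ι) ⊆ Δ ∧ MeasurableSet[cylinderEvents (S : Set ι)] A}

theorem isSetAlgebra_finiteCylinderEvents (Δ : Set ι) :
    IsSetAlgebra (finiteCylinderEvents Δ) := by
  classical
  refine ⟨⟨∅, by simp, MeasurableSpace.measurableSet_empty _⟩, ?_, ?_⟩
  · rintro s ⟨S, hS, hs⟩
    exact ⟨S, hS, MeasurableSpace.measurableSet_compl _ _ hs⟩
  · rintro s t ⟨S, hS, hs⟩ ⟨S', hS', ht⟩
    refine ⟨S ∪ S', by simp [hS, hS'], ?_⟩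
    exact @MeasurableSet.union _ (cylinderEvents ((S ∪ S' : Finset ι) : Set ι)) _ _
      (cylinderEvents_mono (by simp) _ hs) (cylinderEvents_mono (by simp) _ ht)

theorem generateFrom_finiteCylinderEvents (Δ : Set ι) :
    MeasurableSpace.generateFrom (finiteCylinderEvents Δ) = cylinderEvents Δ := by
  apply le_antisymm
  · refine MeasurableSpace.generateFrom_le ?_
    rintro s ⟨S, hS, hs⟩
    exact cylinderEvents_mono hS _ hs
  · refine iSup₂_le fun i hi s hs => MeasurableSpace.measurableSet_generateFrom ?_
    refine ⟨{i}, by simpa using hi, ?_⟩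
    exact (measurable_cylinderEvent_apply (i := i) (by simp)).comap_le _ hs

theorem exists_finset_cylinderEvents_measure_symmDiff_lt (Δ : Set ι) (μ : Measure (ι → Bool))
    [IsFiniteMeasure μ] {A : Set (ι → Bool)} (hA : MeasurableSet[cylinderEvents Δ] A) {ε : ℝ}
    (hε : 0 < ε) :
    ∃ S : Finset ι, (S : Set ι) ⊆ Δ ∧ ∃ A' : Set (ι → Bool),
      MeasurableSet[cylinderEvents (S : Set ι)] A' ∧ μ.real (symmDiff A A') < ε := by
  have hle : cylinderEvents Δ ≤ (MeasurableSpace.pi : MeasurableSpace (ι → Bool)) :=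
    cylinderEvents_le_pi
  have hfin := isFiniteMeasure_trim (μ := μ) hle
  have hdense := @Measure.MeasureDense.of_generateFrom_isSetAlgebra_finite _ (cylinderEvents Δ)
    (μ.trim hle) (finiteCylinderEvents Δ) hfin (isSetAlgebra_finiteCylinderEvents Δ)
    (generateFrom_finiteCylinderEvents Δ).symm
  obtain ⟨A', ⟨S, hS, hA'⟩, h⟩ :=
    @Measure.MeasureDense.approx _ (cylinderEvents Δ) _ _ hdense A hA (measure_ne_top _ _) ε hε
  rw [trim_measurableSet_eq hle
    (@MeasurableSet.symmDiff _ (cylinderEvents Δ) _ _ hA (cylinderEvents_mono hS _ hA'))] at h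
  exact ⟨S, hS, A', hA', (ENNReal.lt_ofReal_iff_toReal_lt (measure_ne_top _ _)).1 h⟩

/-- The event that the coordinates in `S` are given by `b`. -/
def pattern (S : Finset ι) (b : ι → Bool) : Set (ι → Bool) := {ω | ∀ i ∈ S, ω i = b i}

theorem measurableSet_pattern {S : Finset ι} {Δ : Set ι} (h : (S : Set ι) ⊆ Δ) (b : ι → Bool) :
    MeasurableSet[cylinderEvents Δ] (pattern S b) := by
  have : pattern S b = ⋂ i ∈ S, (fun ω : ι → Bool => ω i) ⁻¹' {b i} := by
    ext
    simp [pattern]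
  rw [this]
  refine S.measurableSet_biInter fun i hi => ?_
  exact measurable_cylinderEvent_apply (i := i) (h hi) (measurableSet_singleton _)

theorem exists_measurableSet_inter_pattern {Δ : Set ι} {S : Finset ι} {b : ι → Bool}
    {B : Set (ι → Bool)} (hB : MeasurableSet[cylinderEvents (Δ ∪ S)] B) (hBS : B ⊆ pattern S b) :
    ∃ C, MeasurableSet[cylinderEvents Δ] C ∧ B = C ∩ pattern S b := by
  classical
  let patch : (ι → Bool) → ι → Bool := fun ω i => if i ∈ S then b i else ω i
  have hpatch : Measurable[cylinderEvents Δ, cylinderEvents (Δ ∪ S)] patch := by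
    rw [measurable_cylinderEvents_iff]
    intro i hi
    by_cases h : i ∈ S
    · simpa only [patch, h, if_true] using measurable_const
    · simpa only [patch, h, if_false] using
        measurable_cylinderEvent_apply (i := i) (hi.resolve_right h)
  have hfix {ω : ι → Bool} (hω : ω ∈ pattern S b) : patch ω = ω := by
    funext i
    by_cases h : i ∈ S
    · simp [patch, h, hω i h]
    · simp [patch, h]
  refine ⟨patch ⁻¹' B, hpatch hB, Set.ext fun ω => ⟨fun h => ⟨?_, hBS h⟩, fun h => ?_⟩⟩
  · rwa [Set.mem_preimage, hfix (hBS h)]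
  · simpa only [Set.mem_preimage, hfix h.2] using h.1

end CylinderEvents

section ConditionalExpectation

variable {Ω : Type*} {m m' m₀ : MeasurableSpace Ω} {P : Measure Ω} {X Y : Ω → ℝ}

theorem indicator_one_inter (A B : Set Ω) :
    (A ∩ B).indicator (fun _ => (1 : ℝ)) = A.indicator (fun _ => 1) * B.indicator fun _ => 1 :=
  Set.inter_indicator_one

theorem condExp_indicator_one_nonneg (A : Set Ω) (m : MeasurableSpace Ω) : 0 ≤ᵐ[P] P⟦A | m⟧ :=
  condExp_nonneg (ae_of_all _ fun ω => Set.indicator_nonneg (by simp) ω)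

theorem condExp_ae_eq_of_forall_integral_abs_sub_le (hX : Integrable X P)
    (h : ∀ ε > 0, ∃ X' : Ω → ℝ, Integrable X' P ∧ ∫ ω, |(X - X') ω| ∂P ≤ ε ∧
      P[X' | m] =ᵐ[P] P[X' | m']) : P[X | m] =ᵐ[P] P[X | m'] := by
  have hclose : ∫ ω, |(P[X | m] - P[X | m']) ω| ∂P ≤ 0 := by
    refine le_of_forall_pos_le_add fun ε hε => ?_
    obtain ⟨X', hX', hdist, heq⟩ := h (ε / 2) (half_pos hε)
    have hm (m₁ : MeasurableSpace Ω) : ∫ ω, |(P[X - X' | m₁]) ω| ∂P ≤ ε / 2 :=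
      (integral_abs_condExp_le _).trans hdist
    calc ∫ ω, |(P[X | m] - P[X | m']) ω| ∂P
        ≤ ∫ ω, (|(P[X - X' | m]) ω| + |(P[X - X' | m']) ω|) ∂P := by
          refine integral_mono_ae (integrable_condExp.sub integrable_condExp).abs
            (integrable_condExp.abs.add integrable_condExp.abs) ?_
          filter_upwards [heq, condExp_sub hX hX' m, condExp_sub hX hX' m'] with ω h₁ h₂ h₃
          simp only [Pi.sub_apply] at h₂ h₃ ⊢
          rw [h₂, h₃, h₁, abs_sub_comm ((P[X | m']) ω)]
          exact abs_sub_le _ _ _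
      _ = ∫ ω, |(P[X - X' | m]) ω| ∂P + ∫ ω, |(P[X - X' | m']) ω| ∂P :=
          integral_add integrable_condExp.abs integrable_condExp.abs
      _ ≤ 0 + ε := by linarith [hm m, hm m']
  have hzero := (integral_eq_zero_iff_of_nonneg (fun ω => abs_nonneg _)
    (integrable_condExp.sub integrable_condExp).abs).1
      (hclose.antisymm (integral_nonneg fun ω => abs_nonneg _))
  filter_upwards [hzero] with ω hω
  exact sub_eq_zero.1 (abs_eq_zero.1 hω)

theorem integral_abs_indicator_one_sub {A B : Set Ω} (hA : MeasurableSet A)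
    (hB : MeasurableSet B) :
    ∫ ω, |(A.indicator (fun _ => 1) - B.indicator fun _ => 1 : Ω → ℝ) ω| ∂P =
      P.real (symmDiff A B) := by
  rw [← integral_indicator_one (hA.symmDiff hB)]
  congr with ω
  by_cases h : ω ∈ A <;> by_cases h' : ω ∈ B <;> simp [Set.mem_symmDiff, h, h']

variable [IsFiniteMeasure P]

theorem integrable_indicator_one {A : Set Ω} (hA : MeasurableSet A) :
    Integrable (A.indicator fun _ => (1 : ℝ)) P :=
  (integrable_const 1).indicator hA

theorem memLp_indicator_one {A : Set Ω} (hA : MeasurableSet A) :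
    MemLp (A.indicator fun _ => (1 : ℝ)) 2 P :=
  (memLp_const 1).indicator hA

theorem setIntegral_condExp_indicator_one (hm : m ≤ m₀) {F C : Set Ω} (hF : MeasurableSet F)
    (hC : MeasurableSet[m] C) : ∫ ω in C, (P⟦F | m⟧) ω ∂P = P.real (F ∩ C) := by
  rw [setIntegral_condExp hm (integrable_indicator_one hF) hC, setIntegral_indicator hF]
  simp [Set.inter_comm]

theorem integral_mul_condExp (hm : m ≤ m₀) (hX : MemLp X 2 P) (hY : MemLp Y 2 P)
    (hYm : StronglyMeasurable[m] Y) :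
    ∫ ω, Y ω * (P[X | m]) ω ∂P = ∫ ω, Y ω * X ω ∂P := by
  have hpull := condExp_mul_of_stronglyMeasurable_left hYm (hY.integrable_mul hX)
    (hX.integrable (by norm_num))
  calc ∫ ω, Y ω * (P[X | m]) ω ∂P = ∫ ω, (P[Y * X | m]) ω ∂P := (integral_congr_ae hpull).symm
    _ = ∫ ω, Y ω * X ω ∂P := integral_condExp hm

theorem condExp_ae_eq_of_integral_sq_le (hm' : m' ≤ m) (hm : m ≤ m₀) (hX : MemLp X 2 P)
    (h : ∫ ω, (P[X | m]) ω ^ 2 ∂P ≤ ∫ ω, (P[X | m']) ω ^ 2 ∂P) :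
    P[X | m] =ᵐ[P] P[X | m'] := by
  set Y := P[X | m]
  set Z := P[X | m']
  have hY2 : MemLp Y 2 P := hX.condExp (by norm_num)
  have hZ2 : MemLp Z 2 P := hX.condExp (by norm_num)
  have hZY : ∫ ω, Z ω * Y ω ∂P = ∫ ω, Z ω ^ 2 ∂P := by
    rw [integral_mul_condExp hm hX hZ2 (stronglyMeasurable_condExp.mono hm'),
      ← integral_mul_condExp (hm'.trans hm) hX hZ2 stronglyMeasurable_condExp]
    simp_rw [sq]
    rfl
  have hYZ : Integrable (fun ω => 2 * (Z ω * Y ω)) P := (hZ2.integrable_mul hY2).const_mul 2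
  have hdist : ∫ ω, (Y ω - Z ω) ^ 2 ∂P ≤ 0 :=
    calc ∫ ω, (Y ω - Z ω) ^ 2 ∂P
        = ∫ ω, (Y ω ^ 2 - 2 * (Z ω * Y ω) + Z ω ^ 2) ∂P := by
          congr with ω
          ring
      _ = ∫ ω, Y ω ^ 2 ∂P - ∫ ω, Z ω ^ 2 ∂P := by
          rw [integral_add (f := fun ω => Y ω ^ 2 - 2 * (Z ω * Y ω))
            (hY2.integrable_sq.sub hYZ) hZ2.integrable_sq,
            integral_sub hY2.integrable_sq hYZ, integral_const_mul, hZY]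
          ring
      _ ≤ 0 := sub_nonpos.2 h
  have hzero := (integral_eq_zero_iff_of_nonneg (fun ω => sq_nonneg (Y ω - Z ω))
    (hY2.sub hZ2).integrable_sq).1
      (hdist.antisymm (integral_nonneg fun ω => sq_nonneg (Y ω - Z ω)))
  filter_upwards [hzero] with ω hω
  exact sub_eq_zero.1 (pow_eq_zero_iff two_ne_zero |>.1 hω)

/-- Both conditional expectations have the same `L²` norm, because `P[X | m] ∘ T` is
`m'`-measurable and correlates with `X` as much as `P[X | m]` does. -/
theorem condExp_ae_eq_of_measurePreserving {T : Ω → Ω} (hT : MeasurePreserving T P P)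
    (hTm : Measurable[m', m] T) (hm' : m' ≤ m) (hm : m ≤ m₀) (hX : MemLp X 2 P)
    (hXT : X ∘ T = X) : P[X | m] =ᵐ[P] P[X | m'] := by
  refine condExp_ae_eq_of_integral_sq_le hm' hm hX ?_
  set Y := P[X | m]
  set Z := P[X | m']
  have hY2 : MemLp Y 2 P := hX.condExp (by norm_num)
  have hZ2 : MemLp Z 2 P := hX.condExp (by norm_num)
  have hYT2 : MemLp (Y ∘ T) 2 P := hY2.comp_measurePreserving hT
  have hYT : StronglyMeasurable[m'] (Y ∘ T) := stronglyMeasurable_condExp.comp_measurable hTm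
  have hcomp {F : Ω → ℝ} (hF : AEStronglyMeasurable F P) : ∫ ω, F (T ω) ∂P = ∫ ω, F ω ∂P := by
    rw [← integral_map hT.measurable.aemeasurable (by rwa [hT.map_eq]), hT.map_eq]
  have hcorr : ∫ ω, Y ω ^ 2 ∂P = ∫ ω, (Y ∘ T) ω * Z ω ∂P :=
    calc ∫ ω, Y ω ^ 2 ∂P = ∫ ω, Y ω * Y ω ∂P := by simp_rw [sq]
      _ = ∫ ω, Y ω * X ω ∂P := integral_mul_condExp hm hX hY2 stronglyMeasurable_condExp
      _ = ∫ ω, Y (T ω) * X (T ω) ∂P :=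
          (hcomp (hY2.aestronglyMeasurable.mul hX.aestronglyMeasurable)).symm
      _ = ∫ ω, (Y ∘ T) ω * (X ∘ T) ω ∂P := rfl
      _ = ∫ ω, (Y ∘ T) ω * X ω ∂P := by rw [hXT]
      _ = ∫ ω, (Y ∘ T) ω * Z ω ∂P := (integral_mul_condExp (hm'.trans hm) hX hYT2 hYT).symm
  have hamgm : ∫ ω, 2 * ((Y ∘ T) ω * Z ω) ∂P ≤ ∫ ω, (Y (T ω) ^ 2 + Z ω ^ 2) ∂P :=
    integral_mono ((hYT2.integrable_mul hZ2).const_mul 2)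
      (hYT2.integrable_sq.add hZ2.integrable_sq) fun ω => by
        simpa [mul_assoc] using two_mul_le_add_sq (Y (T ω)) (Z ω)
  rw [integral_const_mul, ← hcorr, integral_add (f := fun ω => Y (T ω) ^ 2)
    hYT2.integrable_sq hZ2.integrable_sq,
    hcomp (F := fun ω => Y ω ^ 2) (hY2.aestronglyMeasurable.pow 2)] at hamgm
  linarith

theorem condExp_inter_ae_eq_mul (hm' : m' ≤ m) (hm : m ≤ m₀) {A B : Set Ω}
    (hA : MeasurableSet A) (hB : MeasurableSet[m] B) (h : P⟦A | m⟧ =ᵐ[P] P⟦A | m'⟧) :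
    P⟦B ∩ A | m'⟧ =ᵐ[P] P⟦A | m'⟧ * P⟦B | m'⟧ := by
  have hB₀ : MeasurableSet B := hm _ hB
  have hpull : P⟦B ∩ A | m⟧ =ᵐ[P] B.indicator (fun _ => 1) * P⟦A | m⟧ := by
    rw [indicator_one_inter]
    refine condExp_mul_of_stronglyMeasurable_left
      (stronglyMeasurable_const.indicator hB) ?_ (integrable_indicator_one hA)
    rw [← indicator_one_inter]
    exact integrable_indicator_one (hB₀.inter hA)
  have htower : P⟦B ∩ A | m'⟧ =ᵐ[P] P[P⟦A | m'⟧ * B.indicator (fun _ => 1) | m'] := by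
    refine (condExp_condExp_of_le hm' hm).symm.trans (condExp_congr_ae ?_)
    filter_upwards [hpull, h] with ω h₁ h₂
    rw [h₁, Pi.mul_apply, Pi.mul_apply, h₂, mul_comm]
  exact htower.trans (condExp_mul_of_stronglyMeasurable_left stronglyMeasurable_condExp
    (((memLp_indicator_one hA).condExp (by norm_num)).integrable_mul (memLp_indicator_one hB₀))
    (integrable_indicator_one hB₀))

/-- The event that, given `m`, a proportion of more than `θ` of `A` lies in `F`. It is stated
without dividing by the conditional probability of `A`, which may vanish. -/
def denseEvent (P : Measure Ω) (m : MeasurableSpace Ω) (θ : ℝ) (F A : Set Ω) : Set Ω :=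
  {ω | θ * (P⟦A | m⟧) ω < (P⟦F ∩ A | m⟧) ω}

theorem measurableSet_denseEvent (P : Measure Ω) (m : MeasurableSpace Ω) (θ : ℝ) (F A : Set Ω) :
    MeasurableSet[m] (denseEvent P m θ F A) :=
  measurableSet_lt (stronglyMeasurable_condExp.measurable.const_mul θ)
    stronglyMeasurable_condExp.measurable

theorem measureReal_mul_lt_of_lt_condExp (hm : m ≤ m₀) {F B : Set Ω} (hF : MeasurableSet F)
    (hB : MeasurableSet[m] B) {θ : ℝ} (hθ : ∀ ω ∈ B, θ < (P⟦F | m⟧) ω) (hPB : P B ≠ 0) :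
    θ * P.real B < P.real (F ∩ B) := by
  have hpos : 0 < ∫ ω in B, ((P⟦F | m⟧) ω - θ) ∂P := by
    rw [setIntegral_pos_iff_support_of_nonneg_ae]
    · refine (pos_iff_ne_zero.2 hPB).trans_le (measure_mono fun ω hω => ⟨?_, hω⟩)
      exact (sub_pos.2 (hθ ω hω)).ne'
    · filter_upwards [ae_restrict_mem (hm _ hB)] with ω hω
      exact (sub_pos.2 (hθ ω hω)).le
    · exact (integrable_condExp.sub (integrable_const θ)).integrableOn
  rw [integral_sub integrable_condExp.integrableOn (integrable_const θ).integrableOn,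
    setIntegral_condExp_indicator_one hm hF hB, setIntegral_const, smul_eq_mul] at hpos
  linarith

theorem measure_lt_condExp_inter_sdiff_denseEvent_eq_zero (hm' : m' ≤ m) (hm : m ≤ m₀)
    {A F : Set Ω} (hA : MeasurableSet[m] A) (hF : MeasurableSet F)
    (htrace : ∀ B, MeasurableSet[m] B → B ⊆ A → ∃ C, MeasurableSet[m'] C ∧ B = C ∩ A) (θ : ℝ) :
    P (({ω | θ < (P⟦F | m⟧) ω} ∩ A) \ denseEvent P m' θ F A) = 0 := by
  set U := denseEvent P m' θ F A
  have hU : MeasurableSet[m'] U := measurableSet_denseEvent P m' θ F A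
  have hm'₀ := hm'.trans hm
  set B := ({ω | θ < (P⟦F | m⟧) ω} ∩ A) \ U with hB
  have hBm : MeasurableSet[m] B :=
    ((measurableSet_lt measurable_const stronglyMeasurable_condExp.measurable).inter hA).diff
      (hm' _ hU)
  obtain ⟨C, hC, hBC⟩ := htrace B hBm fun ω hω => hω.1.2
  have hBCU : B = C \ U ∩ A := by
    rw [← Set.inter_sdiff_right_comm, ← hBC, hB, Set.sdiff_sdiff, Set.union_self]
  have hCU : MeasurableSet[m'] (C \ U) := hC.diff hU
  have hle : P.real (F ∩ B) ≤ θ * P.real B :=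
    calc P.real (F ∩ B) = ∫ ω in C \ U, (P⟦F ∩ A | m'⟧) ω ∂P := by
          rw [setIntegral_condExp_indicator_one hm'₀ (hF.inter (hm _ hA)) hCU, hBCU,
            Set.inter_comm (C \ U), Set.inter_assoc]
      _ ≤ ∫ ω in C \ U, θ * (P⟦A | m'⟧) ω ∂P :=
          setIntegral_mono_on integrable_condExp.integrableOn
            (integrable_condExp.const_mul θ).integrableOn (hm'₀ _ hCU) fun ω hω => not_lt.1 hω.2
      _ = θ * P.real B := by
          rw [integral_const_mul, setIntegral_condExp_indicator_one hm'₀ (hm _ hA) hCU, hBCU,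
            Set.inter_comm A]
  by_contra hne
  exact hle.not_gt (measureReal_mul_lt_of_lt_condExp hm hF hBm (fun ω hω => hω.1.1) hne)

end ConditionalExpectation

theorem measure_lt_condExp_inter_pattern_sdiff_denseEvent_eq_zero {ι : Type*}
    {P : Measure (ι → Bool)} [IsFiniteMeasure P] (Δ : Set ι) (S : Finset ι) (b : ι → Bool)
    {F : Set (ι → Bool)} (hF : MeasurableSet F) (θ : ℝ) :
    P (({ω | θ < (P⟦F | cylinderEvents (Δ ∪ S)⟧) ω} ∩ pattern S b) \
      denseEvent P (cylinderEvents Δ) θ F (pattern S b)) = 0 :=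
  measure_lt_condExp_inter_sdiff_denseEvent_eq_zero
    (cylinderEvents_mono Set.subset_union_left) cylinderEvents_le_pi
    (measurableSet_pattern Set.subset_union_right b) hF
    (fun _ hB hBS => exists_measurableSet_inter_pattern hB hBS) θ

section ExchangeableArrays

variable {ι : Type*}

/-- Indices of the arrays: a colour in `ι` together with a row number for every coordinate. -/
abbrev ArrayIndex (ι : Type*) : Type _ := ι × (ι → ℕ)

/-- Arrays of bits. The bit at `(j, m)` records whether the point with coordinates `x i (m i)`,
built from a sample `x`, lies in the `j`-th set. -/
abbrev BitArray (ι : Type*) : Type _ := ArrayIndex ι → Bool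

/-- The array obtained by relabelling, separately in each coordinate `i`, the rows along `T i`. -/
def relabelRows (T : ι → ℕ → ℕ) (ω : BitArray ι) : BitArray ι :=
  fun p => ω (p.1, fun i => T i (p.2 i))

/-- Invariance in law under injective relabellings of the rows, separately in each coordinate. -/
def Exchangeable (P : Measure (BitArray ι)) : Prop :=
  ∀ T : ι → ℕ → ℕ, (∀ i, Function.Injective (T i)) → P.map (relabelRows T) = P

theorem measurable_relabelRows (T : ι → ℕ → ℕ) : Measurable (relabelRows T) := by
  unfold relabelRows
  fun_prop

/-- The relabelling that moves row `0` to row `M + 1` and fixes the rows `1, …, M`. -/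
def shiftZeroAbove (M n : ℕ) : ℕ := if n = 0 then M + 1 else if n ≤ M then n else n + 1

theorem shiftZeroAbove_injective (M : ℕ) : Function.Injective (shiftZeroAbove M) := by
  intro a b h
  unfold shiftZeroAbove at h
  grind

theorem shiftZeroAbove_ne_zero (M n : ℕ) : shiftZeroAbove M n ≠ 0 := by
  unfold shiftZeroAbove
  grind

theorem shiftZeroAbove_of_ne_zero_of_le {M n : ℕ} (h₀ : n ≠ 0) (h : n ≤ M) :
    shiftZeroAbove M n = n := by
  simp [shiftZeroAbove, h₀, h]

/-- The relabelling that applies `shiftZeroAbove M` in the coordinates outside `e`. -/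
def shiftZeroAboveOff [DecidableEq ι] (e : Finset ι) (M : ℕ) (i : ι) : ℕ → ℕ :=
  if i ∈ e then id else shiftZeroAbove M

theorem shiftZeroAboveOff_injective [DecidableEq ι] (e : Finset ι) (M : ℕ) (i : ι) :
    Function.Injective (shiftZeroAboveOff e M i) := by
  unfold shiftZeroAboveOff
  split_ifs
  exacts [Function.injective_id, shiftZeroAbove_injective M]

theorem isLowerSet_card_le (d : ℕ) : IsLowerSet {Z : Finset ι | #Z ≤ d} :=
  fun _ _ hba ha => (card_le_card hba).trans ha

variable [Fintype ι]

/-- The coordinates at which `m` uses row `0`. -/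
def zeroSet (m : ι → ℕ) : Finset ι := univ.filter fun i => m i = 0

theorem mem_zeroSet {m : ι → ℕ} {i : ι} : i ∈ zeroSet m ↔ m i = 0 := by simp [zeroSet]

/-- The σ-algebra generated by the bits whose zero set belongs to `D`. -/
abbrev bitSigma (D : Set (Finset ι)) : MeasurableSpace (BitArray ι) :=
  cylinderEvents {p : ArrayIndex ι | zeroSet p.2 ∈ D}

theorem bitSigma_le (D : Set (Finset ι)) : bitSigma D ≤ MeasurableSpace.pi := cylinderEvents_le_pi

theorem bitSigma_mono {D D' : Set (Finset ι)} (h : D ⊆ D') : bitSigma D ≤ bitSigma D' :=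
  cylinderEvents_mono fun _ hp => h hp

theorem measurable_relabelRows_bitSigma {D D' : Set (Finset ι)} {T : ι → ℕ → ℕ}
    (h : ∀ m, zeroSet m ∈ D → zeroSet (fun i => T i (m i)) ∈ D') :
    Measurable[bitSigma D', bitSigma D] (relabelRows T) := by
  rw [measurable_cylinderEvents_iff]
  exact fun p hp => measurable_cylinderEvent_apply (i := (p.1, fun i => T i (p.2 i))) (h p.2 hp)

theorem zeroSet_shiftZeroAboveOff [DecidableEq ι] (e : Finset ι) (M : ℕ) (m : ι → ℕ) :
    zeroSet (fun i => shiftZeroAboveOff e M i (m i)) = zeroSet m ∩ e := by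
  ext i
  by_cases hi : i ∈ e <;> simp [mem_zeroSet, shiftZeroAboveOff, hi, shiftZeroAbove_ne_zero]

theorem shiftZeroAboveOff_of_zeroSet_subset [DecidableEq ι] {e : Finset ι} {M : ℕ} {m : ι → ℕ}
    (he : zeroSet m ⊆ e) (hM : ∀ i, m i ≤ M) :
    (fun i => shiftZeroAboveOff e M i (m i)) = m := by
  funext i
  by_cases hi : i ∈ e
  · simp [shiftZeroAboveOff, hi]
  · have : m i ≠ 0 := fun h => hi (he (mem_zeroSet.2 h))
    simp [shiftZeroAboveOff, hi, shiftZeroAbove_of_ne_zero_of_le this (hM i)]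

theorem relabelRows_shiftZeroAboveOff_mem_iff [DecidableEq ι] {e : Finset ι} {M : ℕ}
    {S : Finset (ArrayIndex ι)} (hS : ∀ p ∈ S, zeroSet p.2 ⊆ e) (hM : ∀ p ∈ S, ∀ i, p.2 i ≤ M)
    {A : Set (BitArray ι)} (hA : MeasurableSet[cylinderEvents (S : Set (ArrayIndex ι))] A)
    (ω : BitArray ι) : relabelRows (shiftZeroAboveOff e M) ω ∈ A ↔ ω ∈ A :=
  mem_iff_mem_of_measurableSet_cylinderEvents hA fun p hp => by
    rw [relabelRows, shiftZeroAboveOff_of_zeroSet_subset (hS p hp) (hM p hp)]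

variable {P : Measure (BitArray ι)} [IsProbabilityMeasure P]

/-- Off `e`, relabel so that row `0` is moved beyond all rows that `A` uses. This leaves `A`
invariant, while it pulls `bitSigma D` back into `bitSigma (D ∩ {Z | Z ⊆ e})`. -/
theorem condExp_bitSigma_of_finite (hP : Exchangeable P) {e : Finset ι}
    {D : Set (Finset ι)} (hD : IsLowerSet D) {S : Finset (ArrayIndex ι)}
    (hS : ∀ p ∈ S, zeroSet p.2 ⊆ e) {A : Set (BitArray ι)}
    (hA : MeasurableSet[cylinderEvents (S : Set (ArrayIndex ι))] A) :
    P⟦A | bitSigma D⟧ =ᵐ[P] P⟦A | bitSigma (D ∩ {Z | Z ⊆ e})⟧ := by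
  classical
  obtain ⟨M, hM⟩ : ∃ M : ℕ, ∀ p ∈ S, ∀ i, p.2 i ≤ M :=
    ⟨S.sup fun p => univ.sup p.2, fun p hp i => (le_sup (f := p.2) (mem_univ i)).trans
      (le_sup (f := fun p : ArrayIndex ι => univ.sup p.2) hp)⟩
  have hmp : MeasurePreserving (relabelRows (shiftZeroAboveOff e M)) P P :=
    ⟨measurable_relabelRows _, hP _ (shiftZeroAboveOff_injective e M)⟩
  refine condExp_ae_eq_of_measurePreserving hmp (measurable_relabelRows_bitSigma fun m hm => ?_)
    (bitSigma_mono Set.inter_subset_left) (bitSigma_le D)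
    (memLp_indicator_one (cylinderEvents_le_pi _ hA)) (funext fun ω => ?_)
  · rw [zeroSet_shiftZeroAboveOff]
    exact ⟨hD inter_subset_left hm, inter_subset_right⟩
  · exact Set.indicator_eq_indicator (relabelRows_shiftZeroAboveOff_mem_iff hS hM hA ω) rfl

theorem condExp_bitSigma (hP : Exchangeable P) {e : Finset ι}
    {D : Set (Finset ι)} (hD : IsLowerSet D) {A : Set (BitArray ι)}
    (hA : MeasurableSet[bitSigma {Z | Z ⊆ e}] A) :
    P⟦A | bitSigma D⟧ =ᵐ[P] P⟦A | bitSigma (D ∩ {Z | Z ⊆ e})⟧ := by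
  have hA₀ : MeasurableSet A := bitSigma_le _ _ hA
  refine condExp_ae_eq_of_forall_integral_abs_sub_le (integrable_indicator_one hA₀) fun ε hε => ?_
  obtain ⟨S, hS, A', hA', hlt⟩ :=
    exists_finset_cylinderEvents_measure_symmDiff_lt _ P hA hε
  have hA'₀ : MeasurableSet A' := cylinderEvents_le_pi _ hA'
  refine ⟨_, integrable_indicator_one hA'₀, ?_, condExp_bitSigma_of_finite hP hD hS hA'⟩
  exact (integral_abs_indicator_one_sub hA₀ hA'₀).trans_le hlt.le

theorem condExp_inter_bitSigma (hP : Exchangeable P) {e : Finset ι}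
    {D D' : Set (Finset ι)} (hD : IsLowerSet D) (hD' : IsLowerSet D') (hDD' : D ⊆ D')
    (he : ∀ Z ∈ D', Z ⊆ e → Z ∈ D) {A B : Set (BitArray ι)}
    (hA : MeasurableSet[bitSigma {Z | Z ⊆ e}] A) (hB : MeasurableSet[bitSigma D'] B) :
    P⟦B ∩ A | bitSigma D⟧ =ᵐ[P] P⟦A | bitSigma D⟧ * P⟦B | bitSigma D⟧ := by
  have htrace : D' ∩ {Z | Z ⊆ e} = D ∩ {Z | Z ⊆ e} :=
    Set.ext fun Z => ⟨fun h => ⟨he Z h.1 h.2, h.2⟩, fun h => ⟨hDD' h.1, h.2⟩⟩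
  refine condExp_inter_ae_eq_mul (bitSigma_mono hDD') (bitSigma_le D') (bitSigma_le _ _ hA) hB ?_
  exact (htrace ▸ condExp_bitSigma hP hD' hA).trans (condExp_bitSigma hP hD hA).symm

theorem condExp_inter_biInter_bitSigma (hP : Exchangeable P) {d : ℕ}
    {A : Finset ι → Set (BitArray ι)} (hA : ∀ f, MeasurableSet[bitSigma {Z | Z ⊆ f}] (A f))
    {𝓕 : Finset (Finset ι)} (h𝓕 : ∀ f ∈ 𝓕, #f = d + 1) {Y : Set (BitArray ι)}
    (hY : MeasurableSet[bitSigma {Z | #Z ≤ d + 1 ∧ Z ∉ 𝓕}] Y) :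
    P⟦Y ∩ ⋂ f ∈ 𝓕, A f | bitSigma {Z | #Z ≤ d}⟧ =ᵐ[P] fun ω =>
      (∏ f ∈ 𝓕, (P⟦A f | bitSigma {Z | #Z ≤ d}⟧) ω) * (P⟦Y | bitSigma {Z | #Z ≤ d}⟧) ω := by
  classical
  induction 𝓕 using Finset.induction_on generalizing Y with
  | empty => simp
  | insert f 𝓕 hf ih =>
    have hfd : #f = d + 1 := h𝓕 f (mem_insert_self _ _)
    have hYA : MeasurableSet[bitSigma {Z | #Z ≤ d + 1 ∧ Z ∉ 𝓕}] (Y ∩ A f) := by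
      refine @MeasurableSet.inter _ (bitSigma _) _ _ (bitSigma_mono ?_ _ hY)
        (bitSigma_mono ?_ _ (hA f))
      · exact fun Z hZ => ⟨hZ.1, fun h => hZ.2 (mem_insert_of_mem h)⟩
      · refine fun Z hZ => ⟨(card_le_card hZ).trans hfd.le, fun h => hf ?_⟩
        have := h𝓕 Z (mem_insert_of_mem h)
        rwa [← eq_of_subset_of_card_le hZ (by omega)]
    have hpeel : P⟦Y ∩ A f | bitSigma {Z | #Z ≤ d}⟧ =ᵐ[P]
        P⟦A f | bitSigma {Z | #Z ≤ d}⟧ * P⟦Y | bitSigma {Z | #Z ≤ d}⟧ := by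
      refine condExp_inter_bitSigma hP (isLowerSet_card_le d) (D' := {Z | ¬ f ⊆ Z})
        (fun a b hba ha h => ha (h.trans hba)) (fun Z hZ h => ?_) (fun Z hZ hZf => ?_) (hA f)
        (bitSigma_mono (fun Z hZ h => hZ.2 ?_) _ hY)
      · have := (card_le_card h).trans hZ
        omega
      · have := card_lt_card ⟨hZf, hZ⟩
        exact Nat.le_of_lt_succ (this.trans_eq hfd)
      · rw [← eq_of_subset_of_card_le h (by rw [hfd]; exact hZ.1)]
        exact mem_insert_self _ _
    rw [Finset.set_biInter_insert, ← Set.inter_assoc]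
    filter_upwards [ih (fun g hg => h𝓕 g (mem_insert_of_mem hg)) hYA, hpeel] with ω h₁ h₂
    rw [h₁, h₂, prod_insert hf, Pi.mul_apply]
    ring

end ExchangeableArrays

section Filtrations

variable {Ω : Type*} {m₀ : MeasurableSpace Ω} {P : Measure Ω}

theorem ae_mem_imp_eventually_lt_condExp [IsFiniteMeasure P] {ℱ : Filtration ℕ m₀} {F : Set Ω}
    (hF : MeasurableSet[⨆ n, ℱ n] F) {θ : ℝ} (hθ : θ < 1) :
    ∀ᵐ ω ∂P, ω ∈ F → ∀ᶠ n in Filter.atTop, θ < (P⟦F | ℱ n⟧) ω := by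
  have hF₀ : MeasurableSet F := (iSup_le fun n => ℱ.le n) _ hF
  have hlim := (integrable_indicator_one (P := P) hF₀).tendsto_ae_condExp (ℱ := ℱ)
    (stronglyMeasurable_const.indicator hF)
  filter_upwards [hlim] with ω ht hω
  rw [Set.indicator_of_mem hω] at ht
  exact ht.eventually_const_lt hθ

theorem exists_measure_ne_zero_of_ae_eventually {A : Set Ω} {p : ℕ → Ω → Prop}
    (h : ∀ᵐ ω ∂P, ω ∈ A → ∀ᶠ n in Filter.atTop, p n ω) (hA : P A ≠ 0) :
    ∃ n, P {ω | p n ω} ≠ 0 := by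
  by_contra! hnull
  refine hA (measure_mono_null_ae ?_ (measure_iUnion_null hnull))
  filter_upwards [h] with ω hω hωA
  exact Set.mem_iUnion.2 (hω hωA).exists

variable {ι : Type*}

/-- The filtration that, after the coordinates in `Δ`, reveals those in `S 0 ⊆ S 1 ⊆ ⋯`. -/
def cylinderFiltration (Δ : Set ι) (S : ℕ → Finset ι) (hS : Monotone S) :
    Filtration ℕ (MeasurableSpace.pi : MeasurableSpace (ι → Bool)) where
  seq n := cylinderEvents (Δ ∪ S n)
  mono' _ _ h := cylinderEvents_mono (Set.union_subset_union_right _ (coe_subset.2 (hS h)))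
  le' _ := cylinderEvents_le_pi

theorem cylinderEvents_le_iSup_cylinderFiltration {Δ Δ' : Set ι} {S : ℕ → Finset ι}
    (hS : Monotone S) (h : ∀ i ∈ Δ', i ∈ Δ ∨ ∃ n, i ∈ S n) :
    cylinderEvents Δ' ≤ ⨆ n, cylinderFiltration Δ S hS n := by
  refine iSup₂_le fun i hi => ?_
  obtain ⟨n, hn⟩ : ∃ n, i ∈ Δ ∪ S n := by
    rcases h i hi with h | ⟨n, hn⟩
    exacts [⟨0, Or.inl h⟩, ⟨n, Or.inr hn⟩]
  exact (measurable_cylinderEvent_apply (i := i) hn).comap_le.trans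
    (le_iSup (fun n => cylinderFiltration Δ S hS n) n)

theorem exists_monotone_finset_exhaustion [Countable ι] (s : Set ι) :
    ∃ S : ℕ → Finset ι, Monotone S ∧ (∀ n, ↑(S n) ⊆ s) ∧ ∀ i ∈ s, ∃ n, i ∈ S n := by
  obtain ⟨enc, henc⟩ := exists_injective_nat ι
  have hfin (n : ℕ) : {i | enc i < n ∧ i ∈ s}.Finite :=
    ((Set.finite_Iio n).preimage henc.injOn).subset fun _ hi => hi.1
  refine ⟨fun n => (hfin n).toFinset, fun n m h => ?_, fun n i hi => ?_, fun i hi => ?_⟩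
  · exact Set.Finite.toFinset_mono fun i hi => ⟨hi.1.trans_le h, hi.2⟩
  · exact ((hfin n).mem_toFinset.1 hi).2
  · exact ⟨enc i + 1, (hfin _).mem_toFinset.2 ⟨Nat.lt_succ_self _, hi⟩⟩

theorem exists_measure_inter_pattern_ne_zero {Q : Measure (ι → Bool)} {A : Set (ι → Bool)}
    (hA : Q A ≠ 0) (S : Finset ι) : ∃ b, Q (A ∩ pattern S b) ≠ 0 := by
  classical
  by_contra! hnull
  let extend (b : S → Bool) (i : ι) : Bool := if h : i ∈ S then b ⟨i, h⟩ else false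
  refine hA (measure_mono_null (fun ω hω => ?_)
    (measure_iUnion_null fun b : S → Bool => hnull (extend b)))
  exact Set.mem_iUnion.2 ⟨fun i => ω i, hω, fun i hi => by simp [extend, hi]⟩

end Filtrations

section FacePatterns

variable {ι : Type*} [Fintype ι] [DecidableEq ι]

/-- The sets of at most `d` coordinates different from `j`. -/
def lowFace (j : ι) (d : ℕ) : Set (Finset ι) := {Z | Z ⊆ univ.erase j ∧ #Z ≤ d}

/-- The members of `S` whose zero set does not contain `j`. -/
def faceIndices (j : ι) (S : Finset (ArrayIndex ι)) : Finset (ArrayIndex ι) :=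
  S.filter fun p => zeroSet p.2 ⊆ univ.erase j

theorem lowFace_mono (j : ι) {d d' : ℕ} (h : d ≤ d') : lowFace j d ⊆ lowFace j d' :=
  fun _ hZ => ⟨hZ.1, hZ.2.trans h⟩

theorem lowFace_subset_ssubset {d : ℕ} (hd : d + 2 ≤ Fintype.card ι) (j : ι) :
    lowFace j d ⊆ {Z | Z ⊂ univ.erase j} := by
  refine fun Z hZ => hZ.1.ssubset_of_ne fun h => ?_
  have := hZ.2
  rw [h, card_erase_of_mem (mem_univ _), card_univ] at this
  omega

theorem union_faceIndices_subset {d : ℕ} {S : Finset (ArrayIndex ι)}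
    (hS : ∀ p ∈ S, #(zeroSet p.2) = d + 1) (j : ι) :
    ({p | zeroSet p.2 ∈ lowFace j d} ∪ faceIndices j S : Set (ArrayIndex ι)) ⊆
      {p | zeroSet p.2 ∈ lowFace j (d + 1)} := by
  rintro p (hp | hp)
  · exact lowFace_mono j d.le_succ hp
  · have hp := mem_filter.1 hp
    exact ⟨hp.2, (hS p hp.1).le⟩

variable {P Q : Measure (BitArray ι)} [IsFiniteMeasure P] {d : ℕ} {F : ι → Set (BitArray ι)}
  {θ : ℝ}

theorem exists_measure_iInter_lt_condExp_ne_zero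
    (hQ : ∀ j, ∀ C, MeasurableSet[bitSigma (lowFace j (d + 1))] C → P C = 0 → Q C = 0)
    (hF : ∀ j, MeasurableSet[bitSigma (lowFace j (d + 1))] (F j))
    (hpos : Q (⋂ j, F j) ≠ 0) (hθ : θ < 1) :
    ∃ S : Finset (ArrayIndex ι), (∀ p ∈ S, #(zeroSet p.2) = d + 1) ∧
      Q (⋂ j, {ω | θ < (P⟦F j | cylinderEvents
        ({p | zeroSet p.2 ∈ lowFace j d} ∪ faceIndices j S)⟧) ω}) ≠ 0 := by
  obtain ⟨S, hSmono, hSd, hSall⟩ :=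
    exists_monotone_finset_exhaustion {p : ArrayIndex ι | #(zeroSet p.2) = d + 1}
  let ℱ (j : ι) := cylinderFiltration {p : ArrayIndex ι | zeroSet p.2 ∈ lowFace j d}
    (fun n => faceIndices j (S n)) fun _ _ h => filter_subset_filter _ (hSmono h)
  have hℱ (j : ι) (n : ℕ) : ℱ j n ≤ bitSigma (lowFace j (d + 1)) :=
    cylinderEvents_mono (union_faceIndices_subset (fun p hp => hSd n hp) j)
  have hsup (j : ι) : bitSigma (lowFace j (d + 1)) ≤ ⨆ n, ℱ j n := by
    refine cylinderEvents_le_iSup_cylinderFiltration _ fun p hp => ?_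
    rcases Nat.lt_or_ge d #(zeroSet p.2) with h | h
    · obtain ⟨n, hn⟩ := hSall p (le_antisymm hp.2 h)
      exact Or.inr ⟨n, mem_filter.2 ⟨hn, hp.1⟩⟩
    · exact Or.inl ⟨hp.1, h⟩
  have hev (j : ι) :
      ∀ᵐ ω ∂Q, ω ∈ F j → ∀ᶠ n in Filter.atTop, θ < (P⟦F j | ℱ j n⟧) ω := by
    refine hQ j _ (MeasurableSet.compl (MeasurableSet.imp (hF j) ?_))
      (ae_mem_imp_eventually_lt_condExp (hsup j _ (hF j)) hθ)
    simp only [Filter.eventually_atTop, Set.ofPred_exists, Set.ofPred_forall]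
    exact .iUnion fun n => .iInter fun m => .iInter fun _ => hℱ j m _
      (measurableSet_lt measurable_const stronglyMeasurable_condExp.measurable)
  obtain ⟨n, hn⟩ := exists_measure_ne_zero_of_ae_eventually (P := Q) (A := ⋂ j, F j)
    (p := fun n ω => ∀ j, θ < (P⟦F j | ℱ j n⟧) ω) (by
      filter_upwards [ae_all_iff.2 hev] with ω hω hωF
      exact Filter.eventually_all.2 fun j => hω j (Set.mem_iInter.1 hωF j)) hpos
  refine ⟨S n, fun p hp => hSd n hp, ?_⟩
  rwa [Set.ofPred_forall] at hn

/-- Only finitely many bits with `d + 1` zeros matter up to a proportion `1 - θ`, by martingale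
convergence, and one of their finitely many patterns has positive `Q`-probability. -/
theorem exists_measure_iInter_denseEvent_ne_zero
    (hQ : ∀ j, ∀ C, MeasurableSet[bitSigma (lowFace j (d + 1))] C → P C = 0 → Q C = 0)
    (hF : ∀ j, MeasurableSet[bitSigma (lowFace j (d + 1))] (F j))
    (hpos : Q (⋂ j, F j) ≠ 0) (hθ : θ < 1) :
    ∃ (S : Finset (ArrayIndex ι)) (b : BitArray ι), (∀ p ∈ S, #(zeroSet p.2) = d + 1) ∧
      Q (⋂ j, denseEvent P (bitSigma (lowFace j d)) θ (F j)
        (pattern (faceIndices j S) b)) ≠ 0 := by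
  obtain ⟨S, hS, hS₀⟩ := exists_measure_iInter_lt_condExp_ne_zero hQ hF hpos hθ
  obtain ⟨b, hb⟩ := exists_measure_inter_pattern_ne_zero hS₀ S
  refine ⟨S, b, hS, fun h => hb (measure_mono_null_ae ?_ h)⟩
  have hmono (j : ι) : cylinderEvents ({p | zeroSet p.2 ∈ lowFace j d} ∪ faceIndices j S) ≤
      (bitSigma (lowFace j (d + 1)) : MeasurableSpace (BitArray ι)) :=
    cylinderEvents_mono (union_faceIndices_subset hS j)
  let G (j : ι) : Set (BitArray ι) := {ω | θ < (P⟦F j | cylinderEvents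
    ({p | zeroSet p.2 ∈ lowFace j d} ∪ faceIndices j S)⟧) ω} ∩ pattern (faceIndices j S) b
  have hG (j : ι) : MeasurableSet[bitSigma (lowFace j (d + 1))] (G j) :=
    MeasurableSet.inter
      (hmono j _ (measurableSet_lt measurable_const stronglyMeasurable_condExp.measurable))
      (hmono j _ (measurableSet_pattern Set.subset_union_right b))
  let D (j : ι) := denseEvent P (bitSigma (lowFace j d)) θ (F j) (pattern (faceIndices j S) b)
  have hD (j : ι) : MeasurableSet[bitSigma (lowFace j (d + 1))] (D j) :=
    bitSigma_mono (lowFace_mono j d.le_succ) _ (measurableSet_denseEvent P _ θ (F j) _)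
  have hnull (j : ι) : P (G j \ D j) = 0 :=
    measure_lt_condExp_inter_pattern_sdiff_denseEvent_eq_zero (P := P) (F := F j)
      {p | zeroSet p.2 ∈ lowFace j d} (faceIndices j S) b (bitSigma_le _ _ (hF j)) θ
  have hGD (j : ι) : G j ≤ᵐ[Q] D j :=
    ae_le_set.2 (hQ j _ (MeasurableSet.diff (hG j) (hD j)) (hnull j))
  filter_upwards [ae_all_iff.2 hGD] with ω hω hωb
  exact Set.mem_iInter.2 fun j => hω j
    ⟨Set.mem_iInter.1 hωb.1 j, fun p hp => hωb.2 p (mem_filter.1 hp).1⟩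

end FacePatterns

section ConditionalPositivity

variable {Ω : Type*} {m m₀ : MeasurableSpace Ω} {P : Measure Ω} [IsFiniteMeasure P]
  {A F K : Set Ω} {θ : ℝ}

theorem measure_inter_ne_zero_of_condExp_pos (hm : m ≤ m₀) (hA : MeasurableSet A)
    (hK : MeasurableSet[m] K) (hPK : P K ≠ 0) (hpos : ∀ᵐ ω ∂P, ω ∈ K → 0 < (P⟦A | m⟧) ω) :
    P (A ∩ K) ≠ 0 := by
  intro hnull
  have hint : ∫ ω in K, (P⟦A | m⟧) ω ∂P = 0 := by
    rw [setIntegral_condExp_indicator_one hm hA hK, measureReal_def, hnull, ENNReal.toReal_zero]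
  rw [setIntegral_eq_zero_iff_of_nonneg_ae (ae_restrict_of_ae (condExp_indicator_one_nonneg A m))
    integrable_condExp.integrableOn, Filter.EventuallyEq, ae_restrict_iff' (hm _ hK)] at hint
  refine hPK (measure_eq_zero_iff_ae_notMem.2 ?_)
  filter_upwards [hpos, hint] with ω h₁ h₂ hω
  exact (h₁ hω).ne' (h₂ hω)

theorem mul_measureReal_inter_le_of_le_condExp (hm : m ≤ m₀) (hA : MeasurableSet A)
    (hF : MeasurableSet F) (hK : MeasurableSet[m] K)
    (hθ : ∀ᵐ ω ∂P, ω ∈ K → θ * (P⟦A | m⟧) ω ≤ (P⟦F ∩ A | m⟧) ω) :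
    θ * P.real (A ∩ K) ≤ P.real (F ∩ A ∩ K) := by
  rw [← setIntegral_condExp_indicator_one hm hA hK,
    ← setIntegral_condExp_indicator_one hm (hF.inter hA) hK, ← integral_const_mul]
  exact setIntegral_mono_on_ae (integrable_condExp.const_mul θ).integrableOn
    integrable_condExp.integrableOn (hm _ hK) hθ

theorem ae_mem_denseEvent_imp_condExp_pos (hA : MeasurableSet A) (hF : MeasurableSet F)
    (m : MeasurableSpace Ω) (θ : ℝ) :
    ∀ᵐ ω ∂P, ω ∈ denseEvent P m θ F A → 0 < (P⟦A | m⟧) ω := by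
  have hle : P⟦F ∩ A | m⟧ ≤ᵐ[P] P⟦A | m⟧ :=
    condExp_mono (integrable_indicator_one (hF.inter hA)) (integrable_indicator_one hA)
      (ae_of_all _ (Set.indicator_le_indicator_of_subset Set.inter_subset_right
        fun _ => zero_le_one))
  filter_upwards [hle, condExp_indicator_one_nonneg A m] with ω hω hω₀ hmem
  refine lt_of_le_of_ne hω₀ fun h : 0 = (P⟦A | m⟧) ω => ?_
  have : θ * (P⟦A | m⟧) ω < (P⟦F ∩ A | m⟧) ω := hmem
  rw [← h, mul_zero] at this
  exact (this.trans_le hω).ne h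

theorem measure_iInter_ne_zero_of_mul_measureReal_le {ι : Type*} [Fintype ι]
    {F : ι → Set Ω} (hF : ∀ j, MeasurableSet (F j)) (hA : P A ≠ 0)
    (hFA : ∀ j, θ * P.real A ≤ P.real (F j ∩ A)) (hθ : Fintype.card ι * (1 - θ) < 1) :
    P (⋂ j, F j) ≠ 0 := by
  intro hnull
  have hsdiff (j : ι) : P.real (A \ F j) ≤ (1 - θ) * P.real A := by
    have h := measureReal_sdiff_add_inter (μ := P) (s := A) (hF j)
    rw [Set.inter_comm] at h
    linarith [hFA j]
  have hle : P.real A ≤ Fintype.card ι * (1 - θ) * P.real A := by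
    calc P.real A ≤ P.real ((⋂ j, F j) ∪ ⋃ j, A \ F j) := by
          refine measureReal_mono fun ω hω => ?_
          by_cases h : ∀ j, ω ∈ F j
          · exact Or.inl (Set.mem_iInter.2 h)
          · obtain ⟨j, hj⟩ := not_forall.1 h
            exact Or.inr (Set.mem_iUnion.2 ⟨j, hω, hj⟩)
      _ ≤ P.real (⋂ j, F j) + P.real (⋃ j, A \ F j) := measureReal_union_le _ _
      _ = P.real (⋃ j, A \ F j) := by rw [measureReal_def, hnull, ENNReal.toReal_zero, zero_add]
      _ ≤ ∑ j, P.real (A \ F j) := measureReal_iUnion_fintype_le _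
      _ ≤ ∑ _j : ι, (1 - θ) * P.real A := sum_le_sum fun j _ => hsdiff j
      _ = Fintype.card ι * (1 - θ) * P.real A := by
          rw [sum_const, card_univ, nsmul_eq_mul, mul_assoc]
  have hpos : 0 < P.real A := ENNReal.toReal_pos hA (measure_ne_top P A)
  exact hle.not_gt (mul_lt_of_lt_one_left hpos hθ)

theorem one_sub_le_measureReal_condExp_pos {Q : Measure Ω} [IsProbabilityMeasure P]
    [IsProbabilityMeasure Q] (hm : m ≤ m₀) (hF : MeasurableSet F) {a κ : ℝ} (hκ : 0 ≤ κ)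
    (hQ : ∀ C, MeasurableSet[m] C → Q.real C ≤ a * P.real (C ∩ F) + κ * P.real C) :
    1 - κ ≤ Q.real {ω | 0 < (P⟦F | m⟧) ω} := by
  set K : Set Ω := {ω | 0 < (P⟦F | m⟧) ω}
  have hK : MeasurableSet[m] K :=
    measurableSet_lt measurable_const stronglyMeasurable_condExp.measurable
  have hnull : P.real (Kᶜ ∩ F) = 0 := by
    refine le_antisymm ?_ measureReal_nonneg
    rw [Set.inter_comm, ← setIntegral_condExp_indicator_one hm hF hK.compl]
    exact setIntegral_nonpos (hm _ hK.compl) fun ω hω => not_lt.1 hω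
  have hcompl := hQ Kᶜ hK.compl
  rw [hnull, mul_zero, zero_add, probReal_compl_eq_one_sub (hm _ hK)] at hcompl
  linarith [mul_le_of_le_one_right hκ (measureReal_le_one (μ := P) (s := Kᶜ))]

end ConditionalPositivity

section InfinitaryRemoval

variable {ι : Type*} [Fintype ι] {P Q : Measure (BitArray ι)} [IsProbabilityMeasure P]
  {A : Finset ι → Set (BitArray ι)} {d : ℕ}

theorem condExp_biInter_bitSigma (hP : Exchangeable P)
    (hA : ∀ f, MeasurableSet[bitSigma {Z | Z ⊆ f}] (A f))
    {𝓕 : Finset (Finset ι)} (h𝓕 : ∀ f ∈ 𝓕, #f = d + 1) :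
    P⟦⋂ f ∈ 𝓕, A f | bitSigma {Z | #Z ≤ d}⟧ =ᵐ[P] fun ω =>
      ∏ f ∈ 𝓕, (P⟦A f | bitSigma {Z | #Z ≤ d}⟧) ω := by
  have huniv : P⟦Set.univ | bitSigma {Z : Finset ι | #Z ≤ d}⟧ = fun _ => 1 := by
    rw [Set.indicator_univ]
    exact condExp_const (bitSigma_le _) 1
  have h := condExp_inter_biInter_bitSigma hP hA h𝓕 MeasurableSet.univ
  simpa only [Set.univ_inter, huniv, mul_one] using h

variable [DecidableEq ι]

theorem condExp_bitSigma_lowFace (hP : Exchangeable P) (d : ℕ) {j : ι} {X : Set (BitArray ι)}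
    (hX : MeasurableSet[bitSigma {Z | Z ⊆ univ.erase j}] X) :
    P⟦X | bitSigma {Z | #Z ≤ d}⟧ =ᵐ[P] P⟦X | bitSigma (lowFace j d)⟧ := by
  have h := condExp_bitSigma hP (isLowerSet_card_le d) hX
  rwa [Set.inter_comm] at h

theorem biInter_powersetCard_univ (A : Finset ι → Set (BitArray ι)) (d : ℕ) (j : ι) :
    ⋂ f ∈ powersetCard d univ, A f = (⋂ f ∈ powersetCard d (univ.erase j), A f) ∩
      ⋂ f ∈ (powersetCard d univ).filter (j ∈ ·), A f := by
  ext ω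
  simp only [Set.mem_iInter, Set.mem_inter_iff, mem_filter, mem_powersetCard, subset_univ,
    true_and, subset_erase]
  exact ⟨fun h => ⟨fun f hf => h f hf.2, fun f hf => h f hf.1⟩, fun h f hf =>
    (em (j ∈ f)).elim (fun hj => h.2 f ⟨hf, hj⟩) fun hj => h.1 f ⟨hj, hf⟩⟩

theorem measurableSet_biInter_powersetCard_erase
    (hA : ∀ f, MeasurableSet[bitSigma {Z | Z ⊆ f}] (A f)) (d : ℕ) (j : ι) :
    MeasurableSet[bitSigma (lowFace j d)] (⋂ f ∈ powersetCard d (univ.erase j), A f) := by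
  refine MeasurableSet.biInter (Set.to_countable _) fun f hf => ?_
  obtain ⟨hfj, rfl⟩ := mem_powersetCard.1 hf
  have hle : {Z | Z ⊆ f} ⊆ lowFace j #f := fun Z hZ => ⟨hZ.trans hfj, card_le_card hZ⟩
  exact bitSigma_mono hle _ (hA f)

theorem condExp_inter_biInter_powersetCard (hP : Exchangeable P)
    (hA : ∀ f, MeasurableSet[bitSigma {Z | Z ⊆ f}] (A f)) {j : ι} {X : Set (BitArray ι)}
    (hX : MeasurableSet[bitSigma (lowFace j (d + 1))] X) :
    P⟦X ∩ ⋂ f ∈ powersetCard (d + 1) univ, A f | bitSigma {Z | #Z ≤ d}⟧ =ᵐ[P] fun ω =>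
      (∏ f ∈ (powersetCard (d + 1) univ).filter (j ∈ ·), (P⟦A f | bitSigma {Z | #Z ≤ d}⟧) ω) *
        (P⟦X ∩ ⋂ f ∈ powersetCard (d + 1) (univ.erase j), A f | bitSigma (lowFace j d)⟧) ω := by
  have hXA := MeasurableSet.inter hX (measurableSet_biInter_powersetCard_erase hA (d + 1) j)
  have hle : lowFace j (d + 1) ⊆
      {Z | #Z ≤ d + 1 ∧ Z ∉ (powersetCard (d + 1) univ).filter (j ∈ ·)} :=
    fun Z hZ => ⟨hZ.2, fun h => (subset_erase.1 hZ.1).2 (mem_filter.1 h).2⟩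
  have hprod := condExp_inter_biInter_bitSigma hP hA
    (𝓕 := (powersetCard (d + 1) univ).filter (j ∈ ·))
    (fun f hf => (mem_powersetCard.1 (mem_filter.1 hf).1).2)
    (bitSigma_mono hle _ hXA)
  rw [Set.inter_assoc, ← biInter_powersetCard_univ] at hprod
  filter_upwards [hprod, condExp_bitSigma_lowFace hP d (bitSigma_mono (fun Z hZ => hZ.1) _ hXA)]
    with ω h₁ h₂
  rw [h₁, h₂]

/-- Each `f` of size `d + 1` omits some `j`, so that `A f` is one of the factors of the
conditional probability on the face opposite to `j`. -/
theorem ae_condExp_pos_of_forall_face (hP : Exchangeable P) (hd : d + 2 ≤ Fintype.card ι)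
    (hA : ∀ f, MeasurableSet[bitSigma {Z | Z ⊆ f}] (A f)) :
    ∀ᵐ ω ∂P, (∀ j, 0 < (P⟦⋂ f ∈ powersetCard (d + 1) (univ.erase j), A f |
      bitSigma (lowFace j d)⟧) ω) →
      0 < (P⟦⋂ f ∈ powersetCard (d + 1) univ, A f | bitSigma {Z | #Z ≤ d}⟧) ω := by
  have hface (j : ι) := (condExp_bitSigma_lowFace hP d (bitSigma_mono (fun Z hZ => hZ.1) _
    (measurableSet_biInter_powersetCard_erase hA (d + 1) j))).symm.trans
    (condExp_biInter_bitSigma hP hA fun f hf => (mem_powersetCard.1 hf).2)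
  filter_upwards [condExp_biInter_bitSigma hP hA (𝓕 := powersetCard (d + 1) univ)
      fun f hf => (mem_powersetCard.1 hf).2, ae_all_iff.2 hface,
    ae_all_iff.2 fun f => condExp_indicator_one_nonneg (A f) (bitSigma {Z : Finset ι | #Z ≤ d})]
    with ω hall hface hnonneg hpos
  rw [hall]
  refine prod_pos fun f hf => (hnonneg f).lt_of_ne' ?_
  have hfcard := (mem_powersetCard.1 hf).2
  obtain ⟨j, hj⟩ : ∃ j, j ∉ f := by
    by_contra! h
    rw [eq_univ_of_forall h, card_univ] at hfcard
    omega
  have hne := (hpos j).ne'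
  rw [hface j] at hne
  exact prod_ne_zero_iff.1 hne f
    (mem_powersetCard.2 ⟨subset_erase.2 ⟨subset_univ f, hj⟩, hfcard⟩)

theorem measure_iInter_ne_zero_of_iInter_denseEvent (hP : Exchangeable P)
    (hd : d + 2 ≤ Fintype.card ι) (hA : ∀ f, MeasurableSet[bitSigma {Z | Z ⊆ f}] (A f))
    {F : ι → Set (BitArray ι)} (hF : ∀ j, MeasurableSet[bitSigma (lowFace j (d + 1))] (F j))
    {θ : ℝ} (hθ : Fintype.card ι * (1 - θ) < 1)
    (hK : P (⋂ j, denseEvent P (bitSigma (lowFace j d)) θ (F j)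
      (⋂ f ∈ powersetCard (d + 1) (univ.erase j), A f)) ≠ 0) :
    P (⋂ j, F j) ≠ 0 := by
  set K : Set (BitArray ι) := ⋂ j, denseEvent P (bitSigma (lowFace j d)) θ (F j)
    (⋂ f ∈ powersetCard (d + 1) (univ.erase j), A f)
  set U : Set (BitArray ι) := ⋂ f ∈ powersetCard (d + 1) univ, A f
  have hKm : MeasurableSet[bitSigma {Z | #Z ≤ d}] K := MeasurableSet.iInter fun j =>
    bitSigma_mono (fun Z hZ => hZ.2) _ (measurableSet_denseEvent P (bitSigma (lowFace j d)) θ _ _)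
  have hFm (j : ι) : MeasurableSet (F j) := bitSigma_le _ _ (hF j)
  have hUm : MeasurableSet U :=
    MeasurableSet.biInter (Set.to_countable _) fun f _ => bitSigma_le _ _ (hA f)
  have hUj (j : ι) : MeasurableSet (⋂ f ∈ powersetCard (d + 1) (univ.erase j), A f) :=
    bitSigma_le _ _ (measurableSet_biInter_powersetCard_erase hA (d + 1) j)
  have hUpos : P (U ∩ K) ≠ 0 := by
    refine measure_inter_ne_zero_of_condExp_pos (bitSigma_le _) hUm hKm hK ?_
    filter_upwards [ae_condExp_pos_of_forall_face hP hd hA, ae_all_iff.2 fun j =>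
      ae_mem_denseEvent_imp_condExp_pos (P := P) (hUj j) (hFm j) (bitSigma (lowFace j d)) θ]
      with ω hω hdense hωK
    exact hω fun j => hdense j (Set.mem_iInter.1 hωK j)
  have hprop (j : ι) : θ * P.real (U ∩ K) ≤ P.real (F j ∩ U ∩ K) := by
    refine mul_measureReal_inter_le_of_le_condExp (bitSigma_le _) hUm (hFm j) hKm ?_
    filter_upwards [condExp_inter_biInter_powersetCard hP hA (hF j),
      condExp_inter_biInter_powersetCard hP hA (j := j) MeasurableSet.univ,
      ae_all_iff.2 fun f => condExp_indicator_one_nonneg (A f) (bitSigma {Z : Finset ι | #Z ≤ d})]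
      with ω hFU hU hnonneg hωK
    rw [Set.univ_inter, Set.univ_inter] at hU
    rw [hU, hFU, mul_left_comm]
    exact mul_le_mul_of_nonneg_left (Set.mem_iInter.1 hωK j).le (prod_nonneg fun f _ => hnonneg f)
  exact measure_iInter_ne_zero_of_mul_measureReal_le hFm hUpos
    (fun j => (hprop j).trans_eq (by rw [Set.inter_assoc])) hθ

end InfinitaryRemoval

section InfinitaryRemoval

variable {ι : Type*} [Fintype ι] [DecidableEq ι] {P Q : Measure (BitArray ι)}
  [IsProbabilityMeasure P] {d : ℕ}

theorem pattern_faceIndices_eq_biInter {S : Finset (ArrayIndex ι)}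
    (hS : ∀ p ∈ S, #(zeroSet p.2) = d + 1) (b : BitArray ι) (j : ι) :
    pattern (faceIndices j S) b = ⋂ f ∈ powersetCard (d + 1) (univ.erase j),
      pattern (S.filter fun p => zeroSet p.2 = f) b := by
  ext ω
  simp only [pattern, faceIndices, Set.mem_iInter, mem_filter, mem_powersetCard]
  refine ⟨?_, fun h p hp => h _ ⟨hp.2, hS p hp.1⟩ p ⟨hp.1, rfl⟩⟩
  rintro h f ⟨hf, -⟩ p ⟨hp, rfl⟩
  exact h p ⟨hp, hf⟩

/-- The infinitary removal lemma. In the inductive step, martingale convergence replaces the events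
`F j` by events that depend on the bits with at most `d` zeros only. -/
theorem measure_iInter_ne_zero_of_face_absolutelyContinuous (hP : Exchangeable P)
    (hd : d + 2 ≤ Fintype.card ι)
    (hQ : ∀ j, ∀ C, MeasurableSet[bitSigma (lowFace j d)] C → P C = 0 → Q C = 0)
    {F : ι → Set (BitArray ι)} (hF : ∀ j, MeasurableSet[bitSigma (lowFace j d)] (F j))
    (hpos : Q (⋂ j, F j) ≠ 0) : P (⋂ j, F j) ≠ 0 := by
  induction d generalizing F with
  | zero =>
    obtain ⟨j⟩ : Nonempty ι := Fintype.card_pos_iff.1 (by omega)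
    have hle (i : ι) : lowFace i 0 ⊆ lowFace j 0 := fun Z hZ => by
      rw [card_eq_zero.1 (Nat.le_zero.1 hZ.2)]
      exact ⟨empty_subset _, le_rfl⟩
    exact fun h => hpos (hQ j _ (MeasurableSet.iInter fun i => bitSigma_mono (hle i) _ (hF i)) h)
  | succ d ih =>
    have hcard : (0 : ℝ) < Fintype.card ι := Nat.cast_pos.2 (by omega)
    obtain ⟨θ, hθ, hθ₁⟩ : ∃ θ : ℝ, Fintype.card ι * (1 - θ) < 1 ∧ θ < 1 := by
      refine ⟨1 - 1 / (2 * Fintype.card ι), ?_, sub_lt_self 1 (by positivity)⟩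
      field_simp
      norm_num
    obtain ⟨S, b, hS, hSb⟩ := exists_measure_iInter_denseEvent_ne_zero hQ hF hpos hθ₁
    have hK := ih (by omega)
      (fun j C hC => hQ j C (bitSigma_mono (lowFace_mono j d.le_succ) C hC))
      (fun j => measurableSet_denseEvent P (bitSigma (lowFace j d)) θ _ _) hSb
    simp_rw [pattern_faceIndices_eq_biInter hS b] at hK
    refine measure_iInter_ne_zero_of_iInter_denseEvent hP (by omega) (fun f => ?_) hF hθ hK
    exact measurableSet_pattern (fun p hp => (mem_filter.1 hp).2.subset) b

theorem measure_iInter_ne_zero_of_iInter_condExp_pos (hP : Exchangeable P)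
    (hd : Fintype.card ι = d + 2) {E : ι → Set (BitArray ι)}
    (hE : ∀ j, MeasurableSet[bitSigma {Z | Z ⊆ univ.erase j}] (E j))
    (hpos : P (⋂ j, {ω | 0 < (P⟦E j | bitSigma (lowFace j d)⟧) ω}) ≠ 0) :
    P (⋂ j, E j) ≠ 0 := by
  let A (f : Finset ι) : Set (BitArray ι) := ⋂ j, ⋂ _ : univ.erase j = f, E j
  have hA (f : Finset ι) : MeasurableSet[bitSigma {Z | Z ⊆ f}] (A f) := by
    refine MeasurableSet.iInter fun j => MeasurableSet.iInter fun h => ?_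
    subst h
    exact hE j
  have hAE (j : ι) : A (univ.erase j) = E j := by
    refine Set.Subset.antisymm
      (Set.iInter₂_subset (s := fun i (_ : univ.erase i = univ.erase j) => E i) j rfl)
      (Set.subset_iInter₂ fun i hi => ?_)
    rw [erase_injOn univ (mem_coe.2 (mem_univ i)) (mem_coe.2 (mem_univ j)) hi]
  have hcard : ∀ f ∈ univ.image fun j : ι => univ.erase j, #f = d + 1 := by
    intro f hf
    obtain ⟨j, -, rfl⟩ := mem_image.1 hf
    rw [card_erase_of_mem (mem_univ j), card_univ]
    omega
  have hI : ⋂ f ∈ univ.image fun j : ι => univ.erase j, A f = ⋂ j, E j := by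
    simp only [mem_image, mem_univ, true_and, Set.iInter_exists, Set.iInter_iInter_eq', hAE]
  have hprod := condExp_biInter_bitSigma hP hA hcard
  rw [hI] at hprod
  have hK : MeasurableSet[bitSigma {Z | #Z ≤ d}]
      (⋂ j, {ω | 0 < (P⟦E j | bitSigma (lowFace j d)⟧) ω}) :=
    MeasurableSet.iInter fun j => bitSigma_mono (fun Z hZ => hZ.2) _
      (measurableSet_lt measurable_const stronglyMeasurable_condExp.measurable)
  have hEpos := measure_inter_ne_zero_of_condExp_pos (bitSigma_le _)
    (MeasurableSet.iInter fun j => bitSigma_le _ _ (hE j)) hK hpos (by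
      filter_upwards [hprod, ae_all_iff.2 fun j => condExp_bitSigma_lowFace hP d (hE j)]
        with ω hω hface hωK
      rw [hω]
      refine prod_pos fun f hf => ?_
      obtain ⟨j, -, rfl⟩ := mem_image.1 hf
      rw [hAE, hface j]
      exact Set.mem_iInter.1 hωK j)
  exact fun h => hEpos (measure_mono_null Set.inter_subset_left h)

theorem measure_iInter_ne_zero_of_face_domination [IsProbabilityMeasure Q]
    (hι : 2 ≤ Fintype.card ι) (hP : Exchangeable P) {E : ι → Set (BitArray ι)}
    (hE : ∀ j, MeasurableSet[bitSigma {Z | Z ⊆ univ.erase j}] (E j)) {a κ : ℝ}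
    (hκ₀ : 0 ≤ κ) (hκ : Fintype.card ι * κ < 1)
    (hQ : ∀ j, ∀ C, MeasurableSet[bitSigma {Z | Z ⊂ univ.erase j}] C →
      Q.real C ≤ a * P.real (C ∩ E j) + κ * P.real C) :
    P (⋂ j, E j) ≠ 0 := by
  obtain ⟨d, hd⟩ : ∃ d, Fintype.card ι = d + 2 := ⟨_, (Nat.sub_add_cancel hι).symm⟩
  have hQ' (j : ι) (C : Set (BitArray ι)) (hC : MeasurableSet[bitSigma (lowFace j d)] C) :
      Q.real C ≤ a * P.real (C ∩ E j) + κ * P.real C :=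
    hQ j C (bitSigma_mono (lowFace_subset_ssubset hd.ge j) C hC)
  have hac (j : ι) (C : Set (BitArray ι)) (hC : MeasurableSet[bitSigma (lowFace j d)] C)
      (hPC : P C = 0) : Q C = 0 := by
    have h := hQ' j C hC
    rw [measureReal_def P, measureReal_def P, measure_mono_null Set.inter_subset_left hPC, hPC,
      ENNReal.toReal_zero, mul_zero, mul_zero, add_zero] at h
    exact (measureReal_eq_zero_iff).1 (h.antisymm measureReal_nonneg)
  have hF (j : ι) : MeasurableSet[bitSigma (lowFace j d)]
      {ω | 0 < (P⟦E j | bitSigma (lowFace j d)⟧) ω} :=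
    measurableSet_lt measurable_const stronglyMeasurable_condExp.measurable
  refine measure_iInter_ne_zero_of_iInter_condExp_pos hP hd hE
    (measure_iInter_ne_zero_of_face_absolutelyContinuous hP hd.ge hac hF
      (measure_iInter_ne_zero_of_mul_measureReal_le (fun j => bitSigma_le _ _ (hF j))
        (by rw [measure_univ]; exact one_ne_zero) (θ := 1 - κ) (fun j => ?_)
        (by rwa [sub_sub_cancel])))
  rw [probReal_univ, mul_one, Set.inter_univ]
  exact one_sub_le_measureReal_condExp_pos (bitSigma_le _) (bitSigma_le _ _ (hE j)) hκ₀ (hQ' j)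

end InfinitaryRemoval

section BoxTests

variable {ι α : Type*}

theorem dependsOn_apply_update [DecidableEq ι] {X : ι → Type*} {β : Type*} {f : (∀ i, X i) → β}
    {s : Set ι} (hf : DependsOn f s) {i : ι} (hi : i ∉ s) (x : ∀ i, X i) (a : X i) :
    f (Function.update x i a) = f x :=
  hf fun _ hk => Function.update_of_ne (ne_of_mem_of_not_mem hk hi) _ _

variable [Fintype ι] [DecidableEq ι]

/-- Test functions for the face opposite to `j`: products, over `i ≠ j`, of functions bounded by
`1` that depend neither on the `i`-th nor on the `j`-th coordinate. -/
def IsBoxTest (j : ι) (φ : (ι → α) → ℝ) : Prop :=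
  ∃ B : ι → (ι → α) → ℝ, (∀ i x, |B i x| ≤ 1) ∧ (∀ i, DependsOn (B i) {i, j}ᶜ) ∧
    φ = fun x => ∏ i ∈ univ.erase j, B i x

theorem isBoxTest_prod {κ : Type*} {j : ι} {S : Finset κ} {f : κ → (ι → α) → ℝ}
    (hf : ∀ p x, |f p x| ≤ 1) (hdep : ∀ p ∈ S, ∃ i ≠ j, DependsOn (f p) {i, j}ᶜ) :
    IsBoxTest j fun x => ∏ p ∈ S, f p x := by
  have : Nonempty ι := ⟨j⟩
  choose! c hcj hc using hdep
  refine ⟨fun i x => ∏ p ∈ S with c p = i, f p x, fun i x => ?_, fun i x y hxy => ?_, ?_⟩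
  · rw [abs_prod]
    exact prod_le_one (fun _ _ => abs_nonneg _) fun p _ => hf p x
  · refine prod_congr rfl fun p hp => ?_
    obtain ⟨hpS, rfl⟩ := mem_filter.1 hp
    exact hc p hpS hxy
  · funext x
    exact (prod_fiberwise_of_maps_to (fun p hp => mem_erase.2 ⟨hcj p hp, mem_univ _⟩) _).symm

end BoxTests

section FiniteCylinders

variable {κ β : Type*} [Fintype β]

theorem abs_expect_mul_indicator_le_of_cylinderEvents {S : Finset κ} {C : Set (κ → Bool)}
    (hC : MeasurableSet[cylinderEvents (S : Set κ)] C) {F : β → κ → Bool} {h : β → ℝ} {ε : ℝ}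
    (hε : ∀ b : κ → Bool, |𝔼 y, h y * ∏ p ∈ S, if F y p = b p then (1 : ℝ) else 0| ≤ ε) :
    |𝔼 y, h y * C.indicator (fun _ => 1) (F y)| ≤ 2 ^ #S * ε := by
  classical
  let extend (b : S → Bool) : κ → Bool := fun p => if hp : p ∈ S then b ⟨p, hp⟩ else false
  let atom (b ω : κ → Bool) : ℝ := ∏ p ∈ S, if ω p = b p then 1 else 0
  have hsum (ω : κ → Bool) : C.indicator (fun _ => (1 : ℝ)) ω =
      ∑ b, C.indicator (fun _ => 1) (extend b) * atom (extend b) ω := by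
    have hω : ∀ p ∈ S, ω p = extend (fun p => ω p) p := fun p hp => by simp [extend, hp]
    rw [Fintype.sum_eq_single (fun p : S => ω p)]
    · have hone : atom (extend fun p => ω p) ω = 1 := prod_eq_one fun p hp => if_pos (hω p hp)
      rw [hone, mul_one]
      simp only [Set.indicator, mem_iff_mem_of_measurableSet_cylinderEvents hC hω]
    · intro b hb
      obtain ⟨p, hp⟩ := Function.ne_iff.1 hb
      have hzero : atom (extend b) ω = 0 :=
        prod_eq_zero p.2 (if_neg fun h => hp (by simpa [extend] using h.symm))
      rw [hzero, mul_zero]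
  have hexpand : 𝔼 y, h y * C.indicator (fun _ => 1) (F y) =
      ∑ b, C.indicator (fun _ => 1) (extend b) * 𝔼 y, h y * atom (extend b) (F y) := by
    simp_rw [mul_expect, ← expect_sum_comm, mul_left_comm _ (h _), ← mul_sum, ← hsum]
  have hterm (b : S → Bool) : |C.indicator (fun _ => (1 : ℝ)) (extend b) *
      𝔼 y, h y * atom (extend b) (F y)| ≤ ε := by
    rw [abs_mul]
    refine (mul_le_of_le_one_left (abs_nonneg _) ?_).trans (hε (extend b))
    by_cases hb : extend b ∈ C <;> simp [hb]
  calc _ ≤ ∑ b, |C.indicator (fun _ => (1 : ℝ)) (extend b) *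
        𝔼 y, h y * atom (extend b) (F y)| := hexpand ▸ abs_sum_le_sum_abs _ _
    _ ≤ ∑ _b : S → Bool, ε := sum_le_sum fun b _ => hterm b
    _ = 2 ^ #S * ε := by simp

end FiniteCylinders

section ProductMeasures

open Measure

variable {ι : Type*}

theorem infinitePi_prod_map_piecewise {X : ι → Type*} [∀ i, MeasurableSpace (X i)]
    (m : ∀ i, Measure (X i)) [∀ i, IsProbabilityMeasure (m i)] (s : Set ι) [DecidablePred (· ∈ s)] :
    ((infinitePi m).prod (infinitePi m)).map (fun p => s.piecewise p.1 p.2) = infinitePi m := by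
  refine eq_infinitePi _ fun S t ht => ?_
  have hmeas : Measurable fun p : (∀ i, X i) × (∀ i, X i) => s.piecewise p.1 p.2 := by
    refine measurable_pi_iff.2 fun i => ?_
    by_cases hi : i ∈ s <;> simp only [Set.piecewise, hi, if_true, if_false] <;> fun_prop
  have hpre : (fun p : (∀ i, X i) × (∀ i, X i) => s.piecewise p.1 p.2) ⁻¹' (S : Set ι).pi t =
      (({i ∈ S | i ∈ s} : Finset ι) : Set ι).pi t ×ˢ
        (({i ∈ S | i ∉ s} : Finset ι) : Set ι).pi t := by
    ext p
    simp only [Set.mem_preimage, Set.mem_pi, Set.mem_prod, coe_filter, Set.mem_ofPred_eq, mem_coe,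
      Set.piecewise]
    grind
  rw [map_apply hmeas (.pi S.countable_toSet fun i _ => ht i), hpre, prod_prod,
    infinitePi_pi _ (fun i _ => ht i), infinitePi_pi _ (fun i _ => ht i),
    prod_filter_mul_prod_filter_not]

end ProductMeasures

section SampledArrays

variable {ι α : Type*}

/-- The array recording which of the points with coordinates `x (i, m i)` lie in which of the sets
`E j`. Here `x` is an infinite sample: `x (i, n)` is the value of coordinate `i` in row `n`. -/
noncomputable def sampleBits (E : ι → Set (ι → α)) (x : ι × ℕ → α) : BitArray ι :=
  fun p => (E p.1).boolIndicator fun i => x (i, p.2 i)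

/-- The sample `x` with its row `0` replaced by `y`. -/
def setZeroRow (y : ι → α) (x : ι × ℕ → α) : ι × ℕ → α :=
  fun p => if p.2 = 0 then y p.1 else x p

theorem measurable_sampleBits [Finite ι] [Finite α] [MeasurableSpace α]
    [MeasurableSingletonClass α] (E : ι → Set (ι → α)) : Measurable (sampleBits E) := by
  refine measurable_pi_iff.2 fun p => ?_
  have hpoint : Measurable fun (x : ι × ℕ → α) i => x (i, p.2 i) := by fun_prop
  exact (Measurable.of_discrete (f := (E p.1).boolIndicator)).comp hpoint

theorem dependsOn_sampleBits_setZeroRow [Fintype ι] (E : ι → Set (ι → α)) (x : ι × ℕ → α)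
    (p : ArrayIndex ι) :
    DependsOn (fun y => sampleBits E (setZeroRow y x) p) (zeroSet p.2 : Set ι) := by
  refine fun y y' hy => congrArg (E p.1).boolIndicator (funext fun i => ?_)
  by_cases hi : p.2 i = 0
  · simp [setZeroRow, hi, hy i (mem_coe.2 (mem_zeroSet.2 hi))]
  · simp [setZeroRow, hi]

variable [DecidableEq ι]

theorem zeroSet_single [Fintype ι] (j : ι) : zeroSet (Pi.single j 1 : ι → ℕ) = univ.erase j := by
  ext i
  rw [mem_zeroSet, mem_erase, and_iff_left (mem_univ i)]
  by_cases h : i = j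
  · subst h; simp
  · simp [h]

/-- The event that the sampled point lies in the `j`-th set, read off at an index with zero set
`univ.erase j`; for a set that does not depend on the `j`-th coordinate, row `0` decides it. -/
def faceEvent (j : ι) : Set (BitArray ι) := {ω | ω (j, Pi.single j 1) = true}

theorem measurableSet_cylinderEvents_faceEvent {j : ι} {Δ : Set (ArrayIndex ι)}
    (h : (j, Pi.single j 1) ∈ Δ) : MeasurableSet[cylinderEvents Δ] (faceEvent j) :=
  measurable_cylinderEvent_apply (X := fun _ : ArrayIndex ι => Bool) h
    (measurableSet_singleton true)

theorem measurableSet_faceEvent (j : ι) : MeasurableSet (faceEvent j) :=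
  cylinderEvents_le_pi _ (measurableSet_cylinderEvents_faceEvent (Set.mem_univ _))

theorem sampleBits_setZeroRow_mem_faceEvent {E : ι → Set (ι → α)} {j : ι}
    (hE : DependsOn (· ∈ E j) {j}ᶜ) (y : ι → α) (x : ι × ℕ → α) :
    sampleBits E (setZeroRow y x) ∈ faceEvent j ↔ y ∈ E j := by
  refine ((E j).mem_iff_boolIndicator _).symm.trans (hE fun i hi => ?_).to_iff
  simp [setZeroRow, Pi.single_eq_of_ne (Set.mem_compl_singleton_iff.1 hi)]

variable [Fintype ι]

/-- Each bit at a proper subface of `univ.erase j` misses some coordinate `i ≠ j` of row `0`, so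
that a product of such bits is a box test of row `0`. -/
theorem isBoxTest_prod_sampleBits (E : ι → Set (ι → α)) {j : ι} {S : Finset (ArrayIndex ι)}
    (hS : ∀ p ∈ S, zeroSet p.2 ⊂ univ.erase j) (b : BitArray ι) (x : ι × ℕ → α) :
    IsBoxTest j fun y => ∏ p ∈ S, if sampleBits E (setZeroRow y x) p = b p then (1 : ℝ) else 0 := by
  refine isBoxTest_prod (fun p y => by split_ifs <;> simp) fun p hp => ?_
  obtain ⟨i, hi, hip⟩ := exists_of_ssubset (hS p hp)
  have hsub : (zeroSet p.2 : Set ι) ⊆ {i, j}ᶜ := by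
    rintro k hk (rfl | rfl)
    exacts [hip hk, notMem_erase k univ ((hS p hp).1 hk)]
  exact ⟨i, ne_of_mem_erase hi, fun y y' hy =>
    if_congr (((dependsOn_sampleBits_setZeroRow E x p).mono hsub hy).congr_left) rfl rfl⟩

variable [Fintype α]

/-- The average of `w` over the zeroth rows `y` for which the array of `setZeroRow y x` is in `C`.
-/
noncomputable def zeroRowAverage (E : ι → Set (ι → α)) (w : (ι → α) → ℝ) (C : Set (BitArray ι))
    (x : ι × ℕ → α) : ℝ :=
  𝔼 y, w y * C.indicator (fun _ => 1) (sampleBits E (setZeroRow y x))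

theorem abs_zeroRowAverage_le (E : ι → Set (ι → α)) {j : ι} {S : Finset (ArrayIndex ι)}
    (hS : ∀ p ∈ S, zeroSet p.2 ⊂ univ.erase j) {C : Set (BitArray ι)}
    (hC : MeasurableSet[cylinderEvents (S : Set (ArrayIndex ι))] C) {h : (ι → α) → ℝ} {ε : ℝ}
    (hh : ∀ φ, IsBoxTest j φ → |𝔼 y, h y * φ y| ≤ ε) (x : ι × ℕ → α) :
    |zeroRowAverage E h C x| ≤ 2 ^ #S * ε :=
  abs_expect_mul_indicator_le_of_cylinderEvents hC fun b =>
    hh _ (isBoxTest_prod_sampleBits E hS b x)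

theorem zeroRowAverage_le_inter_faceEvent_add {E : ι → Set (ι → α)} {g : (ι → α) → ℝ} {κ : ℝ}
    {j : ι} (hE : DependsOn (· ∈ E j) {j}ᶜ) (hκ : 0 ≤ κ) (hg : ∀ y, g y ≤ 1)
    (hgE : ∀ y ∉ E j, g y ≤ κ) (C : Set (BitArray ι)) (x : ι × ℕ → α) :
    zeroRowAverage E g C x ≤
      zeroRowAverage E 1 (C ∩ faceEvent j) x + κ * zeroRowAverage E 1 C x := by
  simp only [zeroRowAverage, mul_expect, ← expect_add_distrib]
  refine expect_le_expect fun y _ => ?_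
  have hmem := sampleBits_setZeroRow_mem_faceEvent hE y x
  by_cases hC : sampleBits E (setZeroRow y x) ∈ C
  · by_cases hy : y ∈ E j
    · simpa [hC, hmem.2 hy] using (hg y).trans (le_add_of_nonneg_right hκ)
    · simpa [hC, mt hmem.1 hy] using hgE y hy
  · simp [hC]

theorem mul_zeroRowAverage_iInter_faceEvent_le {E : ι → Set (ι → α)} {g : ι → (ι → α) → ℝ} {κ : ℝ}
    (hE : ∀ j, DependsOn (· ∈ E j) {j}ᶜ) (hκ : 0 ≤ κ) (hg : ∀ j y, 0 ≤ g j y)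
    (hgE : ∀ j, ∀ y ∈ E j, κ ≤ g j y) (x : ι × ℕ → α) :
    κ ^ Fintype.card ι * zeroRowAverage E 1 (⋂ j, faceEvent j) x ≤ 𝔼 y, ∏ j, g j y := by
  rw [zeroRowAverage, mul_expect]
  refine expect_le_expect fun y _ => ?_
  by_cases hy : sampleBits E (setZeroRow y x) ∈ ⋂ j, faceEvent j
  · rw [Set.indicator_of_mem hy, Pi.one_apply, mul_one, mul_one, ← card_univ, ← prod_const]
    exact prod_le_prod (fun _ _ => hκ) fun j _ => hgE j y
      ((sampleBits_setZeroRow_mem_faceEvent (hE j) y x).1 (Set.mem_iInter.1 hy j))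
  · rw [Set.indicator_of_notMem hy, mul_zero, mul_zero]
    exact prod_nonneg fun j _ => hg j y

end SampledArrays

section SampleLaw

open Measure

variable {ι α : Type*} [MeasurableSpace α]

theorem measurable_setZeroRow :
    Measurable fun p : (ι → α) × (ι × ℕ → α) => setZeroRow p.1 p.2 := by
  refine measurable_pi_iff.2 fun q => ?_
  by_cases hq : q.2 = 0 <;> simp only [setZeroRow, hq, if_true, if_false] <;> fun_prop

theorem measurable_zeroRow_weight [Finite ι] [Finite α] [MeasurableSingletonClass α]
    (w : (ι → α) → ℝ) : Measurable fun x : ι × ℕ → α => w fun i => x (i, 0) :=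
  (Measurable.of_discrete (f := w)).comp (by fun_prop)

variable [Fintype α] [Nonempty α]

variable (ι α) in
/-- The law of an infinite sample with independent uniform entries. -/
noncomputable abbrev uniformSample : Measure (ι × ℕ → α) :=
  infinitePi fun _ => (PMF.uniformOfFintype α).toMeasure

/-- The law of the array of a sample whose row `0` has density `w` with respect to the uniform
measure, while the remaining entries are uniform. -/
noncomputable def sampleLaw (E : ι → Set (ι → α)) (w : (ι → α) → ℝ) : Measure (BitArray ι) :=
  ((uniformSample ι α).withDensity fun x => ENNReal.ofReal (w fun i => x (i, 0))).map (sampleBits E)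

theorem map_setZeroRow_infinitePi :
    ((infinitePi fun _ : ι => (PMF.uniformOfFintype α).toMeasure).prod (uniformSample ι α)).map
      (fun p => setZeroRow p.1 p.2) = uniformSample ι α := by
  have hrow : (uniformSample ι α).map (fun x i => x (i, 0)) =
      infinitePi fun _ : ι => (PMF.uniformOfFintype α).toMeasure :=
    map_infinitePi_infinitePi_of_inj fun i i' h => congrArg Prod.fst h
  have hpiece : (fun p : (ι → α) × (ι × ℕ → α) => setZeroRow p.1 p.2) ∘
        Prod.map (fun x i => x (i, 0)) id =
      fun p => {q : ι × ℕ | q.2 = 0}.piecewise p.1 p.2 := by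
    ext p ⟨i, n⟩
    by_cases hn : n = 0 <;> simp [setZeroRow, Set.piecewise, hn]
  have hprod := map_prod_map (uniformSample ι α) (uniformSample ι α)
    (f := fun x i => x (i, 0)) (g := id) (by fun_prop) measurable_id
  rw [hrow, Measure.map_id] at hprod
  rw [hprod, map_map measurable_setZeroRow (by fun_prop), hpiece, infinitePi_prod_map_piecewise]

theorem sampleLaw_one (E : ι → Set (ι → α)) :
    sampleLaw E 1 = (uniformSample ι α).map (sampleBits E) := by
  simp only [sampleLaw, Pi.one_apply, ENNReal.ofReal_one]
  rw [← Pi.one_def, withDensity_one]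

variable [MeasurableSingletonClass α]

theorem exchangeable_sampleLaw_one [Finite ι] (E : ι → Set (ι → α)) :
    Exchangeable (sampleLaw E 1) := by
  intro T hT
  have hinj : Function.Injective fun p : ι × ℕ => (p.1, T p.1 p.2) := by
    rintro ⟨i, m⟩ ⟨i', m'⟩ h
    obtain ⟨rfl, h⟩ := Prod.mk.inj h
    exact congrArg (Prod.mk i) (hT i h)
  have hreindex : (uniformSample ι α).map (fun x p => x (p.1, T p.1 p.2)) = uniformSample ι α :=
    map_infinitePi_infinitePi_of_inj hinj
  have hbits := measurable_sampleBits (α := α) E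
  rw [sampleLaw_one, map_map (measurable_relabelRows T) hbits]
  conv_rhs => rw [← hreindex, map_map hbits (by fun_prop)]
  rfl

section ZerothRow

variable [Finite ι] (E : ι → Set (ι → α)) (w : (ι → α) → ℝ) {C : Set (BitArray ι)}

theorem integrable_mul_indicator_sampleBits (hC : MeasurableSet C) :
    Integrable (fun x => (w fun i => x (i, 0)) * C.indicator (fun _ => (1 : ℝ)) (sampleBits E x))
      (uniformSample ι α) := by
  obtain ⟨M, hM⟩ := (Set.finite_range fun y => |w y|).bddAbove
  refine .of_bound (C := M) (((measurable_zeroRow_weight w).mul ((measurable_const.indicator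
    hC).comp (measurable_sampleBits E))).aestronglyMeasurable) (ae_of_all _ fun x => ?_)
  have hwM := hM (Set.mem_range_self fun i => x (i, 0))
  by_cases h : sampleBits E x ∈ C
  · simpa [h] using hwM
  · simpa [h] using (abs_nonneg _).trans hwM

variable {w} in
theorem measureReal_sampleLaw (hw : ∀ y, 0 ≤ w y) (hC : MeasurableSet C) :
    (sampleLaw E w).real C = ∫ x, (w fun i => x (i, 0)) *
      C.indicator (fun _ => 1) (sampleBits E x) ∂uniformSample ι α := by
  rw [← integral_indicator_one hC, sampleLaw, integral_map (measurable_sampleBits E).aemeasurable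
    (measurable_one.indicator hC).aestronglyMeasurable,
    integral_withDensity_eq_integral_toReal_smul (measurable_zeroRow_weight w).ennreal_ofReal
      (by simp)]
  simp_rw [ENNReal.toReal_ofReal (hw _), smul_eq_mul]
  rfl

end ZerothRow

variable [Fintype ι] [DecidableEq ι]

theorem integral_infinitePi_uniformOfFintype (f : (ι → α) → ℝ) :
    ∫ y, f y ∂(infinitePi fun _ => (PMF.uniformOfFintype α).toMeasure) = 𝔼 y, f y := by
  have hreal (y : ι → α) : (infinitePi fun _ : ι => (PMF.uniformOfFintype α).toMeasure).real {y} =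
      (Fintype.card (ι → α) : ℝ)⁻¹ := by
    simp [measureReal_def, PMF.toMeasure_apply_singleton _ _ (measurableSet_singleton _)]
  rw [integral_fintype .of_finite, Fintype.expect_eq_sum_div_card, sum_div]
  exact sum_congr rfl fun y _ => by rw [hreal, smul_eq_mul, inv_mul_eq_div]

/-- Resampling row `0` does not change the law of the sample. -/
theorem measureReal_sampleLaw_eq_integral_zeroRowAverage (E : ι → Set (ι → α)) {w : (ι → α) → ℝ}
    (hw : ∀ y, 0 ≤ w y) {C : Set (BitArray ι)} (hC : MeasurableSet C) :
    Integrable (zeroRowAverage E w C) (uniformSample ι α) ∧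
      (sampleLaw E w).real C = ∫ x, zeroRowAverage E w C x ∂uniformSample ι α := by
  let F (x : ι × ℕ → α) := (w fun i => x (i, 0)) * C.indicator (fun _ => (1 : ℝ)) (sampleBits E x)
  have hF : Integrable F (uniformSample ι α) := integrable_mul_indicator_sampleBits E w hC
  have hinner (x : ι × ℕ → α) : ∫ y, F (setZeroRow y x)
      ∂(infinitePi fun _ => (PMF.uniformOfFintype α).toMeasure) = zeroRowAverage E w C x := by
    simp [integral_infinitePi_uniformOfFintype, F, setZeroRow, zeroRowAverage]
  rw [measureReal_sampleLaw E hw hC]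
  change _ ∧ ∫ x, F x ∂_ = _
  rw [← map_setZeroRow_infinitePi] at hF
  have hFprod := (integrable_map_measure hF.1 measurable_setZeroRow.aemeasurable).1 hF
  rw [← funext hinner]
  refine ⟨hFprod.integral_prod_right, ?_⟩
  conv_lhs => rw [← map_setZeroRow_infinitePi]
  rw [integral_map measurable_setZeroRow.aemeasurable hF.1]
  exact integral_prod_symm _ hFprod

theorem isProbabilityMeasure_sampleLaw (E : ι → Set (ι → α)) {w : (ι → α) → ℝ}
    (hw : ∀ y, 0 ≤ w y) (hw₁ : 𝔼 y, w y = 1) : IsProbabilityMeasure (sampleLaw E w) := by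
  have h := (measureReal_sampleLaw_eq_integral_zeroRowAverage E hw .univ).2
  simp only [zeroRowAverage, Set.indicator_univ, mul_one, hw₁, integral_const, measureReal_def,
    measure_univ, ENNReal.toReal_one, one_smul] at h
  exact ⟨(ENNReal.toReal_eq_one_iff _).1 h⟩

theorem mul_measureReal_sampleLaw_le {E : ι → Set (ι → α)} {lam g : (ι → α) → ℝ} {δ κ ε : ℝ}
    {j : ι} (hE : DependsOn (· ∈ E j) {j}ᶜ) (hκ : 0 ≤ κ) (hlam : ∀ y, 0 ≤ lam y)
    (hg : ∀ y, g y ≤ 1) (hgE : ∀ y ∉ E j, g y ≤ κ)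
    (htest : ∀ φ, IsBoxTest j φ → |𝔼 y, (δ * lam y - g y) * φ y| ≤ ε)
    {S : Finset (ArrayIndex ι)} (hS : ∀ p ∈ S, zeroSet p.2 ⊂ univ.erase j) {C : Set (BitArray ι)}
    (hC : MeasurableSet[cylinderEvents (S : Set (ArrayIndex ι))] C) :
    δ * (sampleLaw E lam).real C ≤
      (sampleLaw E 1).real (C ∩ faceEvent j) + κ * (sampleLaw E 1).real C + 2 ^ #S * ε := by
  have hC₀ := cylinderEvents_le_pi _ hC
  obtain ⟨hQint, hQ⟩ := measureReal_sampleLaw_eq_integral_zeroRowAverage E hlam hC₀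
  obtain ⟨hPint, hP⟩ := measureReal_sampleLaw_eq_integral_zeroRowAverage E (w := 1)
    (fun _ => zero_le_one) hC₀
  obtain ⟨hFint, hF⟩ := measureReal_sampleLaw_eq_integral_zeroRowAverage E (w := 1)
    (fun _ => zero_le_one) (hC₀.inter (measurableSet_faceEvent j))
  have hpoint (x : ι × ℕ → α) : δ * zeroRowAverage E lam C x ≤
      zeroRowAverage E 1 (C ∩ faceEvent j) x + κ * zeroRowAverage E 1 C x + 2 ^ #S * ε := by
    have hsub : zeroRowAverage E (fun y => δ * lam y - g y) C x =
        δ * zeroRowAverage E lam C x - zeroRowAverage E g C x := by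
      simp only [zeroRowAverage, mul_expect, ← expect_sub_distrib, sub_mul, mul_assoc]
    have htest' := (abs_le.1 (abs_zeroRowAverage_le E hS hC htest x)).2
    linarith [zeroRowAverage_le_inter_faceEvent_add hE hκ hg hgE C x]
  have hPFint : Integrable (fun x => zeroRowAverage E 1 (C ∩ faceEvent j) x +
      κ * zeroRowAverage E 1 C x) (uniformSample ι α) := hFint.add (hPint.const_mul κ)
  have hmono := integral_mono (hQint.const_mul δ) (hPFint.add (integrable_const (2 ^ #S * ε)))
    hpoint
  simp only [Pi.add_apply] at hmono
  rwa [integral_const_mul, integral_add hPFint (integrable_const _),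
    integral_add hFint (hPint.const_mul κ), integral_const_mul, integral_const, probReal_univ,
    one_smul, ← hQ, ← hF, ← hP] at hmono

theorem mul_measureReal_sampleLaw_iInter_le {E : ι → Set (ι → α)} {g : ι → (ι → α) → ℝ} {κ : ℝ}
    (hE : ∀ j, DependsOn (· ∈ E j) {j}ᶜ) (hκ : 0 ≤ κ) (hg : ∀ j y, 0 ≤ g j y)
    (hgE : ∀ j, ∀ y ∈ E j, κ ≤ g j y) :
    κ ^ Fintype.card ι * (sampleLaw E 1).real (⋂ j, faceEvent j) ≤ 𝔼 y, ∏ j, g j y := by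
  obtain ⟨hint, h⟩ := measureReal_sampleLaw_eq_integral_zeroRowAverage E (w := 1)
    (fun _ => zero_le_one) (.iInter measurableSet_faceEvent)
  rw [h, ← integral_const_mul]
  refine (integral_mono (hint.const_mul _) (integrable_const _)
    (mul_zeroRowAverage_iInter_faceEvent_le hE hκ hg hgE)).trans_eq ?_
  simp

end SampleLaw

section LimitsOfArrays

open Filter Topology

variable {κ : Type*}

theorem measureReal_le_of_finite_cylinderEvents (Δ : Set κ) (μ ν : Measure (κ → Bool))
    [IsFiniteMeasure μ] [IsFiniteMeasure ν]
    (h : ∀ S : Finset κ, ↑S ⊆ Δ → ∀ C, MeasurableSet[cylinderEvents (S : Set κ)] C →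
      μ.real C ≤ ν.real C) {C : Set (κ → Bool)} (hC : MeasurableSet[cylinderEvents Δ] C) :
    μ.real C ≤ ν.real C := by
  refine le_of_forall_pos_le_add fun ε hε => ?_
  obtain ⟨S, hS, C', hC', hlt⟩ := exists_finset_cylinderEvents_measure_symmDiff_lt Δ (μ + ν) hC hε
  rw [measureReal_add_apply] at hlt
  have hle (ρ : Measure (κ → Bool)) [IsFiniteMeasure ρ] {A B : Set (κ → Bool)} :
      ρ.real A ≤ ρ.real B + ρ.real (symmDiff A B) := by
    refine (measureReal_mono fun ω hω => ?_).trans (measureReal_union_le B (symmDiff A B))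
    by_cases hB : ω ∈ B
    exacts [.inl hB, .inr (.inl ⟨hω, hB⟩)]
  have hμ := hle μ (A := C) (B := C')
  have hν := hle ν (A := C') (B := C)
  rw [symmDiff_comm] at hν
  linarith [h S hS C' hC']

theorem isClopen_of_measurableSet_cylinderEvents {S : Finset κ} {C : Set (κ → Bool)}
    (hC : MeasurableSet[cylinderEvents (S : Set κ)] C) : IsClopen C := by
  have hsat : C = S.restrict ⁻¹' (S.restrict '' C) := by
    refine (Set.subset_preimage_image _ _).antisymm ?_
    rintro ω ⟨ω', hω', h⟩
    exact (mem_iff_mem_of_measurableSet_cylinderEvents hC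
      fun p hp => congrFun h ⟨p, hp⟩).1 hω'
  rw [hsat]
  exact (isClopen_discrete _).preimage (Finset.continuous_restrict S)

variable {I : Type*} {l : Filter I} {Ps Qs : I → ProbabilityMeasure (κ → Bool)}
  {P Q : ProbabilityMeasure (κ → Bool)}

theorem tendsto_measureReal_of_cylinderEvents [Countable κ] (hP : Tendsto Ps l (𝓝 P))
    {S : Finset κ} {C : Set (κ → Bool)} (hC : MeasurableSet[cylinderEvents (S : Set κ)] C) :
    Tendsto (fun n => (Ps n : Measure (κ → Bool)).real C) l
      (𝓝 ((P : Measure (κ → Bool)).real C)) := by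
  refine (ENNReal.tendsto_toReal (measure_ne_top _ _)).comp
    (ProbabilityMeasure.tendsto_measure_of_null_frontier_of_tendsto' hP ?_)
  rw [(isClopen_of_measurableSet_cylinderEvents hC).frontier_eq, measure_empty]

theorem mul_measureReal_le_of_tendsto [Countable κ] [l.NeBot] (hP : Tendsto Ps l (𝓝 P))
    (hQ : Tendsto Qs l (𝓝 Q)) {F : Set (κ → Bool)} {T : Finset κ}
    (hF : MeasurableSet[cylinderEvents (T : Set κ)] F) {Δ : Set κ} {δ κ₀ : ℝ} (hδ : 0 ≤ δ)
    (hκ₀ : 0 ≤ κ₀) {η : I → ℝ} (hη : Tendsto η l (𝓝 0))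
    (h : ∀ n, ∀ S : Finset κ, ↑S ⊆ Δ → ∀ C, MeasurableSet[cylinderEvents (S : Set κ)] C →
      δ * (Qs n : Measure (κ → Bool)).real C ≤ (Ps n : Measure (κ → Bool)).real (C ∩ F) +
        κ₀ * (Ps n : Measure (κ → Bool)).real C + 2 ^ #S * η n)
    {C : Set (κ → Bool)} (hC : MeasurableSet[cylinderEvents Δ] C) :
    δ * (Q : Measure (κ → Bool)).real C ≤ (P : Measure (κ → Bool)).real (C ∩ F) +
      κ₀ * (P : Measure (κ → Bool)).real C := by
  classical
  lift δ to NNReal using hδ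
  lift κ₀ to NNReal using hκ₀
  have hcyl (S : Finset κ) (hS : ↑S ⊆ Δ) (C) (hC : MeasurableSet[cylinderEvents (S : Set κ)] C) :
      δ * (Q : Measure (κ → Bool)).real C ≤ (P : Measure (κ → Bool)).real (C ∩ F) +
        κ₀ * (P : Measure (κ → Bool)).real C := by
    have hCF : MeasurableSet[cylinderEvents ((S ∪ T : Finset κ) : Set κ)] (C ∩ F) :=
      MeasurableSet.inter (cylinderEvents_mono (by simp) _ hC) (cylinderEvents_mono (by simp) _ hF)
    refine le_of_tendsto_of_tendsto' ((tendsto_measureReal_of_cylinderEvents hQ hC).const_mul _)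
      (?_ : Tendsto _ l _) (h · S hS C hC)
    simpa using ((tendsto_measureReal_of_cylinderEvents hP hCF).add
      ((tendsto_measureReal_of_cylinderEvents hP hC).const_mul _)).add (hη.const_mul (2 ^ #S))
  have hmeas {C} (hC : MeasurableSet C) : ((P : Measure (κ → Bool)).restrict F +
      κ₀ • (P : Measure (κ → Bool))).real C = (P : Measure (κ → Bool)).real (C ∩ F) +
        κ₀ * (P : Measure (κ → Bool)).real C := by
    rw [measureReal_add_apply, measureReal_restrict_apply hC, measureReal_nnreal_smul_apply]
  have hle := measureReal_le_of_finite_cylinderEvents Δ (δ • (Q : Measure (κ → Bool)))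
    ((P : Measure (κ → Bool)).restrict F + κ₀ • (P : Measure (κ → Bool)))
    (fun S hS C hC => by
      rw [measureReal_nnreal_smul_apply, hmeas (cylinderEvents_le_pi _ hC)]
      exact hcyl S hS C hC) hC
  rwa [measureReal_nnreal_smul_apply, hmeas (cylinderEvents_le_pi _ hC)] at hle

theorem Exchangeable.of_tendsto {ι : Type*} [Finite ι] [l.NeBot]
    {Ps : I → ProbabilityMeasure (BitArray ι)} {P : ProbabilityMeasure (BitArray ι)}
    (hP : Tendsto Ps l (𝓝 P)) (h : ∀ n, Exchangeable (Ps n : Measure (BitArray ι))) :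
    Exchangeable (P : Measure (BitArray ι)) := by
  intro T hT
  have hcont : Continuous (relabelRows T : BitArray ι → BitArray ι) := by
    unfold relabelRows
    fun_prop
  have hmap := ProbabilityMeasure.tendsto_map_of_tendsto_of_continuous Ps P hP hcont
  have hfix (n : I) : (Ps n).map hcont.aemeasurable = Ps n := Subtype.ext (h n T hT)
  simp only [hfix] at hmap
  exact congrArg (fun R : ProbabilityMeasure (BitArray ι) => (R : Measure (BitArray ι)))
    (tendsto_nhds_unique hmap hP)

end LimitsOfArrays

section MeasureRemoval

open Filter Topology

variable {ι : Type*} [Fintype ι] [DecidableEq ι]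

/-- The conclusion of the removal statement at the parameters `δ`, `c` and `ε`: if `δ * lam - g j`
correlates with no box test of the face opposite to `j`, then the average of `∏ j, g j` is at
least `c`. -/
def RemovalHolds (ι : Type*) [Fintype ι] [DecidableEq ι] (δ c ε : ℝ) : Prop :=
  ∀ (α : Type) [Fintype α] [Nonempty α] (lam : (ι → α) → ℝ) (g : ι → (ι → α) → ℝ),
    (∀ y, 0 ≤ lam y) → 𝔼 y, lam y = 1 → (∀ j y, 0 ≤ g j y) → (∀ j y, g j y ≤ 1) →
    (∀ j, DependsOn (g j) {j}ᶜ) →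
    (∀ j φ, IsBoxTest j φ → |𝔼 y, (δ * lam y - g j y) * φ y| ≤ ε) → c ≤ 𝔼 y, ∏ j, g j y

theorem exists_laws_of_not_removalHolds {δ c ε κ : ℝ} (hκ : 0 ≤ κ) (h : ¬RemovalHolds ι δ c ε) :
    ∃ P Q : ProbabilityMeasure (BitArray ι), Exchangeable (P : Measure (BitArray ι)) ∧
      (∀ j, ∀ S : Finset (ArrayIndex ι), (∀ p ∈ S, zeroSet p.2 ⊂ univ.erase j) → ∀ C,
        MeasurableSet[cylinderEvents (S : Set (ArrayIndex ι))] C →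
        δ * (Q : Measure (BitArray ι)).real C ≤ (P : Measure (BitArray ι)).real (C ∩ faceEvent j) +
          κ * (P : Measure (BitArray ι)).real C + 2 ^ #S * ε) ∧
      κ ^ Fintype.card ι * (P : Measure (BitArray ι)).real (⋂ j, faceEvent j) ≤ c := by
  unfold RemovalHolds at h
  push Not at h
  obtain ⟨α, _, _, lam, g, hlam, hlam₁, hg₀, hg₁, hgdep, htest, hlt⟩ := h
  let _ : MeasurableSpace α := ⊤
  have : DiscreteMeasurableSpace α := ⟨fun _ => trivial⟩
  let E (j : ι) : Set (ι → α) := {y | κ < g j y}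
  have hE (j : ι) : DependsOn (· ∈ E j) {j}ᶜ := fun y y' hy =>
    congrArg (κ < ·) (hgdep j hy)
  refine ⟨⟨sampleLaw E 1, isProbabilityMeasure_sampleLaw E (fun _ => zero_le_one)
    (Fintype.expect_const 1)⟩, ⟨sampleLaw E lam, isProbabilityMeasure_sampleLaw E hlam hlam₁⟩,
    exchangeable_sampleLaw_one E, fun j S hS C hC => ?_, ?_⟩
  · exact mul_measureReal_sampleLaw_le (hE j) hκ hlam (hg₁ j) (fun y hy => not_lt.1 hy) (htest j)
      hS hC
  · exact (mul_measureReal_sampleLaw_iInter_le hE hκ hg₀ fun j y hy => hy.le).trans hlt.le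

/-- If the removal statement failed at every scale, the laws of the sampled arrays of the
counterexamples would accumulate at a pair of laws contradicting infinitary removal. -/
theorem exists_removalHolds (hι : 2 ≤ Fintype.card ι) {δ : ℝ} (hδ : 0 < δ) :
    ∃ c > 0, ∃ ε > 0, RemovalHolds ι δ c ε := by
  by_contra! hcon
  -- Level sets are cut at `κ`, small enough that the loss `card ι * κ / δ = 1 / 2` is below `1`.
  set κ : ℝ := δ / (2 * Fintype.card ι)
  have hκ : 0 < κ := by positivity
  let η (n : ℕ) : ℝ := 1 / ((n : ℝ) + 1)
  have hη (n : ℕ) : 0 < η n := Nat.one_div_pos_of_nat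
  choose Ps Qs hexch hdom hinter using fun n : ℕ =>
    exists_laws_of_not_removalHolds hκ.le (hcon (η n) (hη n) (η n) (hη n))
  obtain ⟨P, -, hP⟩ := isCompact_univ.ultrafilter_le_nhds ((hyperfilter ℕ).map Ps) (by simp)
  obtain ⟨Q, -, hQ⟩ := isCompact_univ.ultrafilter_le_nhds ((hyperfilter ℕ).map Qs) (by simp)
  have hη₀ : Tendsto η (hyperfilter ℕ) (𝓝 0) :=
    tendsto_one_div_add_atTop_nhds_zero_nat.mono_left Nat.hyperfilter_le_atTop
  have hne := measure_iInter_ne_zero_of_face_domination (P := (P : Measure (BitArray ι)))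
    (Q := (Q : Measure (BitArray ι))) (E := faceEvent) (a := 1 / δ) (κ := κ / δ) hι
    (Exchangeable.of_tendsto hP hexch)
    (fun j => measurableSet_cylinderEvents_faceEvent (by simp [zeroSet_single])) (by positivity)
    (by simp only [κ]; field_simp; norm_num) (fun j C hC => by
      have h := mul_measureReal_le_of_tendsto hP hQ (T := {(j, Pi.single j 1)})
        (measurableSet_cylinderEvents_faceEvent (j := j) (by simp)) hδ.le hκ.le hη₀
        (fun n S hS => hdom n j S hS) hC
      rwa [one_div_mul_eq_div, div_mul_eq_mul_div, ← add_div, le_div_iff₀' hδ])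
  have hzero : κ ^ Fintype.card ι * (P : Measure (BitArray ι)).real (⋂ j, faceEvent j) ≤ 0 :=
    le_of_tendsto_of_tendsto' ((tendsto_measureReal_of_cylinderEvents hP
      (S := univ.image fun j => (j, Pi.single j 1)) (.iInter fun j =>
        measurableSet_cylinderEvents_faceEvent (by simp))).const_mul _) hη₀ hinter
  have hpos : 0 < (P : Measure (BitArray ι)).real (⋂ j, faceEvent j) :=
    ENNReal.toReal_pos hne (measure_ne_top _ _)
  exact hzero.not_gt (mul_pos (pow_pos hκ _) hpos)

end MeasureRemoval

section Resampling

variable {α β : Type*} [Fintype α] [Fintype β]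

theorem expect_prod_type (f : α × β → ℝ) : 𝔼 p, f p = 𝔼 a, 𝔼 b, f (a, b) := by
  rw [← univ_product_univ, expect_product]

theorem expect_comp_fst [Nonempty β] (f : α → ℝ) : 𝔼 p : α × β, f p.1 = 𝔼 a, f a := by
  simp_rw [expect_prod_type, Fintype.expect_const]

/-- If `get` reads a component of a point and `set` overwrites it, then `(x, y) ↦ (set x y, get x)`
is an involution, which swaps the component with an independent copy. -/
theorem expect_resample [Nonempty β] (get : α → β) (set : α → β → α)
    (get_set : ∀ x y, get (set x y) = y) (set_set : ∀ x y y', set (set x y) y' = set x y')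
    (set_get : ∀ x, set x (get x) = x) (f : α → ℝ) :
    𝔼 x, 𝔼 y, f (set x y) = 𝔼 x, f x := by
  have hinv : Function.Involutive fun p : α × β => (set p.1 p.2, get p.1) := fun p => by
    simp [get_set, set_set, set_get]
  rw [← expect_prod_type fun p : α × β => f (set p.1 p.2), ← expect_comp_fst (β := β) f]
  exact Fintype.expect_bijective _ hinv.bijective _ _ fun _ => rfl

theorem expect_mul_sq_le {w : α → ℝ} (hw : ∀ x, 0 ≤ w x) (f : α → ℝ) :
    (𝔼 x, w x * f x) ^ 2 ≤ (𝔼 x, w x) * 𝔼 x, w x * f x ^ 2 := by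
  have h := expect_mul_sq_le_sq_mul_sq univ (fun x => √(w x)) fun x => √(w x) * f x
  simpa only [← mul_assoc, mul_pow, Real.mul_self_sqrt (hw _), Real.sq_sqrt (hw _)] using h

end Resampling

section DoubledPoints

variable {ι α : Type*} [DecidableEq ι]

/-- The vertex of the combinatorial box spanned by the pair `p` with index `D`: the coordinates in
`D` come from the second point of the pair and the others from the first. -/
def boxVertex (D : Finset ι) (p : (ι → α) × (ι → α)) : ι → α := D.piecewise p.2 p.1

/-- The pair `p` with the `i`-th coordinate of its first point replaced by that of the second. -/
def copySnd (i : ι) (p : (ι → α) × (ι → α)) : (ι → α) × (ι → α) :=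
  (Function.update p.1 i (p.2 i), p.2)

/-- Independence of the `i`-th coordinate of the first point of the pair. -/
def IndepFst (i : ι) (F : (ι → α) × (ι → α) → ℝ) : Prop :=
  ∀ p a, F (Function.update p.1 i a, p.2) = F p

/-- Independence of the `i`-th coordinate of the second point of the pair. -/
def IndepSnd (i : ι) (F : (ι → α) × (ι → α) → ℝ) : Prop :=
  ∀ p a, F (p.1, Function.update p.2 i a) = F p

@[simp]
theorem boxVertex_empty (p : (ι → α) × (ι → α)) : boxVertex ∅ p = p.1 :=
  piecewise_empty _ _

theorem boxVertex_copySnd (D : Finset ι) (i : ι) (p : (ι → α) × (ι → α)) :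
    boxVertex D (copySnd i p) = boxVertex (insert i D) p := by
  funext k
  by_cases h : k = i <;> simp [boxVertex, copySnd, piecewise, h]

variable {D : Finset ι} {i : ι}

theorem boxVertex_update_fst (h : i ∉ D) (p : (ι → α) × (ι → α)) (a : α) :
    boxVertex D (Function.update p.1 i a, p.2) = Function.update (boxVertex D p) i a :=
  (update_piecewise_of_notMem D p.2 p.1 h a).symm

theorem boxVertex_update_snd (h : i ∉ D) (p : (ι → α) × (ι → α)) (a : α) :
    boxVertex D (p.1, Function.update p.2 i a) = boxVertex D p :=
  piecewise_congr _ (fun _ hk => Function.update_of_ne (ne_of_mem_of_not_mem hk h) _ _)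
    fun _ _ => rfl

theorem indepFst_prod_boxVertex {S : Finset (Finset ι)} {G : (ι → α) → ℝ} (hG : DependsOn G {i}ᶜ)
    (hS : ∀ D ∈ S, i ∉ D) : IndepFst i fun p => ∏ D ∈ S, G (boxVertex D p) := fun p a =>
  prod_congr rfl fun D hD => by
    rw [boxVertex_update_fst (hS D hD), dependsOn_apply_update hG (by simp)]

theorem indepSnd_prod_boxVertex {S : Finset (Finset ι)} (G : (ι → α) → ℝ) (hS : ∀ D ∈ S, i ∉ D) :
    IndepSnd i fun p => ∏ D ∈ S, G (boxVertex D p) := fun p a =>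
  prod_congr rfl fun D hD => by rw [boxVertex_update_snd (hS D hD)]

theorem IndepFst.mul_copySnd {k : ι} {U : (ι → α) × (ι → α) → ℝ} (h : IndepFst k U) (hki : k ≠ i) :
    IndepFst k fun p => U p * U (copySnd i p) := fun p a => by
  dsimp only [copySnd]
  rw [Function.update_comm hki, h p a, h (Function.update p.1 i (p.2 i), p.2) a]

theorem IndepSnd.mul_copySnd {k : ι} {U : (ι → α) × (ι → α) → ℝ} (h : IndepSnd k U) (hki : k ≠ i) :
    IndepSnd k fun p => U p * U (copySnd i p) := fun p a => by
  dsimp only [copySnd]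
  rw [Function.update_of_ne hki.symm, h p a, h (Function.update p.1 i (p.2 i), p.2) a]

/-- Adjoin to a family of index sets its sets enlarged by `i`: multiplying a product over the
vertices indexed by `S` by its image under `copySnd i` gives the product over `doubling i S`. -/
def doubling (i : ι) (S : Finset (Finset ι)) : Finset (Finset ι) := S ∪ S.image (insert i)

theorem disjoint_of_mem_doubling {S : Finset (Finset ι)} {t : Finset ι}
    (hS : ∀ D ∈ S, Disjoint D (insert i t)) (hi : i ∉ t) : ∀ D ∈ doubling i S, Disjoint D t := by
  have hSt : ∀ D ∈ S, Disjoint D t := fun D hD => (disjoint_insert_right.1 (hS D hD)).2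
  intro D hD
  rcases mem_union.1 hD with hD | hD
  · exact hSt D hD
  · obtain ⟨E, hE, rfl⟩ := mem_image.1 hD
    exact disjoint_insert_left.2 ⟨hi, hSt E hE⟩

theorem prod_doubling {S : Finset (Finset ι)} (hS : ∀ D ∈ S, i ∉ D) (G : (ι → α) → ℝ)
    (p : (ι → α) × (ι → α)) :
    ∏ D ∈ doubling i S, G (boxVertex D p) =
      (∏ D ∈ S, G (boxVertex D p)) * ∏ D ∈ S, G (boxVertex D (copySnd i p)) := by
  have hinj : Set.InjOn (insert i) (S : Set (Finset ι)) := fun D hD D' hD' h => by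
    rw [← erase_insert (hS D hD), h, erase_insert (hS D' hD')]
  have hdisj : Disjoint S (S.image (insert i)) := disjoint_right.2 fun D hD hDS => by
    obtain ⟨E, -, rfl⟩ := mem_image.1 hD
    exact hS _ hDS (mem_insert_self i E)
  rw [doubling, prod_union hdisj, prod_image hinj]
  simp_rw [boxVertex_copySnd]

variable [Fintype ι] [Fintype α] [Nonempty α]

theorem expect_update (i : ι) (f : (ι → α) → ℝ) :
    𝔼 x, 𝔼 a, f (Function.update x i a) = 𝔼 x, f x :=
  expect_resample (fun x => x i) (fun x a => Function.update x i a) (by simp) (by simp) (by simp) f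

theorem expect_update_fst (i : ι) (F : (ι → α) × (ι → α) → ℝ) :
    𝔼 p : (ι → α) × (ι → α), 𝔼 a, F (Function.update p.1 i a, p.2) = 𝔼 p, F p :=
  expect_resample (fun p : (ι → α) × (ι → α) => p.1 i)
    (fun p a => (Function.update p.1 i a, p.2)) (by simp) (by simp) (by simp) F

theorem expect_update_snd (i : ι) (F : (ι → α) × (ι → α) → ℝ) :
    𝔼 p : (ι → α) × (ι → α), 𝔼 a, F (p.1, Function.update p.2 i a) = 𝔼 p, F p :=
  expect_resample (fun p : (ι → α) × (ι → α) => p.2 i)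
    (fun p a => (p.1, Function.update p.2 i a)) (by simp) (by simp) (by simp) F

theorem IndepFst.expect_mul {U : (ι → α) × (ι → α) → ℝ} (hU : IndepFst i U)
    (F : (ι → α) × (ι → α) → ℝ) :
    𝔼 p, U p * F p = 𝔼 p, U p * 𝔼 a, F (Function.update p.1 i a, p.2) := by
  rw [← expect_update_fst i]
  simp_rw [hU _ _, ← mul_expect]

theorem expect_mul_mul_copySnd {W F : (ι → α) × (ι → α) → ℝ} (hW₀ : IndepFst i W)
    (hW₁ : IndepSnd i W) (hF : IndepSnd i F) :
    𝔼 p, W p * (F p * F (copySnd i p)) =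
      𝔼 p, W p * (𝔼 a, F (Function.update p.1 i a, p.2)) ^ 2 := by
  rw [hW₀.expect_mul, ← expect_update_snd i]
  refine expect_congr rfl fun p _ => ?_
  have hFF (a b : α) : F (Function.update p.1 i a, Function.update p.2 i b) =
      F (Function.update p.1 i a, p.2) := hF (Function.update p.1 i a, p.2) b
  simp only [hW₁ p, hFF, copySnd, Function.update_self, Function.update_idem]
  simp_rw [← expect_mul, ← mul_expect, sq]

theorem expect_mul_sq_le_expect_mul_copySnd {U W F : (ι → α) × (ι → α) → ℝ}
    (hUW : ∀ p, |U p| ≤ W p) (hU : IndepFst i U) (hW₀ : IndepFst i W) (hW₁ : IndepSnd i W)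
    (hF : IndepSnd i F) :
    (𝔼 p, U p * F p) ^ 2 ≤ (𝔼 p, W p) * 𝔼 p, W p * (F p * F (copySnd i p)) := by
  let avgF (p : (ι → α) × (ι → α)) : ℝ := 𝔼 a, F (Function.update p.1 i a, p.2)
  have hle : |𝔼 p, U p * avgF p| ≤ 𝔼 p, W p * |avgF p| :=
    (abs_expect_le _ _).trans <| expect_le_expect fun p _ =>
      (abs_mul _ _).trans_le (mul_le_mul_of_nonneg_right (hUW p) (abs_nonneg _))
  calc (𝔼 p, U p * F p) ^ 2 = |𝔼 p, U p * avgF p| ^ 2 := by rw [hU.expect_mul F, sq_abs]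
    _ ≤ (𝔼 p, W p * |avgF p|) ^ 2 := by gcongr
    _ ≤ (𝔼 p, W p) * 𝔼 p, W p * |avgF p| ^ 2 :=
      expect_mul_sq_le (fun p => (abs_nonneg _).trans (hUW p)) _
    _ = (𝔼 p, W p) * 𝔼 p, W p * (F p * F (copySnd i p)) := by
      simp_rw [sq_abs, expect_mul_mul_copySnd hW₀ hW₁ hF, avgF]

end DoubledPoints

section LinearForms

variable {ι α : Type*} [Fintype ι] [DecidableEq ι]

/-- The monomial `∏ₖ ∏_{D ∈ T k} N k (x_D)` in the weights at the vertices `x_D` of a box. -/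
def weightMonomial (N : ι → (ι → α) → ℝ) (T : ι → Finset (Finset ι)) (p : (ι → α) × (ι → α)) : ℝ :=
  ∏ k, ∏ D ∈ T k, N k (boxVertex D p)

/-- The linear forms condition for weights `N k`, one for each face `{k}ᶜ`. The exponent of
`N k (x_D)` is `1` exactly when `D ∈ T k`; only index sets `D` contained in the face occur. -/
def LinearFormsCondition [Fintype α] (N : ι → (ι → α) → ℝ) (η : ℝ) : Prop :=
  ∀ T : ι → Finset (Finset ι), (∀ k, ∀ D ∈ T k, k ∉ D) → |(𝔼 p, weightMonomial N T p) - 1| ≤ η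

variable {N : ι → (ι → α) → ℝ} {T : ι → Finset (Finset ι)} {i j : ι}

theorem weightMonomial_update (hT : T i = ∅) (B : Finset (Finset ι)) (p : (ι → α) × (ι → α)) :
    weightMonomial N (Function.update T i B) p =
      (∏ D ∈ B, N i (boxVertex D p)) * weightMonomial N T p := by
  rw [weightMonomial, weightMonomial, ← mul_prod_erase univ _ (mem_univ i),
    ← mul_prod_erase univ (fun k => ∏ D ∈ T k, N k (boxVertex D p)) (mem_univ i), hT, prod_empty,
    one_mul, Function.update_self]
  congr 1
  exact prod_congr rfl fun k hk => by rw [Function.update_of_ne (ne_of_mem_erase hk)]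

theorem indepSnd_weightMonomial (hT : ∀ k, ∀ D ∈ T k, i ∉ D) :
    IndepSnd i (weightMonomial N T) := fun p a =>
  prod_congr rfl fun k _ => indepSnd_prod_boxVertex (N k) (hT k) p a

theorem weightMonomial_doubling (hT : ∀ k, ∀ D ∈ T k, i ∉ D) (p : (ι → α) × (ι → α)) :
    weightMonomial N (fun k => doubling i (T k)) p =
      weightMonomial N T p * weightMonomial N T (copySnd i p) := by
  simp_rw [weightMonomial, prod_doubling (hT _), prod_mul_distrib]

variable [Fintype α] {η : ℝ}

theorem LinearFormsCondition.nonneg (hN : LinearFormsCondition N η) : 0 ≤ η :=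
  (abs_nonneg _).trans (hN (fun _ => ∅) (by simp))

theorem LinearFormsCondition.abs_expect_prod_prod_sub_one_le (hN : LinearFormsCondition N η)
    {A : Finset ι} {C : Finset (Finset ι)} (hA : ∀ i ∈ A, ∀ D ∈ C, i ∉ D) :
    |(𝔼 p, ∏ i ∈ A, ∏ D ∈ C, N i (boxVertex D p)) - 1| ≤ η := by
  have h := hN (fun i => if i ∈ A then C else ∅) fun i D hD => by
    split_ifs at hD with hi
    exacts [hA i hi D hD, absurd hD (notMem_empty D)]
  have hprod (p : (ι → α) × (ι → α)) : weightMonomial N (fun i => if i ∈ A then C else ∅) p =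
      ∏ i ∈ A, ∏ D ∈ C, N i (boxVertex D p) :=
    calc _ = ∏ i, if i ∈ A then ∏ D ∈ C, N i (boxVertex D p) else 1 :=
          prod_congr rfl fun i _ => by by_cases hi : i ∈ A <;> simp [hi]
      _ = _ := by rw [prod_ite_mem, univ_inter]
  simpa only [hprod] using h

theorem LinearFormsCondition.abs_expect_prod_sub_one_le (hN : LinearFormsCondition N η)
    (hT : ∀ k, ∀ D ∈ T k, k ∉ D) (hTi : T i = ∅) {B : Finset (Finset ι)} (hB : ∀ D ∈ B, i ∉ D) :
    |(𝔼 p, (∏ D ∈ B, N i (boxVertex D p)) * weightMonomial N T p) - 1| ≤ η := by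
  simp_rw [← weightMonomial_update hTi]
  refine hN _ fun k D hD => ?_
  obtain rfl | hk := eq_or_ne k i
  · exact hB D (by simpa using hD)
  · exact hT k D (by simpa [hk] using hD)

end LinearForms

section GowersCauchySchwarz

theorem abs_expect_prod_sub_one_mul_le {κ β : Type*} [Fintype β] {S : Finset κ}
    (hS : S.Nonempty) {g : κ → β → ℝ} {M : β → ℝ} {η : ℝ}
    (h : ∀ T ⊆ S, |(𝔼 p, (∏ D ∈ T, g D p) * M p) - 1| ≤ η) :
    |𝔼 p, (∏ D ∈ S, (g D p - 1)) * M p| ≤ 2 ^ #S * η := by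
  classical
  have hsigns : ∑ T ∈ S.powerset, (-1 : ℝ) ^ #T = 0 := by
    exact_mod_cast sum_powerset_neg_one_pow_card_of_nonempty hS
  have hexpand : 𝔼 p, (∏ D ∈ S, (g D p - 1)) * M p =
      ∑ T ∈ S.powerset, (-1) ^ #T * ((𝔼 p, (∏ D ∈ S \ T, g D p) * M p) - 1) := by
    simp_rw [mul_sub, sum_sub_distrib, mul_one, hsigns, sub_zero, prod_sub, prod_const_one,
      mul_one, sum_mul, expect_sum_comm, mul_expect, mul_assoc]
  calc |𝔼 p, (∏ D ∈ S, (g D p - 1)) * M p|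
      ≤ ∑ T ∈ S.powerset, |(-1) ^ #T * ((𝔼 p, (∏ D ∈ S \ T, g D p) * M p) - 1)| :=
        hexpand ▸ abs_sum_le_sum_abs _ _
    _ ≤ ∑ _T ∈ S.powerset, η := sum_le_sum fun T _ => by
        rw [abs_mul, abs_neg_one_pow, one_mul]
        exact h _ sdiff_subset
    _ = 2 ^ #S * η := by simp

variable {ι α : Type*} [DecidableEq ι]

/-- `U` can be the factor attached to the coordinate `k` in the Gowers–Cauchy–Schwarz argument
when the coordinates in `s` have not been doubled yet: it is dominated by the product of the
weight `G` over the vertices indexed by `B`. -/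
structure IsDominatedFactor (G : (ι → α) → ℝ) (s : Finset ι) (k : ι) (B : Finset (Finset ι))
    (U : (ι → α) × (ι → α) → ℝ) : Prop where
  disjoint : ∀ D ∈ B, Disjoint D s
  abs_le : ∀ p, |U p| ≤ ∏ D ∈ B, G (boxVertex D p)
  indepFst : IndepFst k U
  indepSnd : ∀ i ∈ s, IndepSnd i U

theorem IsDominatedFactor.mul_copySnd {G : (ι → α) → ℝ} {s : Finset ι} {i k : ι}
    {B : Finset (Finset ι)} {U : (ι → α) × (ι → α) → ℝ}
    (h : IsDominatedFactor G (insert i s) k B U) (hi : i ∉ s) (hk : k ∈ s) :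
    IsDominatedFactor G s k (doubling i B) fun p => U p * U (copySnd i p) where
  disjoint := disjoint_of_mem_doubling h.disjoint hi
  abs_le p := by
    rw [prod_doubling (fun D hD => (disjoint_insert_right.1 (h.disjoint D hD)).1), abs_mul]
    exact mul_le_mul (h.abs_le p) (h.abs_le _) (abs_nonneg _) ((abs_nonneg _).trans (h.abs_le p))
  indepFst := h.indepFst.mul_copySnd (ne_of_mem_of_not_mem hk hi)
  indepSnd l hl := (h.indepSnd l (mem_insert_of_mem hl)).mul_copySnd (ne_of_mem_of_not_mem hl hi)

variable [Fintype ι] {N : ι → (ι → α) → ℝ} {S : Finset (Finset ι)} {T : ι → Finset (Finset ι)}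
  {U : ι → (ι → α) × (ι → α) → ℝ} {s : Finset ι} {i j : ι}

/-- The function whose mean is bounded by the weighted Gowers–Cauchy–Schwarz inequality. The
factors `U k` with `k ∈ s` are still to be eliminated. -/
def gcsIntegrand (N : ι → (ι → α) → ℝ) (j : ι) (S : Finset (Finset ι)) (T : ι → Finset (Finset ι))
    (U : ι → (ι → α) × (ι → α) → ℝ) (s : Finset ι) (p : (ι → α) × (ι → α)) : ℝ :=
  (∏ D ∈ S, (N j (boxVertex D p) - 1)) * weightMonomial N T p * ∏ k ∈ s, U k p

theorem indepSnd_gcsIntegrand (hS : ∀ D ∈ S, i ∉ D) (hT : ∀ k, ∀ D ∈ T k, i ∉ D)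
    (hU : ∀ k ∈ s, IndepSnd i (U k)) : IndepSnd i (gcsIntegrand N j S T U s) := fun p a => by
  have hN := indepSnd_prod_boxVertex (fun x => N j x - 1) hS p a
  dsimp only at hN
  rw [gcsIntegrand, gcsIntegrand, indepSnd_weightMonomial hT, hN,
    prod_congr rfl fun k hk => hU k hk p a]

theorem gcsIntegrand_doubling (hS : ∀ D ∈ S, i ∉ D) (hT : ∀ k, ∀ D ∈ T k, i ∉ D) (hTi : T i = ∅)
    (B : Finset (Finset ι)) (p : (ι → α) × (ι → α)) :
    gcsIntegrand N j (doubling i S) (Function.update (fun k => doubling i (T k)) i B)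
        (fun k p => U k p * U k (copySnd i p)) s p =
      (∏ D ∈ B, N i (boxVertex D p)) *
        (gcsIntegrand N j S T U s p * gcsIntegrand N j S T U s (copySnd i p)) := by
  have hTi' : doubling i (T i) = ∅ := by simp [hTi, doubling]
  simp only [gcsIntegrand, weightMonomial_update (T := fun k => doubling i (T k)) hTi',
    weightMonomial_doubling hT, prod_doubling hS fun x => N j x - 1, prod_mul_distrib]
  ring

/-- The error in the weighted Gowers–Cauchy–Schwarz inequality when `n` factors are eliminated. -/
noncomputable def gcsBound : ℕ → ℝ → ℝ
  | 0, q => q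
  | n + 1, q => √(2 * gcsBound n q)

theorem gcsBound_nonneg : ∀ (n : ℕ) {q : ℝ}, 0 ≤ q → 0 ≤ gcsBound n q
  | 0, _, hq => hq
  | _ + 1, _, _ => Real.sqrt_nonneg _

variable [Fintype α] [Nonempty α] {η : ℝ}

theorem abs_expect_gcsIntegrand_insert_le (hN : ∀ k, DependsOn (N k) {k}ᶜ)
    (hη : LinearFormsCondition N η) (hη₁ : η ≤ 1) {B : Finset (Finset ι)} (hi : i ∉ s)
    (hS : ∀ D ∈ S, i ∉ D) (hT : ∀ k, ∀ D ∈ T k, i ∉ D)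
    (hTi : T i = ∅) (hUi : IsDominatedFactor (N i) (insert i s) i B (U i))
    (hU : ∀ k ∈ s, IndepSnd i (U k)) :
    |𝔼 p, gcsIntegrand N j S T U (insert i s) p| ≤ √(2 * |𝔼 p, gcsIntegrand N j (doubling i S)
        (Function.update (fun k => doubling i (T k)) i B)
        (fun k p => U k p * U k (copySnd i p)) s p|) := by
  have hB : ∀ D ∈ B, i ∉ D := fun D hD => (disjoint_insert_right.1 (hUi.disjoint D hD)).1
  have hmass : 𝔼 p, ∏ D ∈ B, N i (boxVertex D p) ≤ 2 := by
    have h := hη.abs_expect_prod_sub_one_le (T := fun _ => ∅) (by simp) rfl hB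
    simp only [weightMonomial, prod_empty, prod_const_one, mul_one] at h
    linarith [(abs_le.1 h).2]
  have hcs := expect_mul_sq_le_expect_mul_copySnd hUi.abs_le hUi.indepFst
    (indepFst_prod_boxVertex (hN i) hB) (indepSnd_prod_boxVertex (N i) hB)
    (indepSnd_gcsIntegrand (N := N) (j := j) hS hT hU)
  simp_rw [gcsIntegrand_doubling hS hT hTi]
  refine Real.abs_le_sqrt ?_
  calc (𝔼 p, gcsIntegrand N j S T U (insert i s) p) ^ 2
      = (𝔼 p, U i p * gcsIntegrand N j S T U s p) ^ 2 := by
        simp_rw [gcsIntegrand, prod_insert hi, mul_left_comm (U i _)]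
    _ ≤ _ := hcs
    _ ≤ _ := mul_le_mul_of_nonneg_left (le_abs_self _)
        (expect_nonneg fun p _ => (abs_nonneg _).trans (hUi.abs_le p))
    _ ≤ _ := mul_le_mul_of_nonneg_right hmass (abs_nonneg _)

/-- Weighted Gowers–Cauchy–Schwarz inequality: a product of factors `N j - 1` and a monomial in
the weights is nearly uncorrelated with products of functions `U k`, each ignoring the coordinate
`k` of the first point and dominated by copies of the weight `N k`. -/
theorem abs_expect_gcsIntegrand_le (hN : ∀ k, DependsOn (N k) {k}ᶜ)
    (hη : LinearFormsCondition N η) (hη₁ : η ≤ 1) (hj : j ∉ s) (hS : S.Nonempty)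
    (hSs : ∀ D ∈ S, Disjoint D (insert j s)) (hT : ∀ k, ∀ D ∈ T k, Disjoint D (insert k s))
    (hT₀ : ∀ k ∈ insert j s, T k = ∅) {B : ι → Finset (Finset ι)}
    (hU : ∀ k ∈ s, IsDominatedFactor (N k) s k (B k) (U k)) :
    |𝔼 p, gcsIntegrand N j S T U s p| ≤ gcsBound #s (2 ^ 2 ^ Fintype.card ι * η) := by
  induction s using Finset.induction_on generalizing S T U B with
  | empty =>
    simp only [insert_empty_eq, disjoint_singleton_right] at hSs hT
    have h := abs_expect_prod_sub_one_mul_le hS fun R hR =>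
      hη.abs_expect_prod_sub_one_le hT (hT₀ j (mem_insert_self _ _)) fun D hD => hSs D (hR hD)
    simp only [gcsIntegrand, prod_empty, mul_one, card_empty, gcsBound]
    refine h.trans (mul_le_mul_of_nonneg_right ?_ hη.nonneg)
    exact pow_le_pow_right₀ one_le_two ((card_le_univ S).trans_eq Fintype.card_finset)
  | insert i s hi ih =>
    have hji : i ∉ insert j s := by simp_all [eq_comm]
    have hSi : ∀ D ∈ S, Disjoint D (insert i (insert j s)) := insert_comm j i s ▸ hSs
    have hTi (k : ι) : ∀ D ∈ T k, Disjoint D (insert i (insert k s)) := insert_comm k i s ▸ hT k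
    have hSi' : ∀ D ∈ S, i ∉ D := fun D hD => (disjoint_insert_right.1 (hSi D hD)).1
    have hTi' : ∀ k, ∀ D ∈ T k, i ∉ D := fun k D hD => (disjoint_insert_right.1 (hTi k D hD)).1
    rw [card_insert_of_notMem hi, gcsBound]
    refine (abs_expect_gcsIntegrand_insert_le hN hη hη₁ hi hSi' hTi' (hT₀ i (by simp))
      (hU i (mem_insert_self _ _)) fun k hk =>
        (hU k (mem_insert_of_mem hk)).indepSnd i (mem_insert_self _ _)).trans ?_
    gcongr
    refine ih (B := fun k => doubling i (B k)) (fun h => hj (mem_insert_of_mem h))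
      (hS.mono subset_union_left) (disjoint_of_mem_doubling hSi hji) (fun k => ?_)
      (fun k hk => ?_) fun k hk => (hU k (mem_insert_of_mem hk)).mul_copySnd hi hk
    · obtain rfl | hki := eq_or_ne k i
      · simpa using (hU k (mem_insert_self _ _)).disjoint
      · rw [Function.update_of_ne hki]
        exact disjoint_of_mem_doubling (hTi k) (by simp [hki.symm, hi])
    · rw [Function.update_of_ne (ne_of_mem_of_not_mem hk hji),
        hT₀ k (insert_subset_insert j (subset_insert i s) hk)]
      simp [doubling]

end GowersCauchySchwarz

section Pseudorandom

/-- The error, for `m` weights satisfying the linear forms condition within `η`, in the estimates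
that follow from it. The square root is an `L¹` error derived from an `L²` error. -/
noncomputable def linearFormsError (m : ℕ) (η : ℝ) : ℝ :=
  √(3 * η) + gcsBound (m - 1) (2 ^ 2 ^ m * η)

variable {ι α : Type*} [Fintype ι] [DecidableEq ι] [Fintype α]

/-- Nonnegative weights on the faces `{k}ᶜ` satisfying a linear forms condition strong enough to
make all errors below at most `t`. -/
structure IsPseudorandom (N : ι → (ι → α) → ℝ) (t : ℝ) : Prop where
  nonneg : ∀ k x, 0 ≤ N k x
  dependsOn : ∀ k, DependsOn (N k) {k}ᶜ
  linearForms : ∃ η ≤ 1 / 3, LinearFormsCondition N η ∧ linearFormsError (Fintype.card ι) η ≤ t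

variable [Nonempty α] {N : ι → (ι → α) → ℝ} {t : ℝ} {j : ι}

theorem IsPseudorandom.abs_expect_sub_one_mul_prod_le (h : IsPseudorandom N t)
    {U : ι → (ι → α) × (ι → α) → ℝ} {B : ι → Finset (Finset ι)}
    (hU : ∀ k ∈ univ.erase j, IsDominatedFactor (N k) (univ.erase j) k (B k) (U k)) :
    |𝔼 p : (ι → α) × (ι → α), (N j p.1 - 1) * ∏ k ∈ univ.erase j, U k p| ≤ t := by
  obtain ⟨η, hη, hNη, ht⟩ := h.linearForms
  have hgcs := abs_expect_gcsIntegrand_le (S := {∅}) (T := fun _ => ∅) h.dependsOn hNη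
    (by linarith) (notMem_erase j univ) (singleton_nonempty _) (by simp) (by simp) (by simp) hU
  rw [card_erase_of_mem (mem_univ j), card_univ] at hgcs
  simp only [gcsIntegrand, weightMonomial, prod_singleton, prod_empty, prod_const_one, mul_one,
    boxVertex_empty] at hgcs
  exact hgcs.trans ((le_add_of_nonneg_left (Real.sqrt_nonneg _)).trans ht)

theorem IsPseudorandom.abs_expect_sub_one_mul_le_of_isBoxTest (h : IsPseudorandom N t)
    {φ : (ι → α) → ℝ} (hφ : IsBoxTest j φ) : |𝔼 x, (N j x - 1) * φ x| ≤ t := by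
  obtain ⟨C, hC₁, hC, rfl⟩ := hφ
  rw [← expect_comp_fst (β := ι → α)]
  exact h.abs_expect_sub_one_mul_prod_le (B := fun _ => ∅) (U := fun k p => C k p.1) fun k _ =>
    ⟨by simp, fun p => by simpa using hC₁ k p.1,
      fun p a => dependsOn_apply_update (hC k) (by simp) _ _, fun _ _ _ _ => rfl⟩

end Pseudorandom

section CoordinateAverages

variable {ι α : Type*} [DecidableEq ι] [Fintype α]

/-- The average of `u` over the coordinate `j`. -/
noncomputable def coordAverage (j : ι) (u : (ι → α) → ℝ) (x : ι → α) : ℝ :=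
  𝔼 a, u (Function.update x j a)

variable {j : ι} {u v k : (ι → α) → ℝ}

theorem dependsOn_coordAverage (j : ι) (u : (ι → α) → ℝ) :
    DependsOn (coordAverage j u) {j}ᶜ := fun x y hxy =>
  expect_congr rfl fun a _ => congrArg u <| by
    funext i
    by_cases hi : i = j
    · simp [hi]
    · simp [hi, hxy i hi]

theorem coordAverage_nonneg (hu : ∀ x, 0 ≤ u x) (x : ι → α) : 0 ≤ coordAverage j u x :=
  expect_nonneg fun _ _ => hu _

theorem coordAverage_mono (huv : ∀ x, u x ≤ v x) (x : ι → α) :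
    coordAverage j u x ≤ coordAverage j v x :=
  expect_le_expect fun _ _ => huv _

theorem coordAverage_le_one [Nonempty α] (hu : ∀ x, u x ≤ 1) (x : ι → α) :
    coordAverage j u x ≤ 1 :=
  expect_le univ_nonempty fun _ _ => hu _

variable [Fintype ι] [Nonempty α]

theorem expect_mul_coordAverage (hk : DependsOn k {j}ᶜ) (u : (ι → α) → ℝ) :
    𝔼 x, k x * coordAverage j u x = 𝔼 x, k x * u x := by
  rw [← expect_update j fun x => k x * u x]
  simp_rw [dependsOn_apply_update hk (i := j) (by simp), ← mul_expect, coordAverage]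

/-- A product of two coordinate averages unfolds to an average over the doubled coordinate. -/
theorem expect_mul_coordAverage_mul_coordAverage (hk : DependsOn k {j}ᶜ) (u v : (ι → α) → ℝ) :
    𝔼 x, k x * (coordAverage j u x * coordAverage j v x) =
      𝔼 p : (ι → α) × (ι → α), k p.1 * (u p.1 * v (boxVertex {j} p)) := by
  have hvertex (p : (ι → α) × (ι → α)) (a b : α) :
      boxVertex {j} (Function.update p.1 j a, Function.update p.2 j b) =
        Function.update p.1 j b := by
    funext i
    by_cases h : i = j <;> simp [boxVertex, piecewise, h]
  rw [← expect_update_fst j, ← expect_update_snd j, ← expect_comp_fst (β := ι → α)]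
  refine expect_congr rfl fun p _ => ?_
  simp only [hvertex, dependsOn_apply_update hk (i := j) (by simp)]
  simp_rw [← mul_expect, ← expect_mul, ← mul_expect, coordAverage]

end CoordinateAverages

section Majorized

variable {ι α : Type*} [DecidableEq ι]

/-- Nonnegative functions `u i` on the faces `{i}ᶜ`, dominated by the weight `N i` if `i ∈ A` and
by `1` otherwise. -/
structure IsMajorized (N : ι → (ι → α) → ℝ) (A : Finset ι) (u : ι → (ι → α) → ℝ) : Prop where
  dependsOn : ∀ i, DependsOn (u i) {i}ᶜ
  nonneg : ∀ i x, 0 ≤ u i x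
  le : ∀ i x, u i x ≤ if i ∈ A then N i x else 1

variable {N : ι → (ι → α) → ℝ} {A A' : Finset ι} {u v : ι → (ι → α) → ℝ} {j : ι}

theorem IsMajorized.le_one (hu : IsMajorized N ∅ u) (i : ι) (x : ι → α) : u i x ≤ 1 := by
  simpa using hu.le i x

theorem IsMajorized.update (hu : IsMajorized N A u) {k : (ι → α) → ℝ} (hk : DependsOn k {j}ᶜ)
    (hk₀ : ∀ x, 0 ≤ k x) (hk₁ : ∀ x, k x ≤ 1) :
    IsMajorized N (A.erase j) (Function.update u j k) where
  dependsOn := (Function.forall_update_iff u fun i f => DependsOn f {i}ᶜ).2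
    ⟨hk, fun i _ => hu.dependsOn i⟩
  nonneg := (Function.forall_update_iff u fun _ f => ∀ x, 0 ≤ f x).2 ⟨hk₀, fun i _ => hu.nonneg i⟩
  le := (Function.forall_update_iff u fun i f => ∀ x, f x ≤ if i ∈ A.erase j then N i x else 1).2
    ⟨by simpa using hk₁, fun i hi => by simpa [hi] using hu.le i⟩

variable [Fintype ι]

theorem IsMajorized.prod_erase_le (hu : IsMajorized N A u) (j : ι) (x : ι → α) :
    ∏ i ∈ univ.erase j, u i x ≤ ∏ i ∈ A.erase j, N i x := by
  have hfilter : {i ∈ univ.erase j | i ∈ A} = A.erase j := by grind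
  calc ∏ i ∈ univ.erase j, u i x ≤ ∏ i ∈ univ.erase j, if i ∈ A then N i x else 1 :=
        prod_le_prod (fun i _ => hu.nonneg i x) fun i _ => hu.le i x
    _ = ∏ i ∈ A.erase j, N i x := by rw [← prod_filter, hfilter]

theorem IsMajorized.isDominatedFactor (hu : IsMajorized N A u) (hv : IsMajorized N A' v) {i : ι}
    (hij : i ≠ j) :
    IsDominatedFactor (N i) (univ.erase j) i
      ((if i ∈ A then {∅} else ∅) ∪ if i ∈ A' then {{j}} else ∅)
      fun p => u i p.1 * v i (boxVertex {j} p) where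
  disjoint D hD := by
    have hD' : D = ∅ ∨ D = {j} := by split_ifs at hD <;> simp_all
    obtain rfl | rfl := hD' <;> simp
  abs_le p := by
    have hdisj : Disjoint (if i ∈ A then {∅} else ∅ : Finset (Finset ι))
        (if i ∈ A' then {{j}} else ∅) := by split_ifs <;> simp
    have hu_le := hu.le i p.1
    have hv_le := hv.le i (boxVertex {j} p)
    have hprod : ∏ D ∈ (if i ∈ A then {∅} else ∅) ∪ if i ∈ A' then {{j}} else ∅,
        N i (boxVertex D p) = (if i ∈ A then N i p.1 else 1) *
          if i ∈ A' then N i (boxVertex {j} p) else 1 := by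
      rw [prod_union hdisj]
      split_ifs <;> simp
    rw [hprod, abs_of_nonneg (mul_nonneg (hu.nonneg _ _) (hv.nonneg _ _))]
    exact mul_le_mul hu_le hv_le (hv.nonneg _ _) ((hu.nonneg _ _).trans hu_le)
  indepFst p a := by
    dsimp only
    rw [boxVertex_update_fst (by simpa using hij),
      dependsOn_apply_update (hu.dependsOn i) (by simp),
      dependsOn_apply_update (hv.dependsOn i) (by simp)]
  indepSnd l hl p a := by
    dsimp only
    rw [boxVertex_update_snd (by simpa using hl)]

variable [Fintype α]

/-- The average over the coordinate `j` of the product of all functions other than `u j`. -/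
noncomputable def cofactor (u : ι → (ι → α) → ℝ) (j : ι) : (ι → α) → ℝ :=
  coordAverage j fun x => ∏ i ∈ univ.erase j, u i x

theorem dependsOn_cofactor (u : ι → (ι → α) → ℝ) (j : ι) : DependsOn (cofactor u j) {j}ᶜ :=
  dependsOn_coordAverage j _

theorem cofactor_update (u : ι → (ι → α) → ℝ) (j : ι) (k : (ι → α) → ℝ) :
    cofactor (Function.update u j k) j = cofactor u j := by
  refine congrArg (coordAverage j) (funext fun x => prod_congr rfl fun i hi => ?_)
  rw [Function.update_of_ne (ne_of_mem_erase hi)]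

theorem IsMajorized.cofactor_nonneg (hu : IsMajorized N A u) (x : ι → α) : 0 ≤ cofactor u j x :=
  coordAverage_nonneg (fun x => prod_nonneg fun i _ => hu.nonneg i x) x

theorem IsMajorized.cofactor_le (hu : IsMajorized N A u) (x : ι → α) :
    cofactor u j x ≤ coordAverage j (fun x => ∏ i ∈ A.erase j, N i x) x :=
  coordAverage_mono (hu.prod_erase_le j) x

variable [Nonempty α]

theorem IsMajorized.cofactor_le_one (hu : IsMajorized N ∅ u) (x : ι → α) : cofactor u j x ≤ 1 :=
  coordAverage_le_one (fun x => prod_le_one (fun i _ => hu.nonneg i x) fun i _ => hu.le_one i x) x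

theorem expect_prod_eq_expect_mul_cofactor (hu : DependsOn (u j) {j}ᶜ) :
    𝔼 x, ∏ i, u i x = 𝔼 x, u j x * cofactor u j x := by
  rw [cofactor, expect_mul_coordAverage hu]
  exact expect_congr rfl fun x _ => (mul_prod_erase univ (fun i => u i x) (mem_univ j)).symm

end Majorized

section Counting

theorem sub_min_one_mul_sub_le {a a' w : ℝ} (haw : a ≤ w) (ha' : 0 ≤ a') :
    (a - min a 1) * (a - a') ≤ |w - 1| + (w - 1) ^ 2 := by
  have hexcess : a - min a 1 ≤ |w - 1| := by
    rw [sub_le_iff_le_add, ← sub_le_iff_le_add', le_min_iff]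
    constructor <;> linarith [abs_nonneg (w - 1), le_abs_self (w - 1)]
  calc (a - min a 1) * (a - a') ≤ (a - min a 1) * (1 + |w - 1|) :=
        mul_le_mul_of_nonneg_left (by linarith [le_abs_self (w - 1)])
          (sub_nonneg.2 (min_le_left a 1))
    _ ≤ |w - 1| * (1 + |w - 1|) := mul_le_mul_of_nonneg_right hexcess (by positivity)
    _ = |w - 1| + (w - 1) ^ 2 := by rw [← sq_abs (w - 1)]; ring

variable {ι α : Type*} [Fintype ι] [DecidableEq ι] {N : ι → (ι → α) → ℝ} {A A' : Finset ι}
  {u v g g' : ι → (ι → α) → ℝ} {t η κ : ℝ} {j : ι}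

theorem IsMajorized.isBoxTest_prod_update (hv : IsMajorized N ∅ v) (j : ι) (a : α) :
    IsBoxTest j fun x => ∏ i ∈ univ.erase j, v i (Function.update x j a) := by
  refine ⟨fun i x => v i (Function.update x j a), fun i x => ?_, fun i x y hxy => ?_, rfl⟩
  · rw [abs_of_nonneg (hv.nonneg _ _)]
    exact hv.le_one _ _
  · refine hv.dependsOn i fun l hl => ?_
    obtain rfl | hlj := eq_or_ne l j
    · simp
    · simpa [hlj] using hxy l (by simp_all)

variable [Fintype α]

/-- `g'` is a dense model of `g`: the functions `g i` with `i ∈ A`, majorized by the weights, are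
replaced by functions `g' i` with values in `[0, 1]` that no box test can distinguish from them. -/
structure IsDenseModel (N : ι → (ι → α) → ℝ) (t : ℝ) (A : Finset ι) (g g' : ι → (ι → α) → ℝ) :
    Prop where
  majorized : IsMajorized N A g
  model : IsMajorized N ∅ g'
  eq_of_notMem : ∀ i ∉ A, g i = g' i
  abs_le : ∀ i ∈ A, ∀ φ, IsBoxTest i φ → |𝔼 x, (g i x - g' i x) * φ x| ≤ t

theorem IsDenseModel.update (h : IsDenseModel N t A g g') {k : (ι → α) → ℝ}
    (hk : DependsOn k {j}ᶜ) (hk₀ : ∀ x, 0 ≤ k x) (hk₁ : ∀ x, k x ≤ 1) :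
    IsDenseModel N t (A.erase j) (Function.update g j k) (Function.update g' j k) where
  majorized := h.majorized.update hk hk₀ hk₁
  model := by simpa using h.model.update hk hk₀ hk₁
  eq_of_notMem i hi := by
    obtain rfl | hij := eq_or_ne i j
    · simp
    · simpa [hij] using h.eq_of_notMem i (by simpa [hij] using hi)
  abs_le i hi := by
    simpa [ne_of_mem_erase hi] using h.abs_le i (mem_of_mem_erase hi)

variable [Nonempty α]

theorem LinearFormsCondition.expect_sq_coordAverage_sub_one_le (hN : LinearFormsCondition N η)
    (j : ι) (A : Finset ι) :
    𝔼 x, (coordAverage j (fun x => ∏ i ∈ A.erase j, N i x) x - 1) ^ 2 ≤ 3 * η := by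
  set W : (ι → α) → ℝ := fun x => ∏ i ∈ A.erase j, N i x
  have hmean : |(𝔼 x, coordAverage j W x) - 1| ≤ η := by
    have h := hN.abs_expect_prod_prod_sub_one_le (A := A.erase j) (C := {∅}) (by simp)
    simp only [prod_singleton, boxVertex_empty] at h
    rwa [expect_comp_fst (β := ι → α) W, ← expect_update j W] at h
  have hsq : |(𝔼 x, coordAverage j W x ^ 2) - 1| ≤ η := by
    have h := hN.abs_expect_prod_prod_sub_one_le (A := A.erase j) (C := {∅, {j}})
      fun i hi D hD => by
        obtain rfl | rfl : D = ∅ ∨ D = {j} := by simpa using hD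
        exacts [notMem_empty i, notMem_singleton.2 (ne_of_mem_erase hi)]
    simp only [prod_pair (singleton_ne_empty j).symm, boxVertex_empty, prod_mul_distrib] at h
    have hdouble := expect_mul_coordAverage_mul_coordAverage (j := j) (k := fun _ => 1)
      (fun _ _ _ => rfl) W W
    simp only [one_mul, ← sq] at hdouble
    rwa [hdouble]
  calc 𝔼 x, (coordAverage j W x - 1) ^ 2
      = (𝔼 x, coordAverage j W x ^ 2) - 2 * (𝔼 x, coordAverage j W x) + 1 := by
        simp_rw [sub_sq, one_pow, mul_one, expect_add_distrib, expect_sub_distrib, mul_expect,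
          Fintype.expect_const]
    _ ≤ 3 * η := by linarith [(abs_le.1 hmean).1, (abs_le.1 hsq).2]

theorem IsPseudorandom.expect_abs_coordAverage_sub_one_le (h : IsPseudorandom N t)
    (j : ι) (A : Finset ι) :
    𝔼 x, |coordAverage j (fun x => ∏ i ∈ A.erase j, N i x) x - 1| ≤ t := by
  obtain ⟨η, -, hNη, ht⟩ := h.linearForms
  refine le_trans (Real.le_sqrt_of_sq_le ?_)
    ((le_add_of_nonneg_right (gcsBound_nonneg _ (mul_nonneg (by positivity) hNη.nonneg))).trans ht)
  have hcs := expect_mul_sq_le (w := fun _ : ι → α => 1) (fun _ => zero_le_one)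
    fun x => |coordAverage j (fun x => ∏ i ∈ A.erase j, N i x) x - 1|
  simp only [one_mul, sq_abs, Fintype.expect_const] at hcs
  exact hcs.trans (hNη.expect_sq_coordAverage_sub_one_le j A)

theorem IsPseudorandom.expect_sq_coordAverage_sub_one_le (h : IsPseudorandom N t)
    (j : ι) (A : Finset ι) :
    𝔼 x, (coordAverage j (fun x => ∏ i ∈ A.erase j, N i x) x - 1) ^ 2 ≤ t := by
  obtain ⟨η, hη, hNη, ht⟩ := h.linearForms
  have hη₀ := hNη.nonneg
  calc _ ≤ 3 * η := hNη.expect_sq_coordAverage_sub_one_le j A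
    _ ≤ √(3 * η) := Real.le_sqrt_of_sq_le (by nlinarith)
    _ ≤ linearFormsError (Fintype.card ι) η :=
      le_add_of_nonneg_right (gcsBound_nonneg _ (by positivity))
    _ ≤ t := ht

theorem IsPseudorandom.expect_le_two (h : IsPseudorandom N t) (j : ι) : 𝔼 x, N j x ≤ 2 := by
  obtain ⟨η, hη, hNη, -⟩ := h.linearForms
  have hmean := hNη.abs_expect_prod_prod_sub_one_le (A := {j}) (C := {∅}) (by simp)
  simp only [prod_singleton, boxVertex_empty] at hmean
  rw [expect_comp_fst (β := ι → α) (N j)] at hmean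
  linarith [(abs_le.1 hmean).2]

/-- The weight `N j` is uncorrelated even with functions majorized by the other weights, because
the product of two cofactors is a Gowers–Cauchy–Schwarz average over one doubled coordinate. -/
theorem IsPseudorandom.abs_expect_sub_one_mul_cofactor_mul_le (h : IsPseudorandom N t)
    (hu : IsMajorized N A u) (hv : IsMajorized N A' v) (j : ι) :
    |𝔼 x, (N j x - 1) * (cofactor u j x * cofactor v j x)| ≤ t := by
  have hNj : DependsOn (fun x => N j x - 1) {j}ᶜ := fun x y hxy => by
    simp only [h.dependsOn j hxy]
  rw [cofactor, cofactor, expect_mul_coordAverage_mul_coordAverage hNj]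
  simp_rw [← prod_mul_distrib]
  exact h.abs_expect_sub_one_mul_prod_le fun i hi => hu.isDominatedFactor hv (ne_of_mem_erase hi)

theorem IsPseudorandom.expect_sub_one_mul_cofactor_sub_sq_le (h : IsPseudorandom N t)
    (hu : IsMajorized N A u) (hv : IsMajorized N A' v) (j : ι) :
    𝔼 x, (N j x - 1) * (cofactor u j x - cofactor v j x) ^ 2 ≤ 4 * t := by
  have huu := h.abs_expect_sub_one_mul_cofactor_mul_le hu hu j
  have huv := h.abs_expect_sub_one_mul_cofactor_mul_le hu hv j
  have hvv := h.abs_expect_sub_one_mul_cofactor_mul_le hv hv j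
  calc 𝔼 x, (N j x - 1) * (cofactor u j x - cofactor v j x) ^ 2
      = (𝔼 x, (N j x - 1) * (cofactor u j x * cofactor u j x)) -
          2 * (𝔼 x, (N j x - 1) * (cofactor u j x * cofactor v j x)) +
          𝔼 x, (N j x - 1) * (cofactor v j x * cofactor v j x) := by
        rw [mul_expect, ← expect_sub_distrib, ← expect_add_distrib]
        exact expect_congr rfl fun x _ => by ring
    _ ≤ 4 * t := by linarith [(abs_le.1 huu).2, (abs_le.1 huv).1, (abs_le.1 hvv).2]

/-- Truncation of the cofactor of `u` at `1` reduces an `L²` bound to test functions with values in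
`[0, 1]`. -/
theorem IsPseudorandom.expect_cofactor_sub_sq_le (h : IsPseudorandom N t) (hu : IsMajorized N A u)
    (hv : IsMajorized N ∅ v)
    (hκ : ∀ k, DependsOn k {j}ᶜ → (∀ x, 0 ≤ k x) → (∀ x, k x ≤ 1) →
      |𝔼 x, k x * (cofactor u j x - cofactor v j x)| ≤ κ) :
    𝔼 x, (cofactor u j x - cofactor v j x) ^ 2 ≤ 2 * t + 2 * κ := by
  have hmin := hκ (fun x => min (cofactor u j x) 1)
    (fun x y hxy => by simp only [dependsOn_cofactor u j hxy])
    (fun x => le_min (hu.cofactor_nonneg x) zero_le_one) fun x => min_le_right _ _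
  have hmodel := hκ (cofactor v j) (dependsOn_cofactor v j) hv.cofactor_nonneg hv.cofactor_le_one
  have hexcess : 𝔼 x, (cofactor u j x - min (cofactor u j x) 1) *
      (cofactor u j x - cofactor v j x) ≤ 2 * t := by
    refine (expect_le_expect fun x _ =>
      sub_min_one_mul_sub_le (hu.cofactor_le x) (hv.cofactor_nonneg x)).trans ?_
    rw [expect_add_distrib]
    linarith [h.expect_abs_coordAverage_sub_one_le j A, h.expect_sq_coordAverage_sub_one_le j A]
  calc 𝔼 x, (cofactor u j x - cofactor v j x) ^ 2
      = (𝔼 x, (cofactor u j x - min (cofactor u j x) 1) * (cofactor u j x - cofactor v j x)) +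
          ((𝔼 x, min (cofactor u j x) 1 * (cofactor u j x - cofactor v j x)) -
            𝔼 x, cofactor v j x * (cofactor u j x - cofactor v j x)) := by
        rw [← expect_sub_distrib, ← expect_add_distrib]
        exact expect_congr rfl fun x _ => by ring
    _ ≤ 2 * t + 2 * κ := by linarith [(abs_le.1 hmin).2, (abs_le.1 hmodel).1]

/-- Cauchy–Schwarz removes `u j`, majorized by `N j`, at the cost of squaring the difference. -/
theorem IsPseudorandom.abs_expect_mul_cofactor_sub_le (h : IsPseudorandom N t)
    (hu : IsMajorized N A u) (hv : IsMajorized N ∅ v) (hj : j ∈ A)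
    (hκ : ∀ k, DependsOn k {j}ᶜ → (∀ x, 0 ≤ k x) → (∀ x, k x ≤ 1) →
      |𝔼 x, k x * (cofactor u j x - cofactor v j x)| ≤ κ) :
    |𝔼 x, u j x * (cofactor u j x - cofactor v j x)| ≤ √(12 * t + 4 * κ) := by
  set d := fun x => cofactor u j x - cofactor v j x
  have hle (x : ι → α) : u j x ≤ N j x := by simpa [hj] using hu.le j x
  have hweighted : 𝔼 x, N j x * d x ^ 2 ≤ 6 * t + 2 * κ :=
    calc 𝔼 x, N j x * d x ^ 2 = (𝔼 x, (N j x - 1) * d x ^ 2) + 𝔼 x, d x ^ 2 := by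
          rw [← expect_add_distrib]
          exact expect_congr rfl fun x _ => by ring
      _ ≤ 6 * t + 2 * κ := by
          linarith [h.expect_sub_one_mul_cofactor_sub_sq_le hu hv j,
            h.expect_cofactor_sub_sq_le hu hv hκ]
  refine Real.le_sqrt_of_sq_le ?_
  calc |𝔼 x, u j x * d x| ^ 2 = (𝔼 x, u j x * d x) ^ 2 := sq_abs _
    _ ≤ (𝔼 x, u j x) * 𝔼 x, u j x * d x ^ 2 := expect_mul_sq_le (hu.nonneg j) d
    _ ≤ (𝔼 x, N j x) * 𝔼 x, N j x * d x ^ 2 := by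
        gcongr
        exacts [expect_nonneg fun x _ => mul_nonneg (hu.nonneg j x) (sq_nonneg _),
          expect_nonneg fun x _ => h.nonneg j x, hle _, hle _]
    _ ≤ 2 * (6 * t + 2 * κ) := mul_le_mul (h.expect_le_two j) hweighted
        (expect_nonneg fun x _ => mul_nonneg (h.nonneg j x) (sq_nonneg _)) zero_le_two
    _ = 12 * t + 4 * κ := by ring

theorem IsDenseModel.abs_expect_sub_mul_cofactor_le (h : IsDenseModel N t A g g') (hj : j ∈ A) :
    |𝔼 x, (g j x - g' j x) * cofactor g' j x| ≤ t := by
  simp_rw [cofactor, coordAverage, mul_expect]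
  rw [expect_comm]
  refine (abs_expect_le _ _).trans (expect_le univ_nonempty fun a _ => ?_)
  exact h.abs_le j hj _ (h.model.isBoxTest_prod_update j a)

/-- The error of the relative counting lemma with `n` weighted factors. -/
noncomputable def countingError : ℕ → ℝ → ℝ
  | 0, _ => 0
  | n + 1, t => t + √(12 * t + 4 * countingError n t)

/-- Relative counting lemma. The factors indexed by `A` are replaced by their dense models one at a
time; once `g j` is removed by Cauchy–Schwarz, the remaining error is the same statement with fewer
weighted factors, since a bounded function takes the place of `g j`. -/
theorem IsDenseModel.abs_expect_prod_sub_expect_prod_le (hN : IsPseudorandom N t)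
    (h : IsDenseModel N t A g g') :
    |(𝔼 x, ∏ i, g i x) - 𝔼 x, ∏ i, g' i x| ≤ countingError #A t := by
  induction A using Finset.induction_on generalizing g g' with
  | empty =>
    obtain rfl : g = g' := funext fun i => h.eq_of_notMem i (notMem_empty i)
    simp [countingError]
  | insert j A hj ih =>
    have hκ (k : (ι → α) → ℝ) (hk : DependsOn k {j}ᶜ) (hk₀ : ∀ x, 0 ≤ k x) (hk₁ : ∀ x, k x ≤ 1) :
        |𝔼 x, k x * (cofactor g j x - cofactor g' j x)| ≤ countingError #A t := by
      have hrec := ih (by simpa [hj] using h.update hk hk₀ hk₁)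
      rw [expect_prod_eq_expect_mul_cofactor (j := j) (by simpa using hk),
        expect_prod_eq_expect_mul_cofactor (j := j) (by simpa using hk)] at hrec
      simpa only [Function.update_self, cofactor_update, mul_sub, expect_sub_distrib] using hrec
    have hmodel := h.abs_expect_sub_mul_cofactor_le (mem_insert_self j A)
    have hcofactor := hN.abs_expect_mul_cofactor_sub_le h.majorized h.model (mem_insert_self j A) hκ
    calc |(𝔼 x, ∏ i, g i x) - 𝔼 x, ∏ i, g' i x|
        = |(𝔼 x, (g j x - g' j x) * cofactor g' j x) +
            𝔼 x, g j x * (cofactor g j x - cofactor g' j x)| := by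
          rw [expect_prod_eq_expect_mul_cofactor (h.majorized.dependsOn j),
            expect_prod_eq_expect_mul_cofactor (h.model.dependsOn j), ← expect_sub_distrib,
            ← expect_add_distrib]
          exact congrArg abs (expect_congr rfl fun x _ => by ring)
      _ ≤ t + √(12 * t + 4 * countingError #A t) :=
          (abs_add_le _ _).trans (add_le_add hmodel hcofactor)
      _ = countingError #(insert j A) t := by rw [card_insert_of_notMem hj, countingError]

end Counting

section DenseModels

theorem mul_mem_closedConvexHull {A : Type*} [CommRing A] [Algebra ℝ A] [TopologicalSpace A]
    [ContinuousMul A] {M : Submonoid A} {a b : A} (ha : a ∈ closedConvexHull ℝ (M : Set A))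
    (hb : b ∈ closedConvexHull ℝ (M : Set A)) : a * b ∈ closedConvexHull ℝ (M : Set A) := by
  have hmul_right (b : A) (h : ∀ a ∈ M, a * b ∈ closedConvexHull ℝ (M : Set A)) :
      closedConvexHull ℝ (M : Set A) ⊆ (· * b) ⁻¹' closedConvexHull ℝ (M : Set A) :=
    closedConvexHull_min h
      (convex_closedConvexHull.linear_preimage (LinearMap.mulRight ℝ b))
      (isClosed_closedConvexHull.preimage (continuous_mul_const b))
  refine hmul_right b (fun a ha => ?_) ha
  rw [mul_comm]
  exact hmul_right a (fun b hb => subset_closedConvexHull (M.mul_mem hb ha)) hb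

theorem pow_mem_closedConvexHull {A : Type*} [CommRing A] [Algebra ℝ A] [TopologicalSpace A]
    [ContinuousMul A] {M : Submonoid A} {a : A} (ha : a ∈ closedConvexHull ℝ (M : Set A)) (n : ℕ) :
    a ^ n ∈ closedConvexHull ℝ (M : Set A) := by
  induction n with
  | zero => exact pow_zero a ▸ subset_closedConvexHull M.one_mem
  | succ n ih => exact pow_succ a n ▸ mul_mem_closedConvexHull ih ha

variable {X : Type*}

theorem closedConvexHull_subset_Icc {S : Set (X → ℝ)} (hS : ∀ φ ∈ S, ∀ x, |φ x| ≤ 1) :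
    closedConvexHull ℝ S ⊆ Set.Icc (-1) 1 :=
  closedConvexHull_min (fun φ hφ => ⟨fun x => (abs_le.1 (hS φ hφ x)).1,
    fun x => (abs_le.1 (hS φ hφ x)).2⟩) (convex_Icc _ _) isClosed_Icc

variable [Fintype X] {w f N : X → ℝ} {M : Submonoid (X → ℝ)} {η ε : ℝ}

/-- The correlation with `w`, as a linear functional. -/
noncomputable def expectMul (w : X → ℝ) : (X → ℝ) →ₗ[ℝ] ℝ where
  toFun φ := 𝔼 x, w x * φ x
  map_add' φ ψ := by simp [mul_add, expect_add_distrib]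
  map_smul' c φ := by simp [mul_expect, mul_left_comm]

theorem abs_expectMul_le_of_mem_closedConvexHull {S : Set (X → ℝ)}
    (h : ∀ φ ∈ S, |expectMul w φ| ≤ η) :
    ∀ φ ∈ closedConvexHull ℝ S, |expectMul w φ| ≤ η := by
  have hpre : {φ | |expectMul w φ| ≤ η} = expectMul w ⁻¹' Set.Icc (-η) η := by
    ext φ
    simp [abs_le]
  refine closedConvexHull_min (t := {φ | |expectMul w φ| ≤ η}) h ?_ ?_ <;> rw [hpre]
  · exact (convex_Icc _ _).linear_preimage _
  · exact isClosed_Icc.preimage (LinearMap.continuous_of_finiteDimensional _)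

theorem exists_isSaddlePointOn_expectMul_sub (f : X → ℝ) {K Y : Set (X → ℝ)} (hK₀ : K.Nonempty)
    (hK : Convex ℝ K) (hKc : IsCompact K) (hY₀ : Y.Nonempty) (hY : Convex ℝ Y)
    (hYc : IsCompact Y) :
    ∃ g ∈ K, ∃ ψ ∈ Y, IsSaddlePointOn K Y (fun g ψ => expectMul (f - g) ψ) g ψ := by
  have hsub (g ψ : X → ℝ) : expectMul (f - g) ψ = expectMul f ψ - expectMul ψ g := by
    simp_rw [expectMul, LinearMap.coe_mk, AddHom.coe_mk, Pi.sub_apply, ← expect_sub_distrib]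
    exact expect_congr rfl fun x _ => by ring
  have hcont (w : X → ℝ) : Continuous (expectMul w) := LinearMap.continuous_of_finiteDimensional _
  refine Sion.exists_isSaddlePointOn hK₀ hK hKc (fun ψ _ => ?_) (fun ψ _ => ?_) hY hY₀ hYc
    (fun g _ => ?_) fun g _ => ?_
  · simp_rw [hsub]
    exact (continuous_const.sub (hcont ψ)).lowerSemicontinuous.lowerSemicontinuousOn _
  · simp_rw [hsub]
    exact ((convexOn_const _ hK).sub ((expectMul ψ).concaveOn hK)).quasiconvexOn
  · exact (hcont _).upperSemicontinuous.upperSemicontinuousOn _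
  · exact ((expectMul _).concaveOn hY).quasiconcaveOn

theorem abs_expect_mul_eval_le {ψ : X → ℝ} (h : ∀ n : ℕ, |expectMul w (ψ ^ n)| ≤ η)
    (P : Polynomial ℝ) :
    |𝔼 x, w x * P.eval (ψ x)| ≤ (∑ n ∈ range (P.natDegree + 1), |P.coeff n|) * η := by
  have hexpand : 𝔼 x, w x * P.eval (ψ x) =
      ∑ n ∈ range (P.natDegree + 1), P.coeff n * expectMul w (ψ ^ n) := by
    simp_rw [Polynomial.eval_eq_sum_range, mul_sum, expect_sum_comm, expectMul, LinearMap.coe_mk,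
      AddHom.coe_mk, Pi.pow_apply, mul_expect, mul_left_comm]
  rw [hexpand, sum_mul]
  refine (abs_sum_le_sum_abs _ _).trans (sum_le_sum fun n _ => ?_)
  rw [abs_mul]
  exact mul_le_mul_of_nonneg_left (h n) (abs_nonneg _)

/-- The model `g` is one side of a saddle point of `(g, ψ) ↦ 𝔼 (f - g) ψ`; against the best
response `1_{ψ > 0}` to the other side `ψ`, the value is at most `𝔼 (N - 1) ψ₊`. -/
theorem exists_forall_expectMul_sub_le (hM : ∀ φ ∈ M, ∀ x, |φ x| ≤ 1) (hf : ∀ x, 0 ≤ f x)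
    (hfN : ∀ x, f x ≤ N x)
    (hpos : ∀ ψ ∈ closedConvexHull ℝ (M : Set (X → ℝ)), 𝔼 x, (N x - 1) * max (ψ x) 0 ≤ ε) :
    ∃ g ∈ Set.Icc (0 : X → ℝ) 1, ∀ φ ∈ M, expectMul (f - g) φ ≤ ε := by
  obtain ⟨g, hg, ψ, hψ, hsaddle⟩ := exists_isSaddlePointOn_expectMul_sub f
    (Set.nonempty_Icc.2 (zero_le_one (α := X → ℝ))) (convex_Icc 0 1) isCompact_Icc
    ⟨1, subset_closedConvexHull M.one_mem⟩ convex_closedConvexHull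
    (isCompact_Icc.of_isClosed_subset isClosed_closedConvexHull (closedConvexHull_subset_Icc hM))
  refine ⟨g, hg, fun φ hφ => ?_⟩
  let best : X → ℝ := fun x => if 0 < ψ x then 1 else 0
  have hbest : best ∈ Set.Icc (0 : X → ℝ) 1 := by
    constructor <;> intro x <;> dsimp only [best] <;> split_ifs <;> simp
  refine (hsaddle best hbest φ (subset_closedConvexHull hφ)).trans
    ((expect_le_expect fun x _ => ?_).trans (hpos ψ hψ))
  simp only [Pi.sub_apply, best]
  split_ifs with h
  · rw [max_eq_left h.le]
    exact mul_le_mul_of_nonneg_right (by linarith [hfN x]) h.le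
  · rw [max_eq_right (not_lt.1 h), mul_zero, sub_zero]
    exact mul_nonpos_of_nonneg_of_nonpos (hf x) (not_lt.1 h)

variable [Nonempty X]

theorem expect_abs_sub_one_le (hN : ∀ x, 0 ≤ N x) (h : |expectMul (N - 1) 1| ≤ 1) :
    𝔼 x, |N x - 1| ≤ 3 := by
  have hmean : expectMul (N - 1) 1 = (𝔼 x, N x) - 1 := by
    simp [expectMul, expect_sub_distrib]
  calc 𝔼 x, |N x - 1| ≤ 𝔼 x, (N x + 1) := expect_le_expect fun x _ =>
        abs_le.2 ⟨by linarith [hN x], by linarith⟩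
    _ = expectMul (N - 1) 1 + 2 := by
        rw [hmean, expect_add_distrib, Fintype.expect_const]
        ring
    _ ≤ 3 := by linarith [(abs_le.1 h).2]

/-- The positive part of a test function in the closed convex hull is not itself a test function,
but it is uniformly close to a polynomial in one. -/
theorem expect_sub_one_mul_max_zero_le {ψ : X → ℝ} {P : Polynomial ℝ} (hN : ∀ x, 0 ≤ N x)
    (hη : η ≤ 1) (hψ : ∀ x, ψ x ∈ Set.Icc (-1) 1)
    (hpow : ∀ n : ℕ, |expectMul (N - 1) (ψ ^ n)| ≤ η)
    (hP : ∀ t ∈ Set.Icc (-1) 1, |P.eval t - max t 0| ≤ ε / 6)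
    (hPη : (∑ n ∈ range (P.natDegree + 1), |P.coeff n|) * η ≤ ε / 2) :
    𝔼 x, (N x - 1) * max (ψ x) 0 ≤ ε := by
  have hε : 0 ≤ ε / 6 := (abs_nonneg _).trans (hP 0 (by norm_num))
  have hpoly := (abs_expect_mul_eval_le hpow P).trans hPη
  have hdiff : |𝔼 x, (N x - 1) * (P.eval (ψ x) - max (ψ x) 0)| ≤ ε / 2 :=
    calc _ ≤ 𝔼 x, |N x - 1| * (ε / 6) := (abs_expect_le _ _).trans <| expect_le_expect fun x _ => by
          rw [abs_mul]
          exact mul_le_mul_of_nonneg_left (hP _ (hψ x)) (abs_nonneg _)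
      _ ≤ 3 * (ε / 6) := by
          rw [← expect_mul]
          exact mul_le_mul_of_nonneg_right
            (expect_abs_sub_one_le hN ((by simpa using hpow 0 : _ ≤ η).trans hη)) hε
      _ = ε / 2 := by ring
  calc 𝔼 x, (N x - 1) * max (ψ x) 0
      = (𝔼 x, (N - 1) x * P.eval (ψ x)) - 𝔼 x, (N x - 1) * (P.eval (ψ x) - max (ψ x) 0) := by
        rw [← expect_sub_distrib]
        exact expect_congr rfl fun x _ => by simp only [Pi.sub_apply, Pi.one_apply]; ring
    _ ≤ ε := by linarith [(abs_le.1 hpoly).2, (abs_le.1 hdiff).1]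

theorem exists_forall_abs_expectMul_sub_le (hε : 0 < ε) : ∃ η > 0,
    ∀ (X : Type*) [Fintype X] [Nonempty X] (M : Submonoid (X → ℝ)) (N f : X → ℝ),
      (∀ φ ∈ M, ∀ x, |φ x| ≤ 1) → (∀ φ ∈ M, -φ ∈ M) → (∀ x, 0 ≤ f x) → (∀ x, f x ≤ N x) →
      (∀ φ ∈ M, |expectMul (N - 1) φ| ≤ η) →
      ∃ g ∈ Set.Icc (0 : X → ℝ) 1, ∀ φ ∈ M, |expectMul (f - g) φ| ≤ ε := by
  obtain ⟨P, hP⟩ := exists_polynomial_near_of_continuousOn (-1) 1 (fun t => max t 0)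
    (by fun_prop) (ε / 6) (by positivity)
  set A : ℝ := ∑ n ∈ range (P.natDegree + 1), |P.coeff n|
  have hA : 0 ≤ A := sum_nonneg fun _ _ => abs_nonneg _
  refine ⟨min 1 (ε / (2 * (A + 1))), by positivity, fun X _ _ M N f hM hneg hf hfN hη => ?_⟩
  have hAη : A * min 1 (ε / (2 * (A + 1))) ≤ ε / 2 :=
    calc A * min 1 (ε / (2 * (A + 1))) ≤ (A + 1) * (ε / (2 * (A + 1))) :=
          mul_le_mul (by linarith) (min_le_right _ _) (by positivity) (by positivity)
      _ = ε / 2 := by field_simp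
  have hhull := abs_expectMul_le_of_mem_closedConvexHull (S := (M : Set (X → ℝ))) hη
  obtain ⟨g, hg, hgM⟩ := exists_forall_expectMul_sub_le hM hf hfN fun ψ hψ =>
    have hψ₁ := closedConvexHull_subset_Icc hM hψ
    expect_sub_one_mul_max_zero_le (fun x => (hf x).trans (hfN x)) (min_le_left _ _)
      (fun x => ⟨hψ₁.1 x, hψ₁.2 x⟩) (fun n => hhull _ (pow_mem_closedConvexHull hψ n))
      (fun t ht => (hP t ht).le) hAη
  refine ⟨g, hg, fun φ hφ => abs_le'.2 ⟨hgM φ hφ, ?_⟩⟩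
  rw [← map_neg]
  exact hgM _ (hneg φ hφ)

end DenseModels

section BoxTestModels

variable {ι α : Type*} [Fintype ι] [DecidableEq ι] {j : ι} {φ : (ι → α) → ℝ}

theorem IsBoxTest.dependsOn (h : IsBoxTest j φ) : DependsOn φ {j}ᶜ := by
  obtain ⟨B, -, hB, rfl⟩ := h
  exact fun x y hxy => prod_congr rfl fun i _ => hB i fun k hk => hxy k (by simp_all)

theorem IsBoxTest.abs_le_one (h : IsBoxTest j φ) (x : ι → α) : |φ x| ≤ 1 := by
  obtain ⟨B, hB, -, rfl⟩ := h
  rw [abs_prod]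
  exact prod_le_one (fun _ _ => abs_nonneg _) fun i _ => hB i x

theorem isBoxTest_neg_one [Nontrivial ι] (j : ι) : IsBoxTest j (-1 : (ι → α) → ℝ) := by
  obtain ⟨i, hi⟩ := exists_ne j
  simpa using! isBoxTest_prod (S := {()}) (f := fun _ (_ : ι → α) => -1) (j := j) (by simp)
    fun _ _ => ⟨i, hi, fun _ _ _ => rfl⟩

/-- The box tests for the face opposite to `j`, as a multiplicative monoid. -/
def boxTests (α : Type*) (j : ι) : Submonoid ((ι → α) → ℝ) where
  carrier := {φ | IsBoxTest j φ}
  one_mem' := by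
    simpa using! isBoxTest_prod (S := ∅) (f := fun (_ : Unit) (_ : ι → α) => 1) (j := j)
      (by simp) (by simp)
  mul_mem' := by
    rintro - - ⟨B, hB₁, hB, rfl⟩ ⟨C, hC₁, hC, rfl⟩
    refine ⟨fun i x => B i x * C i x, fun i x => ?_, fun i x y hxy => ?_, ?_⟩
    · rw [abs_mul]
      exact mul_le_one₀ (hB₁ i x) (abs_nonneg _) (hC₁ i x)
    · simp only [hB i hxy, hC i hxy]
    · simp only [prod_mul_distrib]
      rfl

/-- Dense model theorem for box tests. A bounded model exists by the abstract theorem; averaging it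
over the coordinate `j` does not change its correlations with box tests. -/
theorem exists_forall_isBoxTest_abs_expect_sub_mul_le {ε : ℝ} (hε : 0 < ε) : ∃ η > 0,
    ∀ (ι α : Type*) [Fintype ι] [DecidableEq ι] [Nontrivial ι] [Fintype α] [Nonempty α] (j : ι)
      (N f : (ι → α) → ℝ), (∀ x, 0 ≤ f x) → (∀ x, f x ≤ N x) →
      (∀ φ, IsBoxTest j φ → |𝔼 x, (N x - 1) * φ x| ≤ η) →
      ∃ g : (ι → α) → ℝ, (∀ x, 0 ≤ g x) ∧ (∀ x, g x ≤ 1) ∧ DependsOn g {j}ᶜ ∧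
        ∀ φ, IsBoxTest j φ → |𝔼 x, (f x - g x) * φ x| ≤ ε := by
  obtain ⟨η, hη, hmodel⟩ := exists_forall_abs_expectMul_sub_le hε
  refine ⟨η, hη, fun ι α _ _ _ _ _ j N f hf hfN hN => ?_⟩
  obtain ⟨g, hg, hgφ⟩ := hmodel (ι → α) (boxTests α j) N f (fun φ hφ => hφ.abs_le_one)
    (fun φ hφ => neg_one_mul φ ▸ (boxTests α j).mul_mem (isBoxTest_neg_one j) hφ) hf hfN hN
  refine ⟨coordAverage j g, coordAverage_nonneg hg.1, coordAverage_le_one hg.2,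
    dependsOn_coordAverage j g, fun φ hφ => ?_⟩
  have haverage : 𝔼 x, (f x - coordAverage j g x) * φ x = expectMul (f - g) φ := by
    simp_rw [expectMul, LinearMap.coe_mk, AddHom.coe_mk, Pi.sub_apply, sub_mul,
      expect_sub_distrib]
    simp_rw [mul_comm _ (φ _), expect_mul_coordAverage hφ.dependsOn]
  exact haverage ▸ hgφ φ hφ

end BoxTestModels

section RelativeRemoval

open Filter Topology

theorem gcsBound_zero (n : ℕ) : gcsBound n 0 = 0 := by
  induction n with
  | zero => rfl
  | succ n ih => simp [gcsBound, ih]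

theorem continuous_gcsBound (n : ℕ) : Continuous (gcsBound n) := by
  induction n with
  | zero => exact continuous_id
  | succ n ih => exact (ih.const_mul 2).sqrt

theorem linearFormsError_zero (m : ℕ) : linearFormsError m 0 = 0 := by
  simp [linearFormsError, gcsBound_zero]

theorem continuous_linearFormsError (m : ℕ) : Continuous (linearFormsError m) :=
  (continuous_id.const_mul 3).sqrt.add
    ((continuous_gcsBound _).comp (continuous_id.const_mul _))

theorem countingError_zero (m : ℕ) : countingError m 0 = 0 := by
  induction m with
  | zero => rfl
  | succ m ih => simp [countingError, ih]

theorem continuous_countingError (m : ℕ) : Continuous (countingError m) := by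
  induction m with
  | zero => exact continuous_const
  | succ m ih => exact continuous_id.add ((continuous_id.const_mul 12).add (ih.const_mul 4)).sqrt

theorem exists_pos_le_and_le_of_continuous {F : ℝ → ℝ} (hF : Continuous F) (hF₀ : F 0 = 0)
    {b c : ℝ} (hb : 0 < b) (hc : 0 < c) : ∃ t > 0, t ≤ b ∧ F t ≤ c := by
  have hlt : ∀ᶠ t in 𝓝[>] 0, F t < c :=
    ((hF.tendsto' 0 0 hF₀).mono_left nhdsWithin_le_nhds).eventually_lt_const hc
  have hmem : ∀ᶠ t in 𝓝[>] 0, t ∈ Set.Ioc 0 b := Ioc_mem_nhdsGT hb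
  obtain ⟨t, ht, hFt⟩ := (hmem.and hlt).exists
  exact ⟨t, ht.1, ht.2, hFt.le⟩

/-- Relative removal. The dense models of the `F j` satisfy the hypotheses of the unweighted removal
lemma, since they have the same correlations with box tests, and by the counting lemma they
have the same product average up to a small error. -/
theorem exists_le_expect_prod_of_linearFormsCondition {ι : Type*} [Fintype ι] [DecidableEq ι]
    (hι : 2 ≤ Fintype.card ι) {δ : ℝ} (hδ : 0 < δ) :
    ∃ c > 0, ∃ η > 0, ∀ (α : Type) [Fintype α] [Nonempty α] (N F : ι → (ι → α) → ℝ)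
      (lam : (ι → α) → ℝ), (∀ j, DependsOn (N j) {j}ᶜ) → LinearFormsCondition N η →
      (∀ j, DependsOn (F j) {j}ᶜ) → (∀ j x, 0 ≤ F j x) → (∀ j x, F j x ≤ N j x) →
      (∀ x, 0 ≤ lam x) → 𝔼 x, lam x = 1 →
      (∀ j φ, IsBoxTest j φ → 𝔼 x, δ * lam x * φ x = 𝔼 x, F j x * φ x) →
      c ≤ 𝔼 x, ∏ j, F j x := by
  have : Nontrivial ι := Fintype.one_lt_card_iff_nontrivial.1 hι
  obtain ⟨c, hc, ε, hε, hremoval⟩ := exists_removalHolds hι hδ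
  obtain ⟨t, ht, htε, htc⟩ := exists_pos_le_and_le_of_continuous
    (continuous_countingError (Fintype.card ι)) (countingError_zero _) hε (half_pos hc)
  obtain ⟨η₁, hη₁, hmodel⟩ := exists_forall_isBoxTest_abs_expect_sub_mul_le ht
  obtain ⟨η, hη, hη₃, hηt⟩ := exists_pos_le_and_le_of_continuous
    (continuous_linearFormsError (Fintype.card ι)) (linearFormsError_zero _)
    (by norm_num : (0 : ℝ) < 1 / 3) (lt_min ht hη₁)
  refine ⟨c / 2, half_pos hc, η, hη, fun α _ _ N F lam hN hNη hF hF₀ hFN hlam hlam₁ hcor => ?_⟩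
  have hpseudo {s : ℝ} (hs : linearFormsError (Fintype.card ι) η ≤ s) : IsPseudorandom N s :=
    ⟨fun j x => (hF₀ j x).trans (hFN j x), hN, η, hη₃, hNη, hs⟩
  choose g hg₀ hg₁ hg hgφ using fun j => hmodel ι α j (N j) (F j) (hF₀ j) (hFN j) fun φ hφ =>
    (hpseudo (hηt.trans (min_le_right _ _))).abs_expect_sub_one_mul_le_of_isBoxTest hφ
  have hprod : c ≤ 𝔼 x, ∏ j, g j x := hremoval α lam g hlam hlam₁ hg₀ hg₁ hg fun j φ hφ => by
    simp_rw [sub_mul, expect_sub_distrib, hcor j φ hφ, ← expect_sub_distrib, ← sub_mul]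
    exact (hgφ j φ hφ).trans htε
  have hdense : IsDenseModel N t univ F g :=
    { majorized := ⟨hF, hF₀, by simpa using hFN⟩
      model := ⟨hg, hg₀, by simpa using hg₁⟩
      eq_of_notMem := fun i hi => absurd (mem_univ i) hi
      abs_le := fun j _ => hgφ j }
  have hcount := hdense.abs_expect_prod_sub_expect_prod_le (hpseudo (hηt.trans (min_le_left _ _)))
  rw [card_univ] at hcount
  linarith [(abs_le.1 hcount).1]

end RelativeRemoval

section Configurations

theorem expect_comp_of_surjective {A B : Type*} [AddCommGroup A] [Fintype A] [AddCommGroup B]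
    [Fintype B] {Ψ : A →+ B} (hΨ : Function.Surjective Ψ) (G : B → ℝ) :
    𝔼 x, G (Ψ x) = 𝔼 b, G b := by
  obtain ⟨s, hs⟩ := hΨ.hasRightInverse
  calc 𝔼 x, G (Ψ x) = 𝔼 b : B, 𝔼 x, G (Ψ x + b) := by
        rw [← Fintype.expect_const (ι := B) (𝔼 x, G (Ψ x))]
        exact expect_congr rfl fun b _ =>
          (Fintype.expect_equiv (Equiv.addRight (s b)) _ _ fun x => by simp [hs b]).symm
    _ = 𝔼 x : A, 𝔼 b, G b := by
        rw [expect_comm]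
        exact expect_congr rfl fun x _ =>
          Fintype.expect_equiv (Equiv.addLeft (Ψ x)) _ _ fun b => by simp
    _ = 𝔼 b, G b := Fintype.expect_const _

variable {ι Z Z' : Type*} [Fintype ι] [AddCommGroup Z] [AddCommGroup Z'] {φ : ι → Z →+ Z'}

/-- The `j`-th point of the configuration in `Z'` attached to `x`. -/
def configPoint (φ : ι → Z →+ Z') (j : ι) (x : ι → Z) : Z' := ∑ i, φ i (x i) - φ j (∑ i, x i)

/-- The base point `a` and the dilation `d` for which the configuration attached to `x` is
`(a + φ j d)_j`. -/
def configParam (φ : ι → Z →+ Z') : (ι → Z) →+ Z' × Z where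
  toFun x := (∑ i, φ i (x i), -∑ i, x i)
  map_zero' := by simp
  map_add' x y := by simp [sum_add_distrib, add_comm]

theorem configPoint_eq_configParam (φ : ι → Z →+ Z') (j : ι) (x : ι → Z) :
    configPoint φ j x = (configParam φ x).1 + φ j (configParam φ x).2 := by
  simp [configPoint, configParam, sub_eq_add_neg]

theorem configPoint_eq_sum_erase [DecidableEq ι] (φ : ι → Z →+ Z') (j : ι) (x : ι → Z) :
    configPoint φ j x = ∑ i ∈ univ.erase j, φ i (x i) - φ j (∑ i ∈ univ.erase j, x i) := by
  rw [configPoint, ← add_sum_erase univ (fun i => φ i (x i)) (mem_univ j),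
    ← add_sum_erase univ x (mem_univ j), map_add]
  abel

theorem dependsOn_configPoint (φ : ι → Z →+ Z') (j : ι) : DependsOn (configPoint φ j) {j}ᶜ := by
  classical
  intro x y hxy
  have hxy' : ∀ i ∈ univ.erase j, x i = y i := fun i hi => hxy i (ne_of_mem_erase hi)
  rw [configPoint_eq_sum_erase, configPoint_eq_sum_erase, sum_congr rfl hxy',
    sum_congr rfl fun i hi => by rw [hxy' i hi]]

theorem configParam_single [DecidableEq ι] (φ : ι → Z →+ Z') (i : ι) (z : Z) :
    configParam φ (Pi.single i z) = (φ i z, -z) := by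
  have hφ : ∑ k, φ k ((Pi.single i z : ι → Z) k) = φ i z := by
    rw [Fintype.sum_eq_single i fun k hk => by simp [hk], Pi.single_eq_same]
  simp [configParam, hφ]

theorem configParam_surjective [Nonempty ι]
    (hφ : AddSubgroup.closure {z : Z' | ∃ i j : ι, ∃ d : Z, z = φ i d - φ j d} = ⊤) :
    Function.Surjective (configParam φ) := by
  classical
  have hbase : (configParam φ).range.comap (AddMonoidHom.inl Z' Z) = ⊤ := by
    rw [eq_top_iff, ← hφ, AddSubgroup.closure_le]
    rintro _ ⟨i, j, d, rfl⟩
    exact ⟨Pi.single i d - Pi.single j d, by simp [configParam_single]⟩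
  rintro ⟨a, d⟩
  obtain ⟨i⟩ := ‹Nonempty ι›
  obtain ⟨x, hx⟩ : a + φ i d ∈ (configParam φ).range.comap (AddMonoidHom.inl Z' Z) :=
    hbase ▸ AddSubgroup.mem_top _
  exact ⟨x - Pi.single i d, by simp [hx, configParam_single]⟩

variable [Fintype Z]

/-- The density of the subgroup `∑ i, x i = 0`, on which all points of the configuration attached to
`x` coincide. -/
noncomputable def diagWeight [DecidableEq Z] (x : ι → Z) : ℝ :=
  if ∑ i, x i = 0 then (Fintype.card Z : ℝ) else 0

theorem diagWeight_nonneg [DecidableEq Z] (x : ι → Z) : 0 ≤ diagWeight x := by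
  unfold diagWeight
  positivity

theorem diagWeight_mul_configPoint [DecidableEq Z] (f : Z' → ℝ) (j : ι) (x : ι → Z) :
    diagWeight x * f (configPoint φ j x) = diagWeight x * f (∑ i, φ i (x i)) := by
  unfold diagWeight configPoint
  split_ifs with h
  · rw [h, map_zero, sub_zero]
  · simp

theorem expect_diagWeight_mul [DecidableEq ι] [DecidableEq Z] {j : ι} {u : (ι → Z) → ℝ}
    (hu : DependsOn u {j}ᶜ) :
    𝔼 x, diagWeight x * u x = 𝔼 x, u x := by
  have hfiber (x : ι → Z) : 𝔼 a, diagWeight (Function.update x j a) = 1 := by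
    simp_rw [diagWeight, sum_update_of_mem (mem_univ j), add_eq_zero_iff_eq_neg,
      Fintype.expect_eq_sum_div_card, sum_ite_eq', mem_univ, if_true]
    exact div_self (by simp)
  rw [← expect_update j]
  simp_rw [dependsOn_apply_update hu (by simp : j ∉ ({j}ᶜ : Set ι)), ← expect_mul, hfiber, one_mul]

variable [DecidableEq ι] [Nonempty ι] [Fintype Z']

theorem expect_prod_configPoint
    (hφ : AddSubgroup.closure {z : Z' | ∃ i j : ι, ∃ d : Z, z = φ i d - φ j d} = ⊤) (f : Z' → ℝ) :
    𝔼 x, ∏ j, f (configPoint φ j x) = 𝔼 p : Z' × Z, ∏ j, f (p.1 + φ j p.2) := by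
  simp_rw [configPoint_eq_configParam]
  exact expect_comp_of_surjective (configParam_surjective hφ) fun p => ∏ j, f (p.1 + φ j p.2)

theorem expect_comp_configPoint
    (hφ : AddSubgroup.closure {z : Z' | ∃ i j : ι, ∃ d : Z, z = φ i d - φ j d} = ⊤) (f : Z' → ℝ)
    (j : ι) : 𝔼 x, f (configPoint φ j x) = 𝔼 y, f y := by
  have hbase : Function.Surjective
      (AddMonoidHom.fst Z' Z + (φ j).comp (AddMonoidHom.snd Z' Z)) := fun a => ⟨(a, 0), by simp⟩
  simp_rw [configPoint_eq_configParam]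
  rw [expect_comp_of_surjective (configParam_surjective hφ) fun p => f (p.1 + φ j p.2)]
  exact expect_comp_of_surjective hbase f

end Configurations

section InducedHypergraph

section Edges

variable {ι : Type*}

/-- The index set, as a subset of the edge `e`, of the coordinates selected by `ω`. -/
def selected (e : Finset ι) (ω : e → Bool) : Finset ι :=
  (univ.filter fun i => ω i).map (Function.Embedding.subtype _)

theorem coe_mem_selected {e : Finset ι} {ω : e → Bool} {i : e} : i.1 ∈ selected e ω ↔ ω i := by
  simp [selected]

theorem selected_injective (e : Finset ι) : Function.Injective (selected e) := fun ω ω' h =>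
  funext fun i => Bool.eq_iff_iff.2 <| by rw [← coe_mem_selected, h, coe_mem_selected]

variable [DecidableEq ι]

theorem selected_decide_mem {e D : Finset ι} (hD : D ⊆ e) :
    selected e (fun i => decide (i.1 ∈ D)) = D := by
  ext i
  simpa [selected] using fun hi => hD hi

theorem prod_selected {e : Finset ι} {S : Finset (Finset ι)} (hS : ∀ D ∈ S, D ⊆ e)
    (G : Finset ι → ℝ) :
    ∏ ω, (if selected e ω ∈ S then G (selected e ω) else 1) = ∏ D ∈ S, G D := by
  rw [← prod_filter]
  exact prod_nbij (selected e) (by simp) ((selected_injective e).injOn)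
    (fun D hD => ⟨_, by simp [selected_decide_mem (hS D hD), mem_coe.1 hD],
      selected_decide_mem (hS D hD)⟩) fun _ _ => rfl

theorem ite_eq_boxVertex_selected {α : Type*} {e : Finset ι} (ω : e → Bool)
    (p : (ι → α) × (ι → α)) :
    (fun i : e => if ω i then p.2 i else p.1 i) = fun i : e => boxVertex (selected e ω) p i := by
  funext i
  simp [boxVertex, piecewise, coe_mem_selected]

theorem powersetCard_pred_eq_image_erase [Fintype ι] [Nonempty ι] :
    (univ : Finset ι).powersetCard (Fintype.card ι - 1) = univ.image (univ.erase ·) := by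
  ext e
  simp only [mem_powersetCard_univ, mem_image, mem_univ, true_and]
  have hcard : #e = Fintype.card ι - 1 ↔ #eᶜ = 1 := by
    have := card_le_univ e
    have := Fintype.card_pos (α := ι)
    rw [card_compl]
    omega
  simp_rw [hcard, card_eq_one, ← compl_singleton, compl_eq_comm]

end Edges

variable {J Z Z' : Type} [Fintype J] [DecidableEq J] [AddCommGroup Z] [AddCommGroup Z']

theorem avg_eq_expect {α : Type*} [Fintype α] (f : α → ℝ) : avg f = 𝔼 x, f x :=
  (Fintype.expect_eq_sum_div_card f).symm

theorem inducedNu_erase (φ : J → Z →+ Z') (ν : Z' → ℝ) (j : J) (x : J → Z) :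
    inducedNu φ ν (univ.erase j) (fun i => x i) = ν (configPoint φ j x) := by
  rw [inducedNu, sdiff_erase_self (mem_univ j), sum_singleton, configPoint_eq_sum_erase,
    sum_coe_sort (univ.erase j) fun i => φ i (x i), sum_coe_sort]

theorem linearFormsCondition_of_hLinearForms [Nonempty J] [Fintype Z] {φ : J → Z →+ Z'}
    {ν : Z' → ℝ} {η : ℝ}
    (h : HLinearForms (V := fun _ : J => Z) (univ.powersetCard (Fintype.card J - 1))
      (inducedNu φ ν) η) :
    LinearFormsCondition (fun j x => ν (configPoint φ j x)) η := by
  intro T hT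
  have hn := h fun e ω => decide (∃ j, e = univ.erase j ∧ selected e ω ∈ T j)
  convert hn using 3
  rw [avg_eq_expect, powersetCard_pred_eq_image_erase]
  refine expect_congr rfl fun p _ => ?_
  rw [prod_image fun i _ j _ => (erase_inj univ (mem_univ i)).1]
  refine prod_congr rfl fun j _ => ?_
  rw [← prod_selected (e := univ.erase j) fun D hD => subset_erase.2 ⟨subset_univ D, hT j D hD⟩]
  simp_rw [ite_eq_boxVertex_selected, inducedNu_erase, decide_eq_true_eq,
    erase_inj univ (mem_univ j), exists_eq_left']

end InducedHypergraph

/-- Functions that ignore the coordinate `j` have the same averages with respect to the densities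
`diagWeight x * f (∑ i, φ i (x i)) / δ` and `f (configPoint φ j x) / δ`. -/
theorem exists_le_expect_prod_of_expect_eq {ι : Type*} [Fintype ι] [DecidableEq ι]
    (hι : 2 ≤ Fintype.card ι) {δ : ℝ} (hδ : 0 < δ) :
    ∃ c > 0, ∃ η > 0, ∀ (Z : Type) (Z' : Type*) [AddCommGroup Z] [Fintype Z] [AddCommGroup Z']
      [Fintype Z'] (φ : ι → Z →+ Z') (ν f : Z' → ℝ),
      AddSubgroup.closure {z : Z' | ∃ i j : ι, ∃ d : Z, z = φ i d - φ j d} = ⊤ →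
      LinearFormsCondition (fun j x => ν (configPoint φ j x)) η → (∀ y, 0 ≤ f y) →
      (∀ y, f y ≤ ν y) → 𝔼 y, f y = δ → c ≤ 𝔼 p : Z' × Z, ∏ j, f (p.1 + φ j p.2) := by
  classical
  obtain ⟨c, hc, η, hη, hremoval⟩ := exists_le_expect_prod_of_linearFormsCondition hι hδ
  refine ⟨c, hc, η, hη, fun Z Z' _ _ _ _ φ ν f hφ hν hf hfν hmean => ?_⟩
  have hdep (u : Z' → ℝ) (j : ι) : DependsOn (fun x => u (configPoint φ j x)) {j}ᶜ :=
    fun x y hxy => congrArg u (dependsOn_configPoint φ j hxy)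
  let lam (x : ι → Z) : ℝ := δ⁻¹ * (diagWeight x * f (∑ i, φ i (x i)))
  have hlam (j : ι) (x : ι → Z) : δ * lam x = diagWeight x * f (configPoint φ j x) := by
    rw [mul_inv_cancel_left₀ hδ.ne', diagWeight_mul_configPoint]
  have : Nonempty ι := Fintype.card_pos_iff.1 (by omega)
  have hlam₁ : 𝔼 x, lam x = 1 := by
    let j₀ : ι := Classical.arbitrary ι
    refine mul_left_cancel₀ hδ.ne' ?_
    rw [mul_expect, mul_one]
    simp_rw [hlam j₀]
    rw [expect_diagWeight_mul (hdep f j₀), expect_comp_configPoint hφ, hmean]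
  rw [← expect_prod_configPoint hφ]
  refine hremoval Z (fun j x => ν (configPoint φ j x)) (fun j x => f (configPoint φ j x)) lam
    (hdep ν) hν (hdep f) (fun _ _ => hf _) (fun _ _ => hfν _) (fun x => ?_) hlam₁ fun j ψ hψ => ?_
  · exact mul_nonneg (inv_nonneg.2 hδ.le) (mul_nonneg (diagWeight_nonneg x) (hf _))
  · simp_rw [hlam j, mul_assoc]
    exact expect_diagWeight_mul (u := fun x => f (configPoint φ j x) * ψ x) fun x y hxy =>
      congrArg₂ (· * ·) (hdep f j hxy) (hψ.dependsOn hxy)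

/-- **Relative multidimensional Szemerédi theorem.** For every finite `J` with
`|J| ≥ 2` and every `δ > 0` there exist `c > 0` and `η > 0` such that: for all finite
abelian groups `Z, Z'`, homomorphisms `φ_j : Z →+ Z'` whose differences
`φ_i(d) - φ_j(d)` generate `Z'`, and `ν : Z' → ℝ≥0` whose induced weighted hypergraph
(on the system with `V_j = Z`, `r = |J| - 1`, `H` all `r`-subsets of `J`) satisfies the
`H`-linear forms condition within `η`: every `f` with `0 ≤ f ≤ ν` and `E[f] ≥ δ`
satisfies `E[∏_{j ∈ J} f(a + φ_j(d)) | a ∈ Z', d ∈ Z] ≥ c`. -/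
theorem relative_multidim_szemeredi (J : Type) [Fintype J] [DecidableEq J]
    (hJ : 2 ≤ Fintype.card J) (δ : ℝ) (hδ : 0 < δ) :
    ∃ c : ℝ, 0 < c ∧ ∃ η : ℝ, 0 < η ∧
    ∀ (Z Z' : Type) [AddCommGroup Z] [Fintype Z] [DecidableEq Z]
      [AddCommGroup Z'] [Fintype Z'] [DecidableEq Z'],
    ∀ φ : J → Z →+ Z',
      AddSubgroup.closure {z : Z' | ∃ i j : J, ∃ d : Z, z = φ i d - φ j d} = ⊤ →
    ∀ ν : Z' → ℝ, (∀ y, 0 ≤ ν y) →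
      HLinearForms (V := fun _ : J => Z)
        (Finset.univ.powersetCard (Fintype.card J - 1)) (inducedNu φ ν) η →
    ∀ f : Z' → ℝ, (∀ x, 0 ≤ f x ∧ f x ≤ ν x) → δ ≤ avg f →
    c ≤ avg (fun p : Z' × Z => ∏ j : J, f (p.1 + φ j p.2)) := by
  obtain ⟨c, hc, η, hη, hmain⟩ := exists_le_expect_prod_of_expect_eq hJ hδ
  refine ⟨c, hc, η, hη, fun Z Z' _ _ _ _ _ _ φ hφ ν _ hν f hf hδf => ?_⟩
  have : Nonempty J := Fintype.card_pos_iff.1 (by omega)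
  have hf₀ : 0 < avg f := hδ.trans_le hδf
  have hscale : δ / avg f ≤ 1 := (div_le_one hf₀).2 hδf
  have hnonneg (y : Z') : 0 ≤ δ / avg f * f y := mul_nonneg (by positivity) (hf y).1
  have hle (y : Z') : δ / avg f * f y ≤ f y := mul_le_of_le_one_left (hf y).1 hscale
  have hmean : 𝔼 y, δ / avg f * f y = δ := by
    rw [← mul_expect, ← avg_eq_expect, div_mul_cancel₀ δ hf₀.ne']
  rw [avg_eq_expect]
  exact (hmain Z Z' φ ν (fun y => δ / avg f * f y) hφ (linearFormsCondition_of_hLinearForms hν)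
    hnonneg (fun y => (hle y).trans (hf y).2) hmean).trans
      (expect_le_expect fun p _ => prod_le_prod (fun j _ => hnonneg _) fun j _ => hle _)
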